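/- There exists a constant α > 0 such that for all σ₁ > 0 and τ > 0 there is ε₅ > 0 such that for all sufficiently small δ > 0 the following holds. Let A ⊆ SL₂(ℝ) ∩ B_α(1) satisfy: (1) A = A⁻¹; (2) N_δ(A) = δ^{−3+σ₀} for some σ₀ with σ₁ ≤ σ₀ ≤ 3 − σ₁; (3) for every ρ with δ < ρ < δ^{ε₅} there is a finite set X ⊆ A with |X| ≥ ρ^{−τ} such that ‖x − x'‖ ≥ ρ for all x ≠ x' in X; (4) for every m ∈ SL₂(ℝ) ∩ B₁(1) with |trace m| ≠ 2 and every u ∈ GL₂(ℂ) such that u m u⁻¹ is diagonal, there exists g ∈ A_{(4)} such that |(u g u⁻¹)₁₂ · (u g u⁻¹)₂₁| ≥ δ^{ε₅}. Then N_δ(A·A·A) > δ^{−ε₅} · N_δ(A). -/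

import Mathlib

/-!
# A discretized product theorem in `SL₂(ℝ)`

Suppose the tripling of `A` is small, `N_δ(A³) ≤ δ^{-ε} N_δ(A)`. The proof shows that `A` then has
covering number almost `δ⁻³`, against the assumed bound `N_δ(A) ≤ δ^{-3+σ₁}`. Throughout, `Q` is a large quantity which is
negligible against the scales in play, elements of `SL₂(ℝ)` near `1` are described by their
traceless parts `dv g`, and `N e S` is the covering number.

*Setting up.* A Ruzsa covering argument (`ruzsa_scale`) shows that words of bounded length take, up
to the factor `Q`, no more room than `A` at every scale above `δ`. The hypothesis on off-diagonal entries says that no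
diagonalizable `X` is almost normalised by all short words; this is made uniform over all traceless
matrices, nilpotent ones included: every traceless `X` has conjugates by two short words which
together with `X` form a quantitative basis (`realIrr_of_diag`, `irr_of_realIrr`). The structure
`Good` records both facts.

*Counting.* Three transversal conjugates of a set of words close to a one-parameter group multiply
together injectively, so such a set has at most about `N(A)^{1/3}` elements (`Good.curve_bound`).
Dually, three conjugates `wᵢ` of elements of a conjugacy class are determined by `w₂⁻¹w₁` and
`w₂⁻¹w₃`, because the equality of traces fixes the remaining left translation (`class_core`); so
a conjugacy class meets `A` in at most about `N(A)^{2/3}` elements (`Good.class_bound`). By the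
orbit-stabilizer inequality every short word `g` has an approximate centralizer `Cent A g q` with
at least about `N(A)^{1/3}` elements (`Good.cent`), while trivially it has at most `O(1/q)`
(`Good.cent_le`). These inequalities carry factors measuring how much `A` grows between the scales
`q` and `q ‖dv g‖`.

*Moving around.* The separated subsets of `A` give a nontrivial element close to `1`, and iterated commutators
produce words at every prescribed distance from `1` (`exists_start`, `Good.shrink`, `Good.small`).
At a pair of scales `(t, q)` where `A` grows little, centralizers contain many elements of size at
least `t` (`Good.dich`). Hence a long word can be replaced by an element of `A²` with the same
direction (`Good.restore`), and then conjugated by a small word to change that direction slightly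
without the length of the words increasing along the way. This walk reaches every direction in a
patch of the projective plane around a regular semisimple one (`Good.step`, `Good.walk`). The
centralizers found in about `q⁻²` separated directions, with about `q⁻¹` elements each, show that
`A` has dimension almost `3` at the scale `q` (`Good.dim_lower`).

*Scales.* With `a k = log N_{bᵏ}(A) / log (1 / b)`, suitable pairs of scales are found by minimizing
`a P / P²` over an interval, and by noting that otherwise the mean slope of `a` would increase by a
fixed factor too many times (`GoodPair`, `exists_goodPair`). Once the dimension is almost `3` at
the scale `bʲ`, comparing `Good.cent` with `Good.cent_le` for words of size `bⁱ` transports this from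
the scale `bⁱ` to `bⁱ⁺ʲ`, and finally to `δ` (`Good.final`). The parameters are chosen in `core` and
`product_theorem_norm`.
-/

open scoped Pointwise

/-- Frobenius distance between two 2×2 matrices over `ℝ` or `ℂ`. -/
noncomputable def frobDist {𝕜 : Type*} [RCLike 𝕜] (A B : Matrix (Fin 2) (Fin 2) 𝕜) : ℝ :=
  Real.sqrt (∑ i : Fin 2, ∑ j : Fin 2, ‖A i j - B i j‖ ^ 2)

/-- `covN d δ S` is the least number of balls of radius `δ` (w.r.t. the distance
function `d`) needed to cover `S`. -/
noncomputable def covN {X : Type*} (d : X → X → ℝ) (δ : ℝ) (S : Set X) : ℕ :=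
  sInf {n : ℕ | ∃ T : Finset X, T.card = n ∧ ∀ s ∈ S, ∃ t ∈ T, d s t ≤ δ}

namespace PT
noncomputable section

/-- Real `2 × 2` matrices. -/
abbrev M2 := Matrix (Fin 2) (Fin 2) ℝ

attribute [local instance] Matrix.frobeniusNormedRing Matrix.frobeniusNormedAlgebra

/-! ### Norms and covering numbers -/

lemma nsq (X : M2) : ‖X‖ ^ 2 = X 0 0 ^ 2 + X 0 1 ^ 2 + X 1 0 ^ 2 + X 1 1 ^ 2 := by
  rw [Matrix.frobenius_norm_def, ← Real.sqrt_eq_rpow, Real.sq_sqrt (by positivity)]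
  simp [Fin.sum_univ_two]; ring

lemma norm_eq (X : M2) :
    ‖X‖ = Real.sqrt (X 0 0 ^ 2 + X 0 1 ^ 2 + X 1 0 ^ 2 + X 1 1 ^ 2) := by
  rw [← nsq, Real.sqrt_sq (norm_nonneg _)]

lemma frobDist_eq (a b : M2) : frobDist a b = ‖a - b‖ := by
  rw [norm_eq, frobDist]; congr 1
  simp [Fin.sum_univ_two]; ring

lemma abs_entry_le (X : M2) (i j : Fin 2) : |X i j| ≤ ‖X‖ := by
  apply abs_le_of_sq_le_sq _ (norm_nonneg _)
  rw [nsq]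
  fin_cases i <;> fin_cases j <;> simp <;> nlinarith [sq_nonneg (X 0 0), sq_nonneg (X 0 1), sq_nonneg (X 1 0), sq_nonneg (X 1 1)]

/-- A bounded set of matrices. -/
def Bdd (S : Set M2) : Prop := ∃ R : ℝ, ∀ x ∈ S, ‖x‖ ≤ R

lemma Bdd.mono {S S' : Set M2} (h : Bdd S') (hs : S ⊆ S') : Bdd S :=
  let ⟨R, hR⟩ := h; ⟨R, fun x hx => hR x (hs hx)⟩

/-- The covering number of a set of matrices for the Frobenius norm, as a real number. -/
def N (e : ℝ) (S : Set M2) : ℝ := (covN frobDist e S : ℝ)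

lemma N_nonneg (e : ℝ) (S : Set M2) : 0 ≤ N e S := Nat.cast_nonneg _

lemma N_le {e : ℝ} {S : Set M2} (T : Finset M2) (h : ∀ s ∈ S, ∃ t ∈ T, ‖s - t‖ ≤ e) :
    N e S ≤ T.card := by
  unfold N covN
  have : T.card ∈ {n : ℕ | ∃ T : Finset M2, T.card = n ∧ ∀ s ∈ S, ∃ t ∈ T, frobDist s t ≤ e} :=
    ⟨T, rfl, by simpa only [frobDist_eq] using h⟩
  exact_mod_cast Nat.sInf_le this

/-- A ball of radius `l * e` is covered by the `e`-balls around a coordinate grid of step `e`. -/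
lemma grid (x0 : M2) {l e : ℝ} (he : 0 < e) (hl : 0 ≤ l) : ∃ T : Finset M2,
    (T.card : ℝ) ≤ (2 * l + 3) ^ 4 ∧ ∀ x, ‖x - x0‖ ≤ l * e → ∃ t ∈ T, ‖x - t‖ ≤ e := by
  classical
  let Z : Finset (Fin 2 → Fin 2 → ℤ) :=
    Fintype.piFinset fun _ => Fintype.piFinset fun _ => Finset.Icc (-⌈l⌉) ⌈l⌉
  let f : (Fin 2 → Fin 2 → ℤ) → M2 := fun z => Matrix.of fun i j => x0 i j + z i j * e
  refine ⟨Z.image f, ?_, ?_⟩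
  · have h1 : ((Z.image f).card : ℝ) ≤ Z.card := by exact_mod_cast Finset.card_image_le
    have hc0 : 0 ≤ ⌈l⌉ := Int.ceil_nonneg hl
    have h2 : (Z.card : ℝ) = (2 * ⌈l⌉ + 1 : ℝ) ^ 4 := by
      simp only [Z, Fintype.card_piFinset, Int.card_Icc, Finset.prod_const, Finset.card_univ,
        Fintype.card_fin]
      have : ((⌈l⌉ + 1 - -⌈l⌉).toNat : ℝ) = 2 * ⌈l⌉ + 1 := by
        have h : ((⌈l⌉ + 1 - -⌈l⌉).toNat : ℤ) = 2 * ⌈l⌉ + 1 := by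
          rw [Int.toNat_of_nonneg (by omega)]; ring
        exact_mod_cast h
      push_cast
      rw [this]; ring
    have h3 : (⌈l⌉ : ℝ) ≤ l + 1 := (Int.ceil_lt_add_one l).le
    have h4 : (0 : ℝ) ≤ ⌈l⌉ := by exact_mod_cast hc0
    calc ((Z.image f).card : ℝ) ≤ (2 * ⌈l⌉ + 1 : ℝ) ^ 4 := h1.trans h2.le
      _ ≤ _ := pow_le_pow_left₀ (by linarith) (by linarith) 4
  · intro x hx
    let z : Fin 2 → Fin 2 → ℤ := fun i j => round ((x i j - x0 i j) / e)
    have hz : ∀ i j, |x i j - f z i j| ≤ e / 2 := by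
      intro i j
      have h := abs_sub_round ((x i j - x0 i j) / e)
      have : x i j - f z i j = ((x i j - x0 i j) / e - z i j) * e := by
        simp only [f, Matrix.of_apply]; field_simp; ring
      rw [this, abs_mul, abs_of_pos he]
      calc _ ≤ 1 / 2 * e := by gcongr
        _ = e / 2 := by ring
    refine ⟨f z, Finset.mem_image_of_mem _ ?_, ?_⟩
    · simp only [Z, Fintype.mem_piFinset, Finset.mem_Icc]
      intro i j
      have h := abs_entry_le (x - x0) i j
      have h2 : |(x i j - x0 i j) / e| ≤ l := by
        rw [abs_div, abs_of_pos he, div_le_iff₀ he]; exact h.trans hx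
      have h3 : |(x i j - x0 i j) / e| ≤ (⌈l⌉ : ℝ) := h2.trans (Int.le_ceil l)
      rw [abs_le] at h3
      have hmono : Monotone (round : ℝ → ℤ) := fun a b hab => by
        rw [round_eq, round_eq]; exact Int.floor_mono (by linarith)
      constructor
      · have : ((-⌈l⌉ : ℤ) : ℝ) ≤ (x i j - x0 i j) / e := by push_cast; exact h3.1
        have := hmono this
        rwa [round_intCast] at this
      · have := hmono h3.2
        rwa [round_intCast] at this
    · have hs : ∀ i j, (x i j - f z i j) ^ 2 ≤ (e / 2) ^ 2 := fun i j =>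
        sq_le_sq' (by linarith [(abs_le.1 (hz i j)).1]) (abs_le.1 (hz i j)).2
      have := nsq (x - f z)
      simp only [Matrix.sub_apply] at this
      refine le_of_sq_le_sq ?_ he.le
      nlinarith [hs 0 0, hs 0 1, hs 1 0, hs 1 1]

lemma N_exists {S : Set M2} (hS : Bdd S) {e : ℝ} (he : 0 < e) :
    ∃ T : Finset M2, (T.card : ℝ) = N e S ∧ ∀ s ∈ S, ∃ t ∈ T, ‖s - t‖ ≤ e := by
  obtain ⟨R, hR⟩ := hS
  have hne : {n : ℕ | ∃ T : Finset M2, T.card = n ∧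
      ∀ s ∈ S, ∃ t ∈ T, frobDist s t ≤ e}.Nonempty := by
    obtain ⟨T, -, hT⟩ := grid 0 (l := |R| / e) he (by positivity)
    refine ⟨T.card, T, rfl, fun s hs => ?_⟩
    simp only [frobDist_eq]
    apply hT
    rw [sub_zero, div_mul_cancel₀ _ he.ne']
    exact (hR s hs).trans (le_abs_self R)
  obtain ⟨T, h1, h2⟩ := Nat.sInf_mem hne
  exact ⟨T, by unfold N covN; exact_mod_cast h1, by simpa only [frobDist_eq] using h2⟩

lemma N_mono {S S' : Set M2} (hS' : Bdd S') (h : S ⊆ S') {e : ℝ} (he : 0 < e) :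
    N e S ≤ N e S' := by
  obtain ⟨T, h1, h2⟩ := N_exists hS' he
  rw [← h1]; exact N_le T fun s hs => h2 s (h hs)

lemma N_anti {S : Set M2} (hS : Bdd S) {e e' : ℝ} (he : 0 < e) (h : e ≤ e') :
    N e' S ≤ N e S := by
  obtain ⟨T, h1, h2⟩ := N_exists hS he
  rw [← h1]
  exact N_le T fun s hs => let ⟨t, ht, h3⟩ := h2 s hs; ⟨t, ht, h3.trans h⟩

/-- If every piece of a cover by `T` can be covered by few balls, so can the whole set. -/
lemma N_fiber {S : Set M2} {e c : ℝ} (he : 0 < e) {ι : Type*} (T : Finset ι) (F : ι → Set M2)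
    (hcov : ∀ s ∈ S, ∃ t ∈ T, s ∈ F t) (hF : ∀ t ∈ T, Bdd (F t) ∧ N e (F t) ≤ c) :
    N e S ≤ T.card * c := by
  classical
  have : ∀ t : ι, ∃ U : Finset M2, t ∈ T → (U.card : ℝ) ≤ c ∧ ∀ s ∈ F t, ∃ u ∈ U, ‖s - u‖ ≤ e := by
    intro t
    by_cases ht : t ∈ T
    · obtain ⟨U, h1, h2⟩ := N_exists (hF t ht).1 he
      exact ⟨U, fun _ => ⟨by rw [h1]; exact (hF t ht).2, h2⟩⟩
    · exact ⟨∅, fun h => absurd h ht⟩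
  choose U hU using this
  have h1 : N e S ≤ (T.biUnion U).card := by
    apply N_le
    intro s hs
    obtain ⟨t, ht, hst⟩ := hcov s hs
    obtain ⟨u, hu, h⟩ := (hU t ht).2 s hst
    exact ⟨u, Finset.mem_biUnion.2 ⟨t, ht, hu⟩, h⟩
  refine h1.trans ?_
  have h2 : ((T.biUnion U).card : ℝ) ≤ ∑ t ∈ T, ((U t).card : ℝ) := by
    exact_mod_cast Finset.card_biUnion_le
  refine h2.trans ?_
  calc ∑ t ∈ T, ((U t).card : ℝ) ≤ ∑ t ∈ T, c := Finset.sum_le_sum fun t ht => (hU t ht).1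
    _ = T.card * c := by simp

lemma N_ball_le {S : Set M2} (x0 : M2) {l e : ℝ} (he : 0 < e) (hl : 0 ≤ l)
    (h : ∀ s ∈ S, ‖s - x0‖ ≤ l * e) : N e S ≤ (2 * l + 3) ^ 4 := by
  obtain ⟨T, h1, h2⟩ := grid x0 he hl
  exact (N_le T fun s hs => h2 s (h s hs)).trans h1

lemma Bdd_ball (x0 : M2) (r : ℝ) : Bdd {x | ‖x - x0‖ ≤ r} :=
  ⟨r + ‖x0‖, fun x hx => by
    have : ‖x‖ ≤ ‖x - x0‖ + ‖x0‖ := by simpa using norm_add_le (x - x0) x0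
    have h2 : ‖x - x0‖ ≤ r := hx
    linarith⟩

/-- Covering numbers at comparable scales are comparable. -/
lemma N_scale {S : Set M2} (hS : Bdd S) {l e : ℝ} (he : 0 < e) (hl : 0 < l) :
    N e S ≤ (2 * l + 3) ^ 4 * N (l * e) S := by
  obtain ⟨T, h1, h2⟩ := N_exists hS (mul_pos hl he)
  rw [← h1, mul_comm]
  refine N_fiber he T (fun t => {x | ‖x - t‖ ≤ l * e}) h2 fun t _ => ⟨Bdd_ball _ _, ?_⟩
  exact N_ball_le t he hl.le fun s hs => hs

lemma N_union {S S' : Set M2} (hS : Bdd S) (hS' : Bdd S') {e : ℝ} (he : 0 < e) :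
    N e (S ∪ S') ≤ N e S + N e S' := by
  classical
  obtain ⟨T, h1, h2⟩ := N_exists hS he
  obtain ⟨T', h1', h2'⟩ := N_exists hS' he
  rw [← h1, ← h1']
  refine (N_le (T ∪ T') ?_).trans (by exact_mod_cast Finset.card_union_le _ _)
  rintro s (hs | hs)
  · obtain ⟨t, ht, h⟩ := h2 s hs; exact ⟨t, Finset.mem_union_left _ ht, h⟩
  · obtain ⟨t, ht, h⟩ := h2' s hs; exact ⟨t, Finset.mem_union_right _ ht, h⟩

lemma N_pos {S : Set M2} (hS : Bdd S) (hne : S.Nonempty) {e : ℝ} (he : 0 < e) : 1 ≤ N e S := by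
  obtain ⟨T, h1, h2⟩ := N_exists hS he
  obtain ⟨s, hs⟩ := hne
  obtain ⟨t, ht, -⟩ := h2 s hs
  rw [← h1]
  exact_mod_cast Finset.card_pos.2 ⟨t, ht⟩

lemma N_le_one {S : Set M2} (x0 : M2) {e : ℝ} (h : ∀ s ∈ S, ‖s - x0‖ ≤ e) : N e S ≤ 1 := by
  have := N_le (S := S) (e := e) {x0} (by simpa using h)
  simpa using this

/-- Points whose images under `f` are `2 * e`-separated inside `W` are at most `N e W` many. -/
lemma inj_count {ι : Type*} (P : Finset ι) (f : ι → M2) {W : Set M2} (hW : Bdd W) {e : ℝ}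
    (he : 0 < e) (hf : ∀ p ∈ P, f p ∈ W)
    (hinj : ∀ p ∈ P, ∀ p' ∈ P, ‖f p - f p'‖ ≤ 2 * e → p = p') : (P.card : ℝ) ≤ N e W := by
  classical
  obtain ⟨T, h1, h2⟩ := N_exists hW he
  rw [← h1]
  have : ∀ p : ι, ∃ t : M2, p ∈ P → t ∈ T ∧ ‖f p - t‖ ≤ e := by
    intro p
    by_cases hp : p ∈ P
    · obtain ⟨t, ht, h⟩ := h2 _ (hf p hp); exact ⟨t, fun _ => ⟨ht, h⟩⟩
    · exact ⟨0, fun h => absurd h hp⟩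
  choose g hg using this
  have : P.card ≤ T.card := by
    refine Finset.card_le_card_of_injOn g (fun p hp => (hg p hp).1) ?_
    intro p hp p' hp' h
    apply hinj p hp p' hp'
    have e1 := (hg p hp).2
    have e2 := (hg p' hp').2
    have h' : g p = g p' := h
    rw [← h'] at e2
    calc ‖f p - f p'‖ ≤ ‖f p - g p‖ + ‖f p' - g p‖ := by
          rw [show f p - f p' = (f p - g p) - (f p' - g p) by abel]; exact norm_sub_le _ _
      _ ≤ 2 * e := by linarith
  exact_mod_cast this

/-- The version of `inj_count` for a pair of maps. -/
lemma inj_count2 {ι : Type*} (P : Finset ι) (f g : ι → M2) {W W' : Set M2} (hW : Bdd W)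
    (hW' : Bdd W') {e e' : ℝ} (he : 0 < e) (he' : 0 < e') (hf : ∀ p ∈ P, f p ∈ W)
    (hg : ∀ p ∈ P, g p ∈ W')
    (hinj : ∀ p ∈ P, ∀ p' ∈ P, ‖f p - f p'‖ ≤ 2 * e → ‖g p - g p'‖ ≤ 2 * e' → p = p') :
    (P.card : ℝ) ≤ N e W * N e' W' := by
  classical
  obtain ⟨T, h1, h2⟩ := N_exists hW he
  have hh : ∀ p : ι, ∃ t : M2, p ∈ P → t ∈ T ∧ ‖f p - t‖ ≤ e := by
    intro p
    by_cases hp : p ∈ P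
    · obtain ⟨t, ht, h⟩ := h2 _ (hf p hp); exact ⟨t, fun _ => ⟨ht, h⟩⟩
    · exact ⟨0, fun h => absurd h hp⟩
  choose F hF using hh
  have hsum : P.card = ∑ t ∈ T, (P.filter (fun p => F p = t)).card :=
    Finset.card_eq_sum_card_fiberwise (fun p hp => (hF p hp).1)
  have : (P.card : ℝ) ≤ ∑ t ∈ T, N e' W' := by
    rw [hsum]; push_cast
    refine Finset.sum_le_sum fun t _ => inj_count _ g hW' he' ?_ ?_
    · intro p hp; exact hg p (Finset.mem_filter.1 hp).1
    · intro p hp p' hp' h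
      rw [Finset.mem_filter] at hp hp'
      refine hinj p hp.1 p' hp'.1 ?_ h
      have e1 := (hF p hp.1).2
      have e2 := (hF p' hp'.1).2
      rw [hp.2] at e1
      rw [hp'.2] at e2
      calc ‖f p - f p'‖ ≤ ‖f p - t‖ + ‖f p' - t‖ := by
            rw [show f p - f p' = (f p - t) - (f p' - t) by abel]; exact norm_sub_le _ _
        _ ≤ 2 * e := by linarith
  refine this.trans ?_
  rw [← h1]; simp

/-- A maximal `e`-separated subset is an `e`-net. -/
lemma exists_sep {S : Set M2} (hS : Bdd S) {e : ℝ} (he : 0 < e) : ∃ P : Finset M2, (↑P ⊆ S) ∧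
    (∀ x ∈ P, ∀ y ∈ P, ‖x - y‖ ≤ e → x = y) ∧ (∀ s ∈ S, ∃ p ∈ P, ‖s - p‖ ≤ e) ∧
    N e S ≤ P.card := by
  classical
  -- the cardinality of a separated set is bounded; take one of largest cardinality
  let good : Finset M2 → Prop := fun P => (↑P ⊆ S) ∧ ∀ x ∈ P, ∀ y ∈ P, ‖x - y‖ ≤ e → x = y
  have hb : ∀ P, good P → (P.card : ℝ) ≤ N (e / 2) S := fun P hP =>
    inj_count P id hS (by positivity) (fun p hp => hP.1 hp) (fun p hp p' hp' h =>
      hP.2 p hp p' hp' (by simpa [mul_div_cancel₀] using h))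
  have hb' : ∀ n, (∃ P, good P ∧ P.card = n) → n ≤ ⌊N (e / 2) S⌋₊ := by
    rintro n ⟨P, hP, rfl⟩; exact Nat.le_floor (hb P hP)
  have h0 : ∃ P, good P ∧ P.card = 0 := ⟨∅, ⟨by simp, by simp⟩, rfl⟩
  let n := Nat.findGreatest (fun n => ∃ P, good P ∧ P.card = n) ⌊N (e / 2) S⌋₊
  obtain ⟨P, hP, hn⟩ : ∃ P, good P ∧ P.card = n :=
    Nat.findGreatest_spec (P := fun n => ∃ P, good P ∧ P.card = n) (Nat.zero_le _) h0
  have hcov : ∀ s ∈ S, ∃ p ∈ P, ‖s - p‖ ≤ e := by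
    intro s hs
    by_contra! hcon
    have hsP : s ∉ P := fun h => by simpa [he.le, he.not_gt] using hcon s h
    have hg : good (insert s P) := by
      refine ⟨by simpa [Set.insert_subset_iff] using ⟨hs, hP.1⟩, ?_⟩
      intro x hx y hy hxy
      rw [Finset.mem_insert] at hx hy
      rcases hx with rfl | hx <;> rcases hy with rfl | hy
      · rfl
      · exact absurd hxy (not_le.2 (hcon y hy))
      · rw [norm_sub_rev] at hxy; exact absurd hxy (not_le.2 (hcon x hx))
      · exact hP.2 x hx y hy hxy
    have hc : (insert s P).card = n + 1 := by rw [Finset.card_insert_of_notMem hsP, hn]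
    have h3 : n + 1 ≤ n := Nat.le_findGreatest (hb' _ ⟨_, hg, hc⟩) ⟨_, hg, hc⟩
    omega
  exact ⟨P, hP.1, hP.2, hcov, N_le P hcov⟩

/-! ### Algebra of traceless `2 × 2` matrices -/

/-- The adjugate, i.e. the inverse of a matrix of determinant one. -/
def adj (g : M2) : M2 := !![g 1 1, -g 0 1; -g 1 0, g 0 0]

/-- The traceless part of a matrix. -/
def dv (M : M2) : M2 := M - (M.trace / 2) • (1 : M2)

/-- The commutator of two matrices. -/
def br (X Y : M2) : M2 := X * Y - Y * X

lemma adj_eq_adjugate (g : M2) : adj g = g.adjugate := (Matrix.adjugate_fin_two g).symm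

lemma mul_adj {g : M2} (hg : g.det = 1) : g * adj g = 1 := by
  rw [adj_eq_adjugate, Matrix.mul_adjugate, hg, one_smul]

lemma adj_mul {g : M2} (hg : g.det = 1) : adj g * g = 1 := by
  rw [adj_eq_adjugate, Matrix.adjugate_mul, hg, one_smul]

lemma adj_mul_rev (g h : M2) : adj (g * h) = adj h * adj g := by
  simp only [adj_eq_adjugate, Matrix.adjugate_mul_distrib]

lemma adj_adj (g : M2) : adj (adj g) = g := by
  ext i j; fin_cases i <;> fin_cases j <;> simp [adj]

lemma adj_one : adj (1 : M2) = 1 := by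
  ext i j; fin_cases i <;> fin_cases j <;> simp [adj]

lemma det_adj (g : M2) : (adj g).det = g.det := by
  simp [adj, Matrix.det_fin_two]; ring

lemma trace_adj (g : M2) : (adj g).trace = g.trace := by
  simp [adj, Matrix.trace_fin_two]; ring

lemma norm_adj (g : M2) : ‖adj g‖ = ‖g‖ := by
  rw [norm_eq, norm_eq]; congr 1; simp [adj]; ring

lemma adj_sub (g h : M2) : adj (g - h) = adj g - adj h := by
  ext i j; fin_cases i <;> fin_cases j <;> simp [adj] <;> ring

lemma trace_comm (X Y : M2) : (X * Y).trace = (Y * X).trace := Matrix.trace_mul_comm X Y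

lemma trace_conj {g : M2} (hg : g.det = 1) (X : M2) : (g * X * adj g).trace = X.trace := by
  rw [trace_comm, ← mul_assoc, adj_mul hg, one_mul]

lemma det_conj {g : M2} (hg : g.det = 1) (X : M2) : (g * X * adj g).det = X.det := by
  rw [Matrix.det_mul, Matrix.det_mul, det_adj, hg]; ring

lemma dv_conj {g : M2} (hg : g.det = 1) (X : M2) : dv (g * X * adj g) = g * dv X * adj g := by
  unfold dv
  rw [trace_conj hg, mul_sub, sub_mul, mul_smul_comm, mul_one, smul_mul_assoc, mul_adj hg]

lemma dv_trace (X : M2) : (dv X).trace = 0 := by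
  simp [dv, Matrix.trace_fin_two]

lemma dv_of_trace {X : M2} (h : X.trace = 0) : dv X = X := by simp [dv, h]

lemma dv_eq (X : M2) : X = (X.trace / 2) • (1 : M2) + dv X := by simp [dv]

lemma dv_adj (g : M2) : dv (adj g) = -dv g := by
  ext i j; fin_cases i <;> fin_cases j <;> simp [adj, dv, Matrix.trace_fin_two] <;> ring

lemma dv_sub (X Y : M2) : dv (X - Y) = dv X - dv Y := by
  ext i j; fin_cases i <;> fin_cases j <;> simp [dv, Matrix.trace_fin_two] <;> ring

lemma dv_one : dv (1 : M2) = 0 := by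
  ext i j; fin_cases i <;> fin_cases j <;> simp [dv]

lemma dv_sub_one (X : M2) : dv (X - 1) = dv X := by rw [dv_sub, dv_one, sub_zero]

lemma entry11 {X : M2} (h : X.trace = 0) : X 1 1 = -X 0 0 := by
  rw [Matrix.trace_fin_two] at h; linarith

lemma norm_dv_sq (X : M2) : ‖dv X‖ ^ 2 = ‖X‖ ^ 2 - X.trace ^ 2 / 2 := by
  rw [nsq, nsq]; simp [dv, Matrix.trace_fin_two]; ring

lemma norm_dv_le (X : M2) : ‖dv X‖ ≤ ‖X‖ := by
  apply le_of_sq_le_sq _ (norm_nonneg _)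
  rw [norm_dv_sq]; nlinarith [sq_nonneg X.trace]

lemma abs_trace_mul_le (X Y : M2) : |(X * Y).trace| ≤ ‖X‖ * ‖Y‖ := by
  apply abs_le_of_sq_le_sq _ (by positivity)
  rw [mul_pow, nsq, nsq]
  simp only [Matrix.trace_fin_two, Matrix.mul_apply, Fin.sum_univ_two]
  nlinarith [sq_nonneg (X 0 0 * Y 1 0 - X 0 1 * Y 0 0), sq_nonneg (X 0 0 * Y 0 1 - X 1 0 * Y 0 0),
    sq_nonneg (X 0 0 * Y 1 1 - X 1 1 * Y 0 0), sq_nonneg (X 0 1 * Y 0 1 - X 1 0 * Y 1 0),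
    sq_nonneg (X 0 1 * Y 1 1 - X 1 1 * Y 1 0), sq_nonneg (X 1 0 * Y 1 1 - X 1 1 * Y 0 1)]

lemma norm_one_le : ‖(1 : M2)‖ ≤ 3 / 2 := by
  apply le_of_sq_le_sq _ (by norm_num)
  rw [nsq]; norm_num

lemma abs_trace_le (X : M2) : |X.trace| ≤ 3 / 2 * ‖X‖ := by
  have := abs_trace_mul_le X 1
  rw [mul_one] at this
  nlinarith [norm_one_le, norm_nonneg X]

lemma abs_det_le (X : M2) : |X.det| ≤ ‖X‖ ^ 2 / 2 := by
  rw [nsq, Matrix.det_fin_two, abs_le]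
  constructor <;> nlinarith [sq_nonneg (X 0 0 - X 1 1), sq_nonneg (X 0 1 - X 1 0),
    sq_nonneg (X 0 0 + X 1 1), sq_nonneg (X 0 1 + X 1 0)]

lemma abs_det_sub_le (X Y : M2) : |X.det - Y.det| ≤ (‖X‖ + ‖Y‖) / 2 * ‖X - Y‖ := by
  have h : X.det - Y.det = ((X + Y) * adj (X - Y)).trace / 2 := by
    simp [adj, Matrix.det_fin_two, Matrix.trace_fin_two, Matrix.mul_apply, Fin.sum_univ_two]; ring
  rw [h, abs_div, abs_two]
  have h1 := abs_trace_mul_le (X + Y) (adj (X - Y))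
  rw [norm_adj] at h1
  have h2 := norm_add_le X Y
  nlinarith [norm_nonneg (X - Y)]

lemma trace_sub_one {u : M2} (hu : u.det = 1) : (u - 1).trace = -(u - 1).det := by
  rw [Matrix.det_fin_two] at hu
  simp [Matrix.det_fin_two, Matrix.trace_fin_two]; linarith

lemma norm_br_le (X Y : M2) : ‖br X Y‖ ≤ 2 * ‖X‖ * ‖Y‖ := by
  unfold br
  calc _ ≤ ‖X * Y‖ + ‖Y * X‖ := norm_sub_le _ _
    _ ≤ ‖X‖ * ‖Y‖ + ‖Y‖ * ‖X‖ := add_le_add (norm_mul_le _ _) (norm_mul_le _ _)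
    _ = _ := by ring

lemma br_trace (X Y : M2) : (br X Y).trace = 0 := by
  rw [br, Matrix.trace_sub, trace_comm, sub_self]

lemma det_eq_dv (g : M2) : g.det = (g.trace / 2) ^ 2 + (dv g).det := by
  simp [dv, Matrix.det_fin_two, Matrix.trace_fin_two]; ring

/-- An element of `SL₂` with nonnegative trace is close to `1` as soon as its traceless part is
small. -/
lemma norm_sub_one_le {g : M2} (hg : g.det = 1) (ht : 0 ≤ g.trace) (h : ‖dv g‖ ≤ 1) :
    ‖g - 1‖ ≤ 2 * ‖dv g‖ := by
  have h1 := det_eq_dv g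
  rw [hg] at h1
  have h2 := abs_det_le (dv g)
  set c := g.trace / 2 with hc
  have hc0 : 0 ≤ c := by positivity
  have h3 : |c - 1| ≤ ‖dv g‖ ^ 2 / 2 := by
    have e : (c - 1) * (c + 1) = -(dv g).det := by linarith
    have e2 : |c - 1| * (c + 1) = |(dv g).det| := by
      rw [← abs_neg (dv g).det, ← e, abs_mul, abs_of_nonneg (by linarith : 0 ≤ c + 1)]
    nlinarith [abs_nonneg (c - 1)]
  have e : g - 1 = (c - 1) • (1 : M2) + dv g := by
    rw [sub_smul, one_smul]; nth_rewrite 1 [dv_eq g]; rw [← hc]; abel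
  rw [e]
  calc _ ≤ ‖(c - 1) • (1 : M2)‖ + ‖dv g‖ := norm_add_le _ _
    _ = |c - 1| * ‖(1 : M2)‖ + ‖dv g‖ := by rw [norm_smul, Real.norm_eq_abs]
    _ ≤ 2 * ‖dv g‖ := by nlinarith [norm_one_le, abs_nonneg (c - 1), norm_nonneg (dv g), norm_nonneg (1 : M2)]

/-- Near the identity an element of `SL₂` is determined by its traceless part. -/
lemma norm_sub_le_dv {g h : M2} (hg : g.det = 1) (hh : h.det = 1) (ng : ‖g - 1‖ ≤ 1 / 2)
    (nh : ‖h - 1‖ ≤ 1 / 2) : ‖g - h‖ ≤ 2 * ‖dv g - dv h‖ := by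
  have h1 := det_eq_dv g
  have h2 := det_eq_dv h
  have h3 := abs_det_sub_le (dv g) (dv h)
  have dg : ‖dv g‖ ≤ 1 / 2 := by rw [← dv_sub_one]; exact (norm_dv_le _).trans ng
  have dh : ‖dv h‖ ≤ 1 / 2 := by rw [← dv_sub_one]; exact (norm_dv_le _).trans nh
  have key : ∀ x : M2, ‖x - 1‖ ≤ 1 / 2 → 1 / 2 ≤ x.trace / 2 := by
    intro x hx
    have := (abs_le.1 (abs_trace_le (x - 1))).1
    have e : (x - 1).trace = x.trace - 2 := by simp
    rw [e] at this; linarith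
  have cg := key g ng
  have ch := key h nh
  set c := g.trace / 2 with hc
  set d := h.trace / 2 with hd
  have h4 : |c - d| ≤ 1 / 2 * ‖dv g - dv h‖ := by
    have e : (c - d) * (c + d) = (dv h).det - (dv g).det := by linarith
    have e2 : |c - d| * (c + d) = |(dv g).det - (dv h).det| := by
      rw [abs_sub_comm (dv g).det, ← e, abs_mul, abs_of_nonneg (by linarith : 0 ≤ c + d)]
    nlinarith [abs_nonneg (c - d), norm_nonneg (dv g - dv h)]
  have e : g - h = (c - d) • (1 : M2) + (dv g - dv h) := by
    rw [sub_smul]; nth_rewrite 1 [dv_eq g]; nth_rewrite 1 [dv_eq h]; rw [← hc, ← hd]; abel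
  rw [e]
  calc _ ≤ ‖(c - d) • (1 : M2)‖ + ‖dv g - dv h‖ := norm_add_le _ _
    _ = |c - d| * ‖(1 : M2)‖ + ‖dv g - dv h‖ := by rw [norm_smul, Real.norm_eq_abs]
    _ ≤ _ := by nlinarith [norm_one_le, abs_nonneg (c - d), norm_nonneg (dv g - dv h), norm_nonneg (1 : M2)]

/-- The dual basis identity for the alternating form `tr (X₁ X₂ X₃)`. -/
lemma dual_identity {X Y W Z : M2} (hX : X.trace = 0) (hY : Y.trace = 0) (hW : W.trace = 0)
    (hZ : Z.trace = 0) : (2 * (X * Y * W).trace) • Z =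
      (Z * X).trace • br Y W + (Z * Y).trace • br W X + (Z * W).trace • br X Y := by
  have := entry11 hX; have := entry11 hY; have := entry11 hW; have := entry11 hZ
  ext i j; fin_cases i <;> fin_cases j <;>
    simp [br, Matrix.trace_fin_two, Matrix.mul_apply, Fin.sum_univ_two, *] <;> ring

lemma basis_identity {X Y W Z : M2} (hX : X.trace = 0) (hY : Y.trace = 0) (hW : W.trace = 0)
    (hZ : Z.trace = 0) : ((X * Y * W).trace) • Z =
      (Z * Y * W).trace • X + (X * Z * W).trace • Y + (X * Y * Z).trace • W := by
  have := entry11 hX; have := entry11 hY; have := entry11 hW; have := entry11 hZ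
  ext i j; fin_cases i <;> fin_cases j <;>
    simp [Matrix.trace_fin_two, Matrix.mul_apply, Fin.sum_univ_two, *] <;> ring

lemma trace3_eq_br {X Y W : M2} (hX : X.trace = 0) (hY : Y.trace = 0) (hW : W.trace = 0) :
    (X * Y * W).trace = (br X Y * W).trace / 2 := by
  have := entry11 hX; have := entry11 hY; have := entry11 hW
  simp [br, Matrix.trace_fin_two, Matrix.mul_apply, Fin.sum_univ_two, *]; ring

lemma abs_trace3_le (X Y W : M2) : |(X * Y * W).trace| ≤ ‖X‖ * ‖Y‖ * ‖W‖ :=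
  (abs_trace_mul_le _ _).trans (by gcongr; exact norm_mul_le _ _)

/-- A traceless matrix with small pairings against a nondegenerate triple is small. -/
lemma dual_norm {X Y W Z : M2} (hX : X.trace = 0) (hY : Y.trace = 0) (hW : W.trace = 0)
    (hZ : Z.trace = 0) {R η : ℝ} (nX : ‖X‖ ≤ R) (nY : ‖Y‖ ≤ R) (nW : ‖W‖ ≤ R)
    (h1 : |(Z * X).trace| ≤ η) (h2 : |(Z * Y).trace| ≤ η) (h3 : |(Z * W).trace| ≤ η) :
    |(X * Y * W).trace| * ‖Z‖ ≤ 3 * η * R ^ 2 := by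
  have hR : 0 ≤ R := (norm_nonneg X).trans nX
  have hη : 0 ≤ η := (abs_nonneg _).trans h1
  have hb : ∀ U V : M2, ‖U‖ ≤ R → ‖V‖ ≤ R → ‖br U V‖ ≤ 2 * R ^ 2 := fun U V hU hV =>
    (norm_br_le U V).trans (by nlinarith [norm_nonneg U, norm_nonneg V])
  have hs : ∀ (c : ℝ) (U : M2), |c| ≤ η → ‖U‖ ≤ 2 * R ^ 2 → ‖c • U‖ ≤ η * (2 * R ^ 2) := by
    intro c U hc hU
    rw [norm_smul, Real.norm_eq_abs]
    exact mul_le_mul hc hU (norm_nonneg _) hη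
  have e := congrArg norm (dual_identity hX hY hW hZ)
  rw [norm_smul, Real.norm_eq_abs, abs_mul, abs_two] at e
  have := norm_add₃_le (a := (Z * X).trace • br Y W) (b := (Z * Y).trace • br W X)
    (c := (Z * W).trace • br X Y)
  have := hs _ _ h1 (hb Y W nY nW)
  have := hs _ _ h2 (hb W X nW nX)
  have := hs _ _ h3 (hb X Y nX nY)
  nlinarith

/-- A traceless matrix almost commuting with a nondegenerate triple is small. -/
lemma basis_br_norm {X Y W Z : M2} (hX : X.trace = 0) (hY : Y.trace = 0) (hW : W.trace = 0)
    (hZ : Z.trace = 0) {R η : ℝ} (nX : ‖X‖ ≤ R) (nY : ‖Y‖ ≤ R) (nW : ‖W‖ ≤ R)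
    (h1 : ‖br Z X‖ ≤ η) (h2 : ‖br Z Y‖ ≤ η) (h3 : ‖br Z W‖ ≤ η) :
    |(X * Y * W).trace| * ‖Z‖ ≤ 3 / 2 * η * R ^ 2 := by
  have hR : 0 ≤ R := (norm_nonneg X).trans nX
  have hη : 0 ≤ η := (norm_nonneg _).trans h1
  have e := congrArg norm (basis_identity hX hY hW hZ)
  rw [norm_smul, Real.norm_eq_abs] at e
  have e1 : |(Z * Y * W).trace| ≤ η * R / 2 := by
    rw [trace3_eq_br hZ hY hW, abs_div, abs_two]
    have := abs_trace_mul_le (br Z Y) W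
    have : ‖br Z Y‖ * ‖W‖ ≤ η * R := mul_le_mul h2 nW (norm_nonneg _) hη
    linarith
  have e2 : |(X * Z * W).trace| ≤ η * R / 2 := by
    have e : (X * Z * W).trace = (Z * W * X).trace := by rw [mul_assoc, trace_comm]
    rw [e, trace3_eq_br hZ hW hX, abs_div, abs_two]
    have := abs_trace_mul_le (br Z W) X
    have : ‖br Z W‖ * ‖X‖ ≤ η * R := mul_le_mul h3 nX (norm_nonneg _) hη
    linarith
  have e3 : |(X * Y * Z).trace| ≤ η * R / 2 := by
    have e : (X * Y * Z).trace = (Z * X * Y).trace := by rw [trace_comm, mul_assoc]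
    rw [e, trace3_eq_br hZ hX hY, abs_div, abs_two]
    have := abs_trace_mul_le (br Z X) Y
    have : ‖br Z X‖ * ‖Y‖ ≤ η * R := mul_le_mul h1 nY (norm_nonneg _) hη
    linarith
  have hs : ∀ (c : ℝ) (U : M2), |c| ≤ η * R / 2 → ‖U‖ ≤ R → ‖c • U‖ ≤ η * R / 2 * R := by
    intro c U hc hU
    rw [norm_smul, Real.norm_eq_abs]
    exact mul_le_mul hc hU (norm_nonneg _) (by positivity)
  have := norm_add₃_le (a := (Z * Y * W).trace • X) (b := (X * Z * W).trace • Y)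
    (c := (X * Y * Z).trace • W)
  have := hs _ _ e1 nX
  have := hs _ _ e2 nY
  have := hs _ _ e3 nW
  nlinarith

lemma trace_XXY {X Y : M2} (hX : X.trace = 0) (hY : Y.trace = 0) : (X * X * Y).trace = 0 := by
  have := entry11 hX; have := entry11 hY
  simp [Matrix.trace_fin_two, Matrix.mul_apply, Fin.sum_univ_two, *]; ring

/-- The coefficients of a small combination of a nondegenerate triple are small. -/
lemma coeff_bound {X Y W : M2} (hX : X.trace = 0) (hY : Y.trace = 0) (hW : W.trace = 0)
    {R η α β γ : ℝ} (nX : ‖X‖ ≤ R) (nY : ‖Y‖ ≤ R) (nW : ‖W‖ ≤ R)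
    (h : ‖α • X + β • Y + γ • W‖ ≤ η) :
    |α| * |(X * Y * W).trace| ≤ η * R ^ 2 ∧ |β| * |(X * Y * W).trace| ≤ η * R ^ 2 ∧
      |γ| * |(X * Y * W).trace| ≤ η * R ^ 2 := by
  have hR : 0 ≤ R := (norm_nonneg X).trans nX
  have hη : 0 ≤ η := (norm_nonneg _).trans h
  have z1 := entry11 hX; have z2 := entry11 hY; have z3 := entry11 hW
  set V := α • X + β • Y + γ • W with hV
  have bd : ∀ P Q' : M2, ‖P‖ ≤ R → ‖Q'‖ ≤ R → |(V * P * Q').trace| ≤ η * R ^ 2 := by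
    intro P Q' hP hQ
    refine (abs_trace3_le _ _ _).trans ?_
    have : ‖V‖ * ‖P‖ ≤ η * R := mul_le_mul h hP (norm_nonneg _) hη
    nlinarith [mul_le_mul this hQ (norm_nonneg _) (by positivity)]
  have e1 : (V * Y * W).trace = α * (X * Y * W).trace := by
    simp [Matrix.trace_fin_two, Matrix.mul_apply, Fin.sum_univ_two, *]; ring
  have e2 : (V * W * X).trace = β * (X * Y * W).trace := by
    simp [Matrix.trace_fin_two, Matrix.mul_apply, Fin.sum_univ_two, *]; ring
  have e3 : (V * X * Y).trace = γ * (X * Y * W).trace := by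
    simp [Matrix.trace_fin_two, Matrix.mul_apply, Fin.sum_univ_two, *]; ring
  rw [← abs_mul, ← abs_mul, ← abs_mul, ← e1, ← e2, ← e3]
  exact ⟨bd _ _ nY nW, bd _ _ nW nX, bd _ _ nX nY⟩

/-- A traceless matrix almost commuting with `X` is almost a multiple of `X`. -/
lemma near_line {X Y : M2} (hX : X.trace = 0) (hY : Y.trace = 0) :
    ∃ c : ℝ, ‖X‖ * ‖Y - c • X‖ ≤ ‖br X Y‖ := by
  by_cases h0 : X = 0
  · exact ⟨0, by simp [h0]⟩
  have hn : 0 < ‖X‖ := norm_pos_iff.2 h0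
  have z1 := entry11 hX; have z2 := entry11 hY
  have hs := nsq X
  rw [z1] at hs
  set c : ℝ := (2 * X 0 0 * Y 0 0 + X 0 1 * Y 0 1 + X 1 0 * Y 1 0) / ‖X‖ ^ 2 with hc
  have hc' : c * ‖X‖ ^ 2 = 2 * X 0 0 * Y 0 0 + X 0 1 * Y 0 1 + X 1 0 * Y 1 0 := by
    rw [hc]; field_simp
  refine ⟨c, le_of_sq_le_sq ?_ (norm_nonneg _)⟩
  have e1 : ‖Y - c • X‖ ^ 2 = 2 * Y 0 0 ^ 2 + Y 0 1 ^ 2 + Y 1 0 ^ 2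
      - 2 * c * (2 * X 0 0 * Y 0 0 + X 0 1 * Y 0 1 + X 1 0 * Y 1 0) + c ^ 2 * ‖X‖ ^ 2 := by
    rw [hs, nsq]; simp [z1, z2]; ring
  have e2 : ‖br X Y‖ ^ 2 = 2 * (X 0 1 * Y 1 0 - X 1 0 * Y 0 1) ^ 2
      + 4 * (X 0 0 * Y 0 1 - X 0 1 * Y 0 0) ^ 2 + 4 * (X 1 0 * Y 0 0 - X 0 0 * Y 1 0) ^ 2 := by
    rw [nsq]; simp [br, Matrix.mul_apply, Fin.sum_univ_two, z1, z2]; ring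
  have e3 : (‖X‖ * ‖Y - c • X‖) ^ 2 = ‖X‖ ^ 2 * (2 * Y 0 0 ^ 2 + Y 0 1 ^ 2 + Y 1 0 ^ 2)
      - (2 * X 0 0 * Y 0 0 + X 0 1 * Y 0 1 + X 1 0 * Y 1 0) ^ 2 := by
    rw [mul_pow, e1, ← hc']; ring
  rw [e3, e2, hs]
  nlinarith [sq_nonneg (X 0 1 * Y 1 0 - X 1 0 * Y 0 1), sq_nonneg (X 0 0 * Y 0 1 - X 0 1 * Y 0 0),
    sq_nonneg (X 1 0 * Y 0 0 - X 0 0 * Y 1 0)]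

lemma double_br {M X Y : M2} (hM : M.trace = 0) (hX : X.trace = 0) (hY : Y.trace = 0) :
    br M (br X Y) = (2 * (M * X).trace) • Y - (2 * (M * Y).trace) • X := by
  have := entry11 hM; have := entry11 hX; have := entry11 hY
  ext i j; fin_cases i <;> fin_cases j <;>
    simp [br, Matrix.trace_fin_two, Matrix.mul_apply, Fin.sum_univ_two, *] <;> ring

/-! ### Growth of powers under small tripling -/

lemma pow_mem_mul {A : Set M2} {k l : ℕ} {g h : M2} (hg : g ∈ A ^ k) (hh : h ∈ A ^ l) :
    g * h ∈ A ^ (k + l) := by rw [pow_add]; exact Set.mul_mem_mul hg hh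

/-- A nonempty symmetric set of elements of `SL₂(ℝ)` close to the identity. -/
structure Sym (A : Set M2) : Prop where
  ne : A.Nonempty
  inv : ∀ a ∈ A, adj a ∈ A
  det : ∀ a ∈ A, a.det = 1
  near : ∀ a ∈ A, ‖a - 1‖ ≤ 1 / 1000

section sym
variable {A : Set M2} (hA : Sym A)
include hA

lemma Sym.pow_det (k : ℕ) : ∀ g ∈ A ^ k, g.det = 1 := by
  induction k with
  | zero => intro g hg; rw [pow_zero, Set.mem_one] at hg; rw [hg, Matrix.det_one]
  | succ k ih =>
    intro g hg
    rw [pow_succ] at hg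
    obtain ⟨x, hx, y, hy, rfl⟩ := hg
    change (x * y).det = 1
    rw [Matrix.det_mul, ih x hx, hA.det y hy, one_mul]

lemma Sym.pow_inv (k : ℕ) : ∀ g ∈ A ^ k, adj g ∈ A ^ k := by
  induction k with
  | zero => intro g hg; rw [pow_zero, Set.mem_one] at hg ⊢; rw [hg, adj_one]
  | succ k ih =>
    intro g hg
    rw [pow_succ] at hg
    obtain ⟨x, hx, y, hy, rfl⟩ := hg
    change adj (x * y) ∈ _
    rw [adj_mul_rev, pow_succ']
    exact Set.mul_mem_mul (hA.inv y hy) (ih x hx)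

lemma Sym.one_mem_two : (1 : M2) ∈ A ^ 2 := by
  obtain ⟨a, ha⟩ := hA.ne
  rw [pow_two, ← mul_adj (hA.det a ha)]
  exact Set.mul_mem_mul ha (hA.inv a ha)

lemma Sym.one_mem (k : ℕ) : (1 : M2) ∈ A ^ (2 * k) := by
  rw [pow_mul]
  exact Set.one_mem_pow hA.one_mem_two

lemma Sym.pow_mono {k l : ℕ} (h : k ≤ l) (he : Even (l - k)) : A ^ k ⊆ A ^ l := by
  obtain ⟨j, hj⟩ := he
  intro g hg
  have : l = k + 2 * j := by omega
  rw [this, ← mul_one g]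
  exact pow_mem_mul hg (hA.one_mem j)

lemma Sym.pow_mem {k l : ℕ} {g : M2} (hg : g ∈ A ^ (2 * k)) (h : 2 * k ≤ 2 * l) : g ∈ A ^ (2 * l) :=
  hA.pow_mono h ⟨l - k, by omega⟩ hg

lemma Sym.norm_le {a : M2} (ha : a ∈ A) : ‖a‖ ≤ 2 := by
  have h1 := hA.near a ha
  have h2 := norm_add_le (a - 1) 1
  rw [sub_add_cancel] at h2
  linarith [norm_one_le]

lemma Sym.pow_norm (k : ℕ) : ∀ g ∈ A ^ (k + 1), ‖g‖ ≤ 2 ^ (k + 1) := by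
  induction k with
  | zero => intro g hg; rw [zero_add, pow_one] at hg; simpa using hA.norm_le hg
  | succ k ih =>
    intro g hg
    rw [pow_succ] at hg
    obtain ⟨x, hx, y, hy, rfl⟩ := hg
    calc ‖x * y‖ ≤ ‖x‖ * ‖y‖ := norm_mul_le _ _
      _ ≤ 2 ^ (k + 1) * 2 := mul_le_mul (ih x hx) (hA.norm_le hy) (norm_nonneg _) (by positivity)
      _ = _ := by ring

lemma Sym.bdd_pow (k : ℕ) : Bdd (A ^ k) := by
  cases k with
  | zero => exact ⟨‖(1 : M2)‖, fun x hx => by rw [pow_zero, Set.mem_one] at hx; rw [hx]⟩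
  | succ k => exact ⟨_, hA.pow_norm k⟩

lemma Sym.bdd : Bdd A := by simpa using hA.bdd_pow 1

lemma Sym.pow_near (k : ℕ) : ∀ g ∈ A ^ k, ‖g - 1‖ ≤ (1 + 1 / 1000) ^ k - 1 := by
  induction k with
  | zero => intro g hg; rw [pow_zero, Set.mem_one] at hg; rw [hg]; simp
  | succ k ih =>
    intro g hg
    rw [pow_succ] at hg
    obtain ⟨x, hx, y, hy, rfl⟩ := hg
    have e : x * y - 1 = (x - 1) * (y - 1) + (x - 1) + (y - 1) := by noncomm_ring
    change ‖x * y - 1‖ ≤ _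
    rw [e]
    have h1 := ih x hx
    have h2 := hA.near y hy
    have h3 : ‖(x - 1) * (y - 1)‖ ≤ ‖x - 1‖ * (1 / 1000) :=
      (norm_mul_le _ _).trans (by gcongr)
    have h4 := norm_add₃_le (a := (x - 1) * (y - 1)) (b := x - 1) (c := y - 1)
    rw [pow_succ]
    nlinarith

lemma Sym.near60 {k : ℕ} (hk : k ≤ 60) {g : M2} (hg : g ∈ A ^ k) : ‖g - 1‖ ≤ 1 / 10 := by
  refine (hA.pow_near k g hg).trans ?_
  have : (1 + 1 / 1000 : ℝ) ^ k ≤ (1 + 1 / 1000) ^ 60 := pow_le_pow_right₀ (by norm_num) hk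
  have h2 : (1 + 1 / 1000 : ℝ) ^ 60 ≤ 1 + 1 / 10 := by norm_num
  linarith

omit hA in
lemma norm_le_two_of_near {g : M2} (h : ‖g - 1‖ ≤ 1 / 2) : ‖g‖ ≤ 2 := by
  have h2 := norm_add_le (g - 1) 1
  rw [sub_add_cancel] at h2
  linarith [norm_one_le]

end sym

lemma Bdd.mul {S S' : Set M2} (h : Bdd S) (h' : Bdd S') : Bdd (S * S') := by
  obtain ⟨R, hR⟩ := h; obtain ⟨R', hR'⟩ := h'
  refine ⟨|R| * |R'|, ?_⟩
  rintro _ ⟨x, hx, y, hy, rfl⟩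
  exact (norm_mul_le _ _).trans (mul_le_mul ((hR x hx).trans (le_abs_self R))
    ((hR' y hy).trans (le_abs_self R')) (norm_nonneg _) (abs_nonneg _))

lemma norm_le_of_mul_left {g x y : M2} (hg : g.det = 1) {R c : ℝ} (hR : ‖g‖ ≤ R)
    (h : ‖g * x - g * y‖ ≤ c) : ‖x - y‖ ≤ R * c := by
  have e : x - y = adj g * (g * x - g * y) := by
    rw [← mul_sub, ← mul_assoc, adj_mul hg, one_mul]
  rw [e]
  refine (norm_mul_le _ _).trans ?_
  rw [norm_adj]
  exact mul_le_mul hR h (norm_nonneg _) ((norm_nonneg _).trans hR)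

/-- If `X` lies in the `r`-ball around `1`, the translates `g X` for `r`-separated `g ∈ G` are
essentially disjoint. -/
lemma prod_count {G X : Set M2} (hG : Bdd G) {R r e : ℝ} (hR : 1 ≤ R) (he : 0 < e) (her : e ≤ r)
    (hdet : ∀ g ∈ G, g.det = 1) (hn : ∀ g ∈ G, ‖g‖ ≤ R) (hX : ∀ x ∈ X, ‖x - 1‖ ≤ r) :
    N r G * N e X ≤ (4 * R + 7) ^ 8 * N e (G * X) := by
  have hBX : Bdd X := (Bdd_ball 1 r).mono hX
  have hr : 0 < r := he.trans_le her
  obtain ⟨P, hP1, hP2, -, hP3⟩ := exists_sep hG (e := (2 * R + 2) * r) (by positivity)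
  obtain ⟨Y, hY1, hY2, -, hY3⟩ := exists_sep hBX (e := (2 * R) * e) (by positivity)
  have h1 : ((P ×ˢ Y).card : ℝ) ≤ N e (G * X) := by
    refine inj_count (P ×ˢ Y) (fun p => p.1 * p.2) (hG.mul hBX) he ?_ ?_
    · intro p hp
      rw [Finset.mem_product] at hp
      exact Set.mul_mem_mul (hP1 hp.1) (hY1 hp.2)
    · rintro ⟨g, x⟩ hp ⟨g', x'⟩ hp' h
      rw [Finset.mem_product] at hp hp'
      have bd : ∀ g ∈ G, ∀ x ∈ X, ‖g * x - g‖ ≤ R * r := by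
        intro g hg x hx
        have e : g * x - g = g * (x - 1) := by noncomm_ring
        rw [e]
        exact (norm_mul_le _ _).trans (mul_le_mul (hn g hg) (hX x hx) (norm_nonneg _) (by linarith))
      have b1 := bd g (hP1 hp.1) x (hY1 hp.2)
      have b2 := bd g' (hP1 hp'.1) x' (hY1 hp'.2)
      have hgg : g = g' := by
        apply hP2 g hp.1 g' hp'.1
        have e : g - g' = -(g * x - g) + (g * x - g' * x') + (g' * x' - g') := by abel
        rw [e]
        refine (norm_add₃_le).trans ?_
        rw [norm_neg]
        simp only at h
        nlinarith
      subst hgg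
      have := norm_le_of_mul_left (hdet g (hP1 hp.1)) (hn g (hP1 hp.1)) h
      have hxx : x = x' := hY2 x hp.2 x' hp'.2 (by linarith)
      rw [hxx]
  have h2 : N r G ≤ (2 * (2 * R + 2) + 3) ^ 4 * P.card :=
    (N_scale hG hr (by positivity : 0 < 2 * R + 2)).trans (by gcongr)
  have h3 : N e X ≤ (2 * (2 * R) + 3) ^ 4 * Y.card :=
    (N_scale hBX he (by positivity : 0 < 2 * R)).trans (by gcongr)
  rw [Finset.card_product] at h1
  push_cast at h1
  calc N r G * N e X ≤ ((2 * (2 * R + 2) + 3) ^ 4 * P.card) * ((2 * (2 * R) + 3) ^ 4 * Y.card) :=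
        mul_le_mul h2 h3 (N_nonneg _ _) (by positivity)
    _ ≤ ((4 * R + 7) ^ 4 * P.card) * ((4 * R + 7) ^ 4 * Y.card) := by
        have p1 : (2 * (2 * R + 2) + 3) ^ 4 ≤ (4 * R + 7) ^ 4 :=
          pow_le_pow_left₀ (by linarith) (by linarith) 4
        have p2 : (2 * (2 * R) + 3) ^ 4 ≤ (4 * R + 7) ^ 4 :=
          pow_le_pow_left₀ (by linarith) (by linarith) 4
        exact mul_le_mul (mul_le_mul_of_nonneg_right p1 (by positivity))
          (mul_le_mul_of_nonneg_right p2 (by positivity)) (by positivity) (by positivity)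
    _ = (4 * R + 7) ^ 8 * (P.card * Y.card) := by ring
    _ ≤ _ := by gcongr

/-- Translating a set by a matrix of norm at most two. -/
lemma N_translate {S : Set M2} (hS : Bdd S) {g : M2} (hg : ‖g‖ ≤ 2) {e : ℝ} (he : 0 < e) :
    N e ((fun x => g * x) '' S) ≤ 7 ^ 4 * N e S := by
  classical
  have h1 : N e ((fun x => g * x) '' S) ≤ N (e / 2) S := by
    obtain ⟨T, h1, h2⟩ := N_exists hS (half_pos he)
    rw [← h1]
    refine (N_le (T.image fun x => g * x) ?_).trans (by exact_mod_cast Finset.card_image_le)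
    rintro _ ⟨s, hs, rfl⟩
    obtain ⟨t, ht, h⟩ := h2 s hs
    refine ⟨g * t, Finset.mem_image_of_mem _ ht, ?_⟩
    calc ‖g * s - g * t‖ = ‖g * (s - t)‖ := by rw [mul_sub]
      _ ≤ ‖g‖ * ‖s - t‖ := norm_mul_le _ _
      _ ≤ 2 * (e / 2) := by gcongr
      _ = e := by ring
  have h2 := N_scale hS (half_pos he) (l := 2) two_pos
  rw [mul_div_cancel₀ _ (two_ne_zero)] at h2
  norm_num at h2 ⊢
  linarith

/-- One step of the Ruzsa triangle inequality. -/
lemma ruzsa_step {A : Set M2} (hA : Sym A) {δ : ℝ} (hδ : 0 < δ) (k : ℕ) (hk : 1 ≤ k) :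
    N δ (A ^ (k + 1)) * N δ A ≤ (8 * 2 ^ (k + 1) + 3) ^ 8 * (N δ (A ^ 3) * N δ (A ^ k)) ∨ k < 2 := by
  classical
  by_cases hk2 : k < 2
  · exact Or.inr hk2
  left
  obtain ⟨j, rfl⟩ : ∃ j, k = j + 2 := ⟨k - 2, by omega⟩
  set R : ℝ := 2 ^ (j + 2 + 1) with hR
  have hR8 : (8 : ℝ) ≤ R := by
    rw [hR, pow_add, pow_add]; nlinarith [one_le_pow₀ (by norm_num : (1 : ℝ) ≤ 2) (n := j)]
  obtain ⟨P, hP1, hP2, -, hP3⟩ := exists_sep (hA.bdd_pow (j + 2 + 1)) (e := (4 * R) * δ) (by positivity)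
  obtain ⟨Y, hY1, hY2, -, hY3⟩ := exists_sep hA.bdd (e := (4 * R) * δ) (by positivity)
  have hdec : ∀ p : M2, ∃ x z : M2, p ∈ P → x ∈ A ^ 2 ∧ z ∈ A ^ (j + 1) ∧ x * z = p := by
    intro p
    by_cases hp : p ∈ P
    · have := hP1 hp
      rw [show j + 2 + 1 = 2 + (j + 1) by ring, pow_add] at this
      obtain ⟨x, hx, z, hz, h⟩ := this
      exact ⟨x, z, fun _ => ⟨hx, hz, h⟩⟩
    · exact ⟨0, 0, fun h => absurd h hp⟩
  choose x z hxz using hdec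
  have h1 : ((P ×ˢ Y).card : ℝ) ≤ N δ (A ^ 3) * N δ (A ^ (j + 2)) := by
    refine inj_count2 (P ×ˢ Y) (fun p => x p.1 * p.2) (fun p => adj p.2 * z p.1)
      (hA.bdd_pow 3) (hA.bdd_pow _) hδ hδ ?_ ?_ ?_
    · intro p hp
      rw [Finset.mem_product] at hp
      rw [pow_succ]
      exact Set.mul_mem_mul (hxz _ hp.1).1 (hY1 hp.2)
    · intro p hp
      rw [Finset.mem_product] at hp
      rw [show j + 2 = (j + 1) + 1 by ring, pow_succ']
      exact Set.mul_mem_mul (hA.inv _ (hY1 hp.2)) (hxz _ hp.1).2.1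
    · rintro ⟨p, y⟩ hp ⟨p', y'⟩ hp' h h'
      rw [Finset.mem_product] at hp hp'
      simp only at hp hp' h h'
      obtain ⟨a1, a2, a3⟩ := hxz _ hp.1
      obtain ⟨b1, b2, b3⟩ := hxz _ hp'.1
      have hy := hY1 hp.2
      have hy' := hY1 hp'.2
      have n1 : ‖adj y * z p‖ ≤ R := by
        have : adj y * z p ∈ A ^ (j + 1 + 1) := by
          rw [pow_succ']; exact Set.mul_mem_mul (hA.inv _ hy) a2
        refine (hA.pow_norm _ _ this).trans ?_
        rw [hR]; exact pow_le_pow_right₀ (by norm_num) (by omega)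
      have n2 : ‖x p' * y'‖ ≤ R := by
        have : x p' * y' ∈ A ^ (2 + 1) := by
          rw [pow_succ]; exact Set.mul_mem_mul b1 hy'
        refine (hA.pow_norm _ _ this).trans ?_
        rw [hR]; exact pow_le_pow_right₀ (by norm_num) (by omega)
      have hpp : p = p' := by
        apply hP2 p hp.1 p' hp'.1
        have e : p - p' = (x p * y - x p' * y') * (adj y * z p) +
            (x p' * y') * (adj y * z p - adj y' * z p') := by
          have e1 : x p * y * (adj y * z p) = p := by
            rw [mul_assoc, ← mul_assoc y, mul_adj (hA.det _ hy), one_mul, a3]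
          have e2 : x p' * y' * (adj y' * z p') = p' := by
            rw [mul_assoc, ← mul_assoc y', mul_adj (hA.det _ hy'), one_mul, b3]
          rw [sub_mul, mul_sub, e1, e2]; abel
        rw [e]
        refine (norm_add_le _ _).trans ?_
        have t1 : ‖(x p * y - x p' * y') * (adj y * z p)‖ ≤ (2 * δ) * R :=
          (norm_mul_le _ _).trans (mul_le_mul h n1 (norm_nonneg _) (by positivity))
        have t2 : ‖(x p' * y') * (adj y * z p - adj y' * z p')‖ ≤ R * (2 * δ) :=
          (norm_mul_le _ _).trans (mul_le_mul n2 h' (norm_nonneg _) (by positivity))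
        linarith
      subst hpp
      have n3 : ‖x p‖ ≤ R := by
        have := hA.pow_norm 1 _ a1
        norm_num at this; linarith
      have := norm_le_of_mul_left (hA.pow_det 2 _ a1) n3 h
      have hyy : y = y' := hY2 y hp.2 y' hp'.2 (by nlinarith)
      rw [hyy]
  have h2 : N δ (A ^ (j + 2 + 1)) ≤ (2 * (4 * R) + 3) ^ 4 * P.card :=
    (N_scale (hA.bdd_pow _) hδ (by positivity : 0 < 4 * R)).trans (by gcongr)
  have h3 : N δ A ≤ (2 * (4 * R) + 3) ^ 4 * Y.card :=
    (N_scale hA.bdd hδ (by positivity : 0 < 4 * R)).trans (by gcongr)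
  rw [Finset.card_product] at h1
  push_cast at h1
  calc N δ (A ^ (j + 2 + 1)) * N δ A
      ≤ ((2 * (4 * R) + 3) ^ 4 * P.card) * ((2 * (4 * R) + 3) ^ 4 * Y.card) :=
        mul_le_mul h2 h3 (N_nonneg _ _) (by positivity)
    _ = (8 * R + 3) ^ 8 * (P.card * Y.card) := by ring
    _ ≤ _ := by gcongr

/-- Small tripling implies small growth of all powers. -/
lemma ruzsa (k : ℕ) (hk : 3 ≤ k) : ∃ C : ℝ, 0 < C ∧ ∀ (A : Set M2) (δ K : ℝ), Sym A → 0 < δ →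
    1 ≤ K → N δ (A ^ 3) ≤ K * N δ A → N δ (A ^ k) ≤ C * K ^ k * N δ A := by
  induction k, hk using Nat.le_induction with
  | base =>
    refine ⟨1, one_pos, fun A δ K hA hδ hK h => ?_⟩
    refine h.trans ?_
    have := N_nonneg δ A
    have : K ≤ K ^ 3 := le_self_pow₀ hK (by norm_num)
    rw [one_mul]; gcongr
  | succ k hk ih =>
    obtain ⟨C, hC, h⟩ := ih
    refine ⟨(8 * 2 ^ (k + 1) + 3) ^ 8 * C, by positivity, fun A δ K hA hδ hK h3 => ?_⟩
    have h1 := h A δ K hA hδ hK h3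
    have h2 := (ruzsa_step hA hδ k (by omega)).resolve_right (by omega)
    have hp : 0 < N δ A := one_pos.trans_le (N_pos hA.bdd hA.ne hδ)
    refine le_of_mul_le_mul_right (h2.trans ?_) hp
    calc (8 * 2 ^ (k + 1) + 3) ^ 8 * (N δ (A ^ 3) * N δ (A ^ k))
        ≤ (8 * 2 ^ (k + 1) + 3) ^ 8 * ((K * N δ A) * (C * K ^ k * N δ A)) := by
          gcongr
          exact N_nonneg _ _
      _ = _ := by ring

/-- Small growth at the finest scale is inherited by all coarser scales. -/
lemma ruzsa_scale (m : ℕ) (hm : 1 ≤ m) : ∃ C : ℝ, 0 < C ∧ ∀ (A : Set M2) (δ K e : ℝ), Sym A →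
    0 < δ → 1 ≤ K → δ ≤ e → N δ (A ^ 3) ≤ K * N δ A →
    N e (A ^ (2 * m)) ≤ C * K ^ (2 * m + 2) * N e A := by
  obtain ⟨C, hC, h⟩ := ruzsa (2 * m + 2) (by omega)
  refine ⟨11 ^ 4 * 7 ^ 4 * (4 * 2 ^ (2 * m) + 7) ^ 8 * C, by positivity, ?_⟩
  intro A δ K e hA hδ hK hδe h3
  have he : 0 < e := hδ.trans_le hδe
  have h1 := h A δ K hA hδ hK h3
  set X : Set M2 := {x ∈ A ^ 2 | ‖x - 1‖ ≤ 4 * e} with hX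
  have bX : Bdd X := (Bdd_ball 1 (4 * e)).mono fun x hx => hx.2
  have hp : 0 < N δ A := one_pos.trans_le (N_pos hA.bdd hA.ne hδ)
  have q1 : N (4 * e) (A ^ (2 * m)) * N δ X ≤ (4 * 2 ^ (2 * m) + 7) ^ 8 * N δ (A ^ (2 * m + 2)) := by
    refine (prod_count (hA.bdd_pow _) (R := 2 ^ (2 * m)) (one_le_pow₀ (by norm_num)) hδ
      (by linarith) (hA.pow_det _) ?_ (fun x hx => hx.2)).trans ?_
    · intro g hg
      have := hA.pow_norm (2 * m - 1) g
      rw [show 2 * m - 1 + 1 = 2 * m by omega] at this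
      exact this hg
    · gcongr
      apply N_mono (hA.bdd_pow _) _ hδ
      rw [pow_add]
      exact Set.mul_subset_mul_left fun x hx => hx.1
  have q2 : N δ A ≤ N e A * (7 ^ 4 * N δ X) := by
    obtain ⟨T, t1, t2⟩ := N_exists hA.bdd he
    rw [← t1]
    refine N_fiber hδ T (fun t => {a ∈ A | ‖a - t‖ ≤ e}) (fun a ha => ?_) ?_
    · obtain ⟨t, ht, h⟩ := t2 a ha; exact ⟨t, ht, ha, h⟩
    · intro t _
      refine ⟨hA.bdd.mono fun a ha => ha.1, ?_⟩
      by_cases hne : {a ∈ A | ‖a - t‖ ≤ e}.Nonempty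
      · obtain ⟨a0, ha0, ha1⟩ := hne
        refine le_trans (N_mono (S' := (fun x => a0 * x) '' X) ?_ ?_ hδ)
          (N_translate bX (hA.norm_le ha0) hδ)
        · obtain ⟨R, hR⟩ := bX
          refine ⟨2 * R, ?_⟩
          rintro _ ⟨x, hx, rfl⟩
          exact (norm_mul_le _ _).trans (mul_le_mul (hA.norm_le ha0) (hR x hx) (norm_nonneg _) two_pos.le)
        · rintro a ⟨ha, hat⟩
          refine ⟨adj a0 * a, ⟨?_, ?_⟩, ?_⟩
          · rw [pow_two]; exact Set.mul_mem_mul (hA.inv _ ha0) ha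
          · have e1 : adj a0 * a - 1 = adj a0 * ((a - t) - (a0 - t)) := by
              rw [sub_sub_sub_cancel_right, mul_sub, adj_mul (hA.det _ ha0)]
            rw [e1]
            refine (norm_mul_le _ _).trans ?_
            rw [norm_adj]
            have := norm_sub_le (a - t) (a0 - t)
            have := hA.norm_le ha0
            nlinarith [norm_nonneg a0, norm_nonneg ((a - t) - (a0 - t))]
          · simp only
            rw [← mul_assoc, mul_adj (hA.det _ ha0), one_mul]
      · rw [Set.not_nonempty_iff_eq_empty] at hne
        rw [hne]
        have : N δ (∅ : Set M2) ≤ 0 := by simpa using N_le (S := (∅ : Set M2)) (e := δ) ∅ (by simp)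
        have := N_nonneg δ X
        linarith
  have q3 : N e (A ^ (2 * m)) ≤ 11 ^ 4 * N (4 * e) (A ^ (2 * m)) := by
    have := N_scale (hA.bdd_pow (2 * m)) he (l := 4) (by norm_num)
    norm_num at this ⊢
    exact this
  refine le_of_mul_le_mul_right ?_ hp
  have z1 := N_nonneg (4 * e) (A ^ (2 * m))
  have z2 := N_nonneg e A
  have z3 := N_nonneg δ X
  calc N e (A ^ (2 * m)) * N δ A
      ≤ (11 ^ 4 * N (4 * e) (A ^ (2 * m))) * (N e A * (7 ^ 4 * N δ X)) :=
        mul_le_mul q3 q2 (N_nonneg _ _) (by positivity)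
    _ = 11 ^ 4 * 7 ^ 4 * N e A * (N (4 * e) (A ^ (2 * m)) * N δ X) := by ring
    _ ≤ 11 ^ 4 * 7 ^ 4 * N e A * ((4 * 2 ^ (2 * m) + 7) ^ 8 * (C * K ^ (2 * m + 2) * N δ A)) := by
        refine mul_le_mul_of_nonneg_left (q1.trans ?_) (by positivity)
        exact mul_le_mul_of_nonneg_left h1 (by positivity)
    _ = _ := by ring

/-! ### Irreducibility of the conjugation action -/

/-- Diagonalising a traceless matrix turns `det (X g - g X)` into a product of off-diagonal
entries. -/
lemma det_comm_of_diag {X g : M2} {u : Matrix (Fin 2) (Fin 2) ℂ} {l : ℂ} (hu : u.det ≠ 0)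
    (hX : u * X.map Complex.ofReal = !![l, 0; 0, -l] * u) :
    (((X * g - g * X).det : ℝ) : ℂ) = 4 * l ^ 2 * ((u * g.map Complex.ofReal * u⁻¹) 0 1 *
      (u * g.map Complex.ofReal * u⁻¹) 1 0) := by
  have hu' : IsUnit u.det := isUnit_iff_ne_zero.2 hu
  set Xc := X.map Complex.ofReal
  set gc := g.map Complex.ofReal
  set G := u * gc * u⁻¹ with hG
  set D : Matrix (Fin 2) (Fin 2) ℂ := !![l, 0; 0, -l]
  have e1 : (((X * g - g * X).det : ℝ) : ℂ) = (Xc * gc - gc * Xc).det := by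
    simp [Xc, gc, Matrix.det_fin_two, Matrix.mul_apply, Fin.sum_univ_two]
  have e2 : D * G - G * D = u * (Xc * gc - gc * Xc) * u⁻¹ := by
    have : u⁻¹ * D = Xc * u⁻¹ := by
      calc u⁻¹ * D = u⁻¹ * (D * u) * u⁻¹ := by
            rw [mul_assoc, mul_assoc, Matrix.mul_nonsing_inv _ hu', mul_one]
        _ = Xc * u⁻¹ := by
            rw [← hX, ← mul_assoc, Matrix.nonsing_inv_mul _ hu', one_mul]
    calc D * G - G * D = (D * u) * gc * u⁻¹ - u * gc * (u⁻¹ * D) := by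
          rw [hG]; noncomm_ring
      _ = _ := by rw [← hX, this]; noncomm_ring
  have e3 : (D * G - G * D).det = (Xc * gc - gc * Xc).det := by
    rw [e2, Matrix.det_mul, Matrix.det_mul, mul_right_comm, ← Matrix.det_mul,
      Matrix.mul_nonsing_inv _ hu', Matrix.det_one, one_mul]
  rw [e1, ← e3]
  clear_value G
  have hD : D * G - G * D = !![0, 2 * l * G 0 1; -(2 * l * G 1 0), 0] := by
    ext i j
    rw [Matrix.sub_apply, Matrix.mul_apply, Matrix.mul_apply, Fin.sum_univ_two, Fin.sum_univ_two]
    fin_cases i <;> fin_cases j <;> simp [D] <;> ring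
  rw [hD, Matrix.det_fin_two_of]
  ring

/-- The real form of the non-concentration hypothesis: no traceless `X` with `det X ≠ 0` is
almost normalised by all short words. -/
def RealIrr (A : Set M2) (η : ℝ) : Prop :=
  ∀ X : M2, X.trace = 0 → X.det ≠ 0 → ∃ g ∈ A ^ 4, 4 * η * |X.det| ≤ |(X * g - g * X).det|

/-- A traceless `X` is diagonalized together with the element `p + q X` of `SL₂(ℝ)`, which is close to
`1` for small `q` and `p = √(1 - q² det X)`; the hypothesis is applied to that element. -/
lemma realIrr_of_diag {A : Set M2} {η : ℝ}
    (h : ∀ m : M2, m.det = 1 → frobDist m 1 ≤ 1 → |Matrix.trace m| ≠ 2 →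
      ∀ u : Matrix (Fin 2) (Fin 2) ℂ, IsUnit u → (u * m.map Complex.ofReal * u⁻¹).IsDiag →
        ∃ g ∈ A * A * A * A, η ≤ ‖(u * g.map Complex.ofReal * u⁻¹) 0 1 *
          (u * g.map Complex.ofReal * u⁻¹) 1 0‖) : RealIrr A η := by
  intro X hX hdet
  have z1 := entry11 hX
  obtain ⟨l, hl⟩ : ∃ l : ℂ, l ^ 2 = ((-X.det : ℝ) : ℂ) :=
    IsAlgClosed.exists_pow_nat_eq _ two_pos
  have hl0 : l ≠ 0 := by
    rintro rfl
    rw [zero_pow two_ne_zero] at hl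
    exact hdet (neg_eq_zero.1 (Complex.ofReal_eq_zero.1 hl.symm))
  have hl' : l * l = X 0 0 * X 0 0 + X 0 1 * X 1 0 := by
    rw [← pow_two, hl, Matrix.det_fin_two, z1]; push_cast; ring
  -- a matrix of left eigenvectors
  obtain ⟨u, hu, huX⟩ : ∃ u : Matrix (Fin 2) (Fin 2) ℂ, u.det ≠ 0 ∧
      u * X.map Complex.ofReal = !![l, 0; 0, -l] * u := by
    by_cases hz : X 1 0 = 0
    · by_cases hy : X 0 1 = 0
      · have : (l - X 0 0) * (l + X 0 0) = 0 := by
          rw [hz, hy] at hl'; push_cast at hl'; linear_combination hl'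
        rcases mul_eq_zero.1 this with h0 | h0
        · refine ⟨1, by simp, ?_⟩
          have h1 : l = X 0 0 := by linear_combination h0
          rw [one_mul, mul_one]
          ext i j; fin_cases i <;> fin_cases j <;> simp [h1, hz, hy, z1]
        · refine ⟨!![0, 1; 1, 0], by simp [Matrix.det_fin_two], ?_⟩
          have h1 : l = -X 0 0 := by linear_combination h0
          ext i j; fin_cases i <;> fin_cases j <;> simp [h1, hz, hy, z1, Matrix.mul_apply]
      · refine ⟨!![l + X 0 0, X 0 1; -l + X 0 0, X 0 1], ?_, ?_⟩
        · rw [Matrix.det_fin_two]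
          have : (X 0 1 : ℂ) ≠ 0 := by exact_mod_cast hy
          have h2 : (2 : ℂ) * l * X 0 1 ≠ 0 := mul_ne_zero (mul_ne_zero two_ne_zero hl0) this
          intro h0; apply h2; simp at h0; linear_combination h0
        · ext i j; fin_cases i <;> fin_cases j <;>
            simp [z1, Matrix.mul_apply, Fin.sum_univ_two] <;>
            first | ring1 | linear_combination hl' | linear_combination (-1 : ℂ) * hl'
    · refine ⟨!![(X 1 0 : ℂ), l - X 0 0; X 1 0, -l - X 0 0], ?_, ?_⟩
      · rw [Matrix.det_fin_two]
        have : (X 1 0 : ℂ) ≠ 0 := by exact_mod_cast hz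
        have h2 : (2 : ℂ) * l * X 1 0 ≠ 0 := mul_ne_zero (mul_ne_zero two_ne_zero hl0) this
        intro h0; apply h2; simp at h0; linear_combination (-1 : ℂ) * h0
      · ext i j; fin_cases i <;> fin_cases j <;>
          simp [z1, Matrix.mul_apply, Fin.sum_univ_two] <;>
            first | ring1 | linear_combination hl' | linear_combination (-1 : ℂ) * hl'
  have hu' : IsUnit u.det := isUnit_iff_ne_zero.2 hu
  -- an element of `SL₂(ℝ)` near `1` commuting with `X`
  set q : ℝ := 1 / (4 * (1 + ‖X‖)) with hq
  have hnX := norm_nonneg X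
  have hq0 : 0 < q := by positivity
  have hqX : q * ‖X‖ ≤ 1 / 4 := by
    rw [hq, div_mul_eq_mul_div, div_le_iff₀ (by positivity)]; linarith
  have hd := abs_det_le X
  have hqd : |q ^ 2 * X.det| ≤ 1 / 32 := by
    rw [abs_mul, abs_of_pos (by positivity : 0 < q ^ 2)]
    have : q ^ 2 * (‖X‖ ^ 2 / 2) = (q * ‖X‖) ^ 2 / 2 := by ring
    have h1 : q ^ 2 * |X.det| ≤ q ^ 2 * (‖X‖ ^ 2 / 2) := by gcongr
    have h2 : (q * ‖X‖) ^ 2 ≤ (1 / 4) ^ 2 := pow_le_pow_left₀ (by positivity) hqX 2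
    linarith
  have hqd' := abs_le.1 hqd
  set p : ℝ := Real.sqrt (1 - q ^ 2 * X.det) with hp
  have hp2 : p ^ 2 = 1 - q ^ 2 * X.det := Real.sq_sqrt (by linarith)
  have hp0 : 0 ≤ p := Real.sqrt_nonneg _
  have hp1 : p ≠ 1 := by
    intro h1
    rw [h1] at hp2
    have : q ^ 2 * X.det = 0 := by linarith
    rcases mul_eq_zero.1 this with h | h
    · exact (pow_ne_zero 2 hq0.ne') h
    · exact hdet h
  set m : M2 := p • (1 : M2) + q • X with hm
  have m1 : m.det = 1 := by
    have : m.det = p ^ 2 + q ^ 2 * X.det := by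
      simp [hm, Matrix.det_fin_two, z1]; ring
    rw [this, hp2]; ring
  have m2 : frobDist m 1 ≤ 1 := by
    rw [frobDist_eq, show m - 1 = (p - 1) • (1 : M2) + q • X by rw [hm, sub_smul, one_smul]; abel]
    refine (norm_add_le _ _).trans ?_
    rw [norm_smul, norm_smul, Real.norm_eq_abs, Real.norm_eq_abs, abs_of_pos hq0]
    have : |p - 1| ≤ 1 / 32 := by
      rw [abs_le]; constructor <;> nlinarith
    nlinarith [norm_one_le, norm_nonneg (1 : M2), abs_nonneg (p - 1)]
  have m3 : |Matrix.trace m| ≠ 2 := by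
    have : Matrix.trace m = 2 * p := by
      simp [hm, hX]; ring
    rw [this, abs_of_nonneg (by positivity)]
    intro h; apply hp1; linarith
  have m4 : (u * m.map Complex.ofReal * u⁻¹).IsDiag := by
    have e : m.map Complex.ofReal = (p : ℂ) • (1 : Matrix (Fin 2) (Fin 2) ℂ) +
        (q : ℂ) • X.map Complex.ofReal := by
      ext i j; fin_cases i <;> fin_cases j <;> simp [hm]
    rw [e, mul_add, mul_smul_comm, mul_smul_comm, huX, add_mul, smul_mul_assoc, smul_mul_assoc,
      mul_one, mul_assoc, Matrix.mul_nonsing_inv _ hu', mul_one]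
    intro i j hij
    fin_cases i <;> fin_cases j <;> simp at hij ⊢
  obtain ⟨g, hg, hge⟩ := h m m1 m2 m3 u ((Matrix.isUnit_iff_isUnit_det u).2 hu') m4
  refine ⟨g, ?_, ?_⟩
  · have : A ^ 4 = A * A * A * A := by rw [pow_succ, pow_succ, pow_two]
    rwa [this]
  · have e := congrArg norm (det_comm_of_diag (g := g) hu huX)
    rw [norm_mul, norm_mul, hl, Complex.norm_real, Complex.norm_real, Real.norm_eq_abs,
      Real.norm_eq_abs, abs_neg] at e
    rw [e]
    have : ‖(4 : ℂ)‖ = 4 := by simp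
    rw [this]
    nlinarith [abs_nonneg X.det]

/-- If `det X` is small, then `X` has an almost null vector `(c, s)`. -/
lemma null_vec {X : M2} (hX : X.trace = 0) (hn : ‖X‖ = 1) :
    ∃ c s : ℝ, 1 / 2 ≤ c ^ 2 + s ^ 2 ∧ c ^ 2 + s ^ 2 ≤ 1 ∧
      ‖X * !![c, 0; s, 0]‖ = |X.det| ∧ ‖X * !![0, c; 0, s]‖ = |X.det| := by
  have z1 := entry11 hX
  have hns := nsq X
  rw [hn, z1] at hns
  have hD : X.det = -(X 0 0 * X 0 0) - X 0 1 * X 1 0 := by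
    rw [Matrix.det_fin_two, z1]; ring
  have key : ∀ M : M2, ∀ d : ℝ, M 0 0 ^ 2 + M 0 1 ^ 2 + M 1 0 ^ 2 + M 1 1 ^ 2 = d ^ 2 →
      ‖M‖ = |d| := by
    intro M d h
    rw [← abs_of_nonneg (norm_nonneg M)]
    apply (sq_eq_sq_iff_abs_eq_abs _ _).1
    rw [nsq, h]
  by_cases hc : 1 / 2 ≤ X 0 1 ^ 2 + X 0 0 ^ 2
  · refine ⟨-X 0 1, X 0 0, by linarith, ?_, ?_, ?_⟩
    · linarith [sq_nonneg (X 1 0), sq_nonneg (X 0 0)]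
    all_goals
      apply key
      simp only [Matrix.mul_apply, Fin.sum_univ_two, z1, hD, Matrix.of_apply, Matrix.cons_val',
        Matrix.cons_val_zero, Matrix.cons_val_one, Matrix.cons_val_fin_one]
      ring
  · refine ⟨X 0 0, X 1 0, by linarith, ?_, ?_, ?_⟩
    · linarith [sq_nonneg (X 0 1), sq_nonneg (X 0 0)]
    all_goals
      apply key
      simp only [Matrix.mul_apply, Fin.sum_univ_two, z1, hD, Matrix.of_apply, Matrix.cons_val',
        Matrix.cons_val_zero, Matrix.cons_val_one, Matrix.cons_val_fin_one]
      ring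

/-- The commutator of `g` with the reflection-like matrix built from a vector `v = (c, s)` factors
through the matrix with columns `v` and `g v`. -/
lemma det_refl (g : M2) (c s : ℝ) :
    ((!![c ^ 2 - s ^ 2, 2 * c * s; 2 * c * s, s ^ 2 - c ^ 2] : M2) * g -
      g * !![c ^ 2 - s ^ 2, 2 * c * s; 2 * c * s, s ^ 2 - c ^ 2]).det =
    4 * ((!![c, 0; s, 0] : M2) + g * !![0, c; 0, s]).det *
      (c * (-s * g 0 0 + c * g 0 1) + s * (-s * g 1 0 + c * g 1 1)) := by
  simp only [Matrix.det_fin_two, Matrix.sub_apply, Matrix.add_apply, Matrix.mul_apply,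
    Fin.sum_univ_two, Matrix.of_apply, Matrix.cons_val',
    Matrix.cons_val_zero, Matrix.cons_val_one, Matrix.cons_val_fin_one]
  ring

set_option maxHeartbeats 1000000 in
/-- `g X g⁻¹` and `X` are far from commuting for some short word `g`. -/
lemma far_conj {A : Set M2} (hA : Sym A) {η : ℝ} (hη : 0 < η) (hη1 : η ≤ 1) (h4 : RealIrr A η)
    {X : M2} (hX : X.trace = 0) (hn : ‖X‖ = 1) :
    ∃ g ∈ A ^ 4, η ^ 2 / 1000 ≤ ‖br X (g * X * adj g)‖ := by
  by_contra! hcon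
  set κ := η ^ 2 / 1000 with hκ
  set β := η / 1000 with hβ
  have hκβ : κ = η * β := by rw [hκ, hβ]; ring
  have hβ0 : 0 < β := by positivity
  have hκ0 : 0 < κ := by positivity
  have hκle : κ ≤ β := by rw [hκβ]; nlinarith
  have hβ1 : β ≤ 1 / 1000 := by rw [hβ]; linarith
  -- conjugates of `X` are almost multiples of `X`, with coefficient near `1`
  have hline : ∀ g ∈ A ^ 4, ∃ l : ℝ, 1 / 2 ≤ l ∧ l ≤ 3 / 2 ∧ ‖g * X * adj g - l • X‖ ≤ κ ∧
      ‖g * X * adj g - X‖ ≤ 2 / 5 := by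
    intro g hg
    have hdet := hA.pow_det 4 g hg
    have hg1 := hA.near60 (by norm_num) hg
    obtain ⟨l, hl⟩ := near_line (Y := g * X * adj g) hX (by rw [trace_conj hdet, hX])
    rw [hn, one_mul] at hl
    have hl2 : ‖g * X * adj g - l • X‖ ≤ κ := hl.trans (hcon g hg).le
    have h1 : ‖g * X * adj g - X‖ ≤ 2 / 5 := by
      have e : g * X * adj g - X = ((g - 1) * X - X * (g - 1)) * adj g := by
        have : g * X * adj g - X = (g * X - X * g) * adj g := by
          rw [sub_mul, mul_assoc X, mul_adj hdet, mul_one]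
        rw [this]; noncomm_ring
      rw [e]
      refine (norm_mul_le _ _).trans ?_
      rw [norm_adj]
      have a1 := norm_br_le (g - 1) X
      unfold br at a1
      have a2 := norm_le_two_of_near (hg1.trans (by norm_num))
      rw [hn] at a1
      nlinarith [norm_nonneg ((g - 1) * X - X * (g - 1)), norm_nonneg g]
    have h2 : |l - 1| ≤ 1 / 2 := by
      have : ‖(l - 1) • X‖ = |l - 1| := by rw [norm_smul, hn, mul_one, Real.norm_eq_abs]
      rw [← this]
      have e : (l - 1) • X = (g * X * adj g - X) - (g * X * adj g - l • X) := by
        rw [sub_smul, one_smul]; abel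
      rw [e]
      refine (norm_sub_le _ _).trans ?_
      linarith
    rw [abs_le] at h2
    exact ⟨l, by linarith, by linarith, hl2, h1⟩
  by_cases hd : β ≤ |X.det|
  · have hd0 : X.det ≠ 0 := fun h => by rw [h, abs_zero] at hd; linarith
    obtain ⟨g, hg, hge⟩ := h4 X hX hd0
    obtain ⟨l, hl1, hl2, hl3, hl4⟩ := hline g hg
    have hdet := hA.pow_det 4 g hg
    set Y := g * X * adj g with hY
    have e1 : (X * g - g * X).det = (X - Y).det := by
      have : X * g - g * X = (X - Y) * g := by
        rw [sub_mul, hY, mul_assoc _ (adj g), adj_mul hdet, mul_one]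
      rw [this, Matrix.det_mul, hdet, mul_one]
    have hYd : Y.det = X.det := det_conj hdet X
    have hYn : ‖Y‖ ≤ 7 / 5 := by
      have := norm_add_le (Y - X) X
      rw [sub_add_cancel, hn] at this; linarith
    have hlX : ‖l • X‖ ≤ 3 / 2 := by
      rw [norm_smul, hn, Real.norm_eq_abs, abs_of_pos (by linarith)]; linarith
    have k1 : |X.det - (l • X).det| ≤ 2 * κ := by
      rw [← hYd]
      refine (abs_det_sub_le Y (l • X)).trans ?_
      nlinarith [norm_nonneg (Y - l • X)]
    have k2 : (l • X).det = l ^ 2 * X.det := by simp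
    have k3 : |1 - l| * |X.det| ≤ 2 * κ := by
      rw [k2] at k1
      have : X.det - l ^ 2 * X.det = (1 + l) * ((1 - l) * X.det) := by ring
      rw [this, abs_mul, abs_mul, abs_of_pos (by linarith : 0 < 1 + l)] at k1
      nlinarith [mul_nonneg (abs_nonneg (1 - l)) (abs_nonneg X.det)]
    have k4 : |(X - Y).det - ((1 - l) • X).det| ≤ κ := by
      refine (abs_det_sub_le _ _).trans ?_
      have e : X - Y - (1 - l) • X = -(Y - l • X) := by rw [sub_smul, one_smul]; abel
      rw [e, norm_neg]
      have n1 : ‖(1 - l) • X‖ ≤ 1 / 2 := by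
        rw [norm_smul, hn, Real.norm_eq_abs, mul_one, abs_le]; constructor <;> linarith
      have n2 : ‖X - Y‖ ≤ 2 / 5 := by rw [norm_sub_rev]; exact hl4
      nlinarith [norm_nonneg (Y - l • X)]
    have k5 : |((1 - l) • X).det| ≤ κ := by
      have e : ((1 - l) • X).det = (1 - l) * ((1 - l) * X.det) := by
        simp; ring
      rw [e, abs_mul, abs_mul]
      have : |1 - l| ≤ 1 / 2 := by rw [abs_le]; constructor <;> linarith
      nlinarith [mul_nonneg (abs_nonneg (1 - l)) (abs_nonneg X.det)]
    have k6 : |(X - Y).det| ≤ 2 * κ := by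
      have := abs_add_le ((X - Y).det - ((1 - l) • X).det) (((1 - l) • X).det)
      rw [sub_add_cancel] at this
      linarith
    rw [e1] at hge
    nlinarith
  · rw [not_le] at hd
    -- an almost null vector `(c, s)` of `X`
    obtain ⟨c, s, hcs, hcs1, hv1, hv2⟩ := null_vec hX hn
    set H : M2 := !![c ^ 2 - s ^ 2, 2 * c * s; 2 * c * s, s ^ 2 - c ^ 2] with hH
    have hHt : H.trace = 0 := by simp [hH, Matrix.trace_fin_two]
    have hHd : H.det = -(c ^ 2 + s ^ 2) ^ 2 := by simp [hH, Matrix.det_fin_two]; ring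
    have hHd0 : H.det ≠ 0 := by rw [hHd]; apply neg_ne_zero.2; apply pow_ne_zero; linarith
    obtain ⟨g, hg, hge⟩ := h4 H hHt hHd0
    have hdet := hA.pow_det 4 g hg
    obtain ⟨l, hl1, hl2, hl3, hl4⟩ := hline (adj g) (hA.pow_inv 4 g hg)
    rw [adj_adj] at hl3 hl4
    have hgn := norm_le_two_of_near ((hA.near60 (by norm_num) hg).trans (by norm_num))
    set V : M2 := !![c, 0; s, 0] with hV
    set V' : M2 := !![0, c; 0, s] with hV'
    have nV : ‖V‖ ≤ 1 := by
      apply le_of_sq_le_sq _ zero_le_one; rw [nsq]; simp [hV]; linarith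
    have nV' : ‖V'‖ ≤ 1 := by
      apply le_of_sq_le_sq _ zero_le_one; rw [nsq]; simp [hV']; linarith
    set M := V + g * V' with hM
    have nM : ‖M‖ ≤ 3 := by
      refine (norm_add_le _ _).trans ?_
      have := norm_mul_le g V'
      nlinarith [norm_nonneg g, norm_nonneg V']
    have nXM : ‖X * M‖ ≤ 4 * β + 2 * κ := by
      have e : X * M = X * V + g * (l • (X * V') + (adj g * X * g - l • X) * V') := by
        have : X * (g * V') = g * (adj g * X * g * V') := by
          rw [← mul_assoc, ← mul_assoc g, ← mul_assoc g, ← mul_assoc g, mul_adj hdet, one_mul]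
        rw [hM, mul_add, this]; congr 2
        rw [sub_mul, smul_mul_assoc]; abel
      rw [e]
      refine (norm_add_le _ _).trans ?_
      have t1 : ‖l • (X * V') + (adj g * X * g - l • X) * V'‖ ≤ 3 / 2 * β + κ := by
        refine (norm_add_le _ _).trans (add_le_add ?_ ?_)
        · rw [norm_smul, Real.norm_eq_abs, abs_of_pos (by linarith), hv2]; gcongr
        · refine (norm_mul_le _ _).trans ?_
          nlinarith [norm_nonneg V', norm_nonneg (adj g * X * g - l • X)]
      have t2 := norm_mul_le g (l • (X * V') + (adj g * X * g - l • X) * V')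
      have t3 : ‖g‖ * ‖l • (X * V') + (adj g * X * g - l • X) * V'‖ ≤ 2 * (3 / 2 * β + κ) := by
        gcongr
      rw [hv1]
      linarith
    have hMd : |M.det| ≤ 3 * (4 * β + 2 * κ) := by
      have e : M.det • X = X * M * adj M := by
        rw [mul_assoc, adj_eq_adjugate, Matrix.mul_adjugate, mul_smul_comm, mul_one]
      have e2 : |M.det| = ‖M.det • X‖ := by rw [norm_smul, hn, mul_one, Real.norm_eq_abs]
      rw [e2, e]
      refine (norm_mul_le _ _).trans ?_
      rw [norm_adj]
      have := norm_nonneg (X * M)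
      nlinarith [norm_nonneg M]
    set w := c * (-s * g 0 0 + c * g 0 1) + s * (-s * g 1 0 + c * g 1 1) with hw
    have hdH : |(H * g - g * H).det| = 4 * |M.det| * |w| := by
      have : (H * g - g * H).det = 4 * M.det * w := det_refl g c s
      rw [this, abs_mul, abs_mul]; norm_num
    have hw8 : |w| ≤ 8 := by
      have gb : ∀ i j, |g i j| ≤ 2 := fun i j => (abs_entry_le g i j).trans hgn
      have a1 : |c| ≤ 1 := abs_le_one_iff_mul_self_le_one.2 (by nlinarith)
      have a2 : |s| ≤ 1 := abs_le_one_iff_mul_self_le_one.2 (by nlinarith)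
      have t : ∀ a b d : ℝ, |a| ≤ 1 → |b| ≤ 1 → |d| ≤ 2 → |a * b * d| ≤ 2 := by
        intro a b d ha hb hd
        rw [abs_mul, abs_mul]
        have : |a| * |b| ≤ 1 := mul_le_one₀ ha (abs_nonneg _) hb
        nlinarith [abs_nonneg d, mul_nonneg (abs_nonneg a) (abs_nonneg b)]
      have b1 := abs_le.1 (t c s _ a1 a2 (gb 0 0))
      have b2 := abs_le.1 (t c c _ a1 a1 (gb 0 1))
      have b3 := abs_le.1 (t s s _ a2 a2 (gb 1 0))
      have b4 := abs_le.1 (t s c _ a2 a1 (gb 1 1))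
      rw [abs_le]; constructor <;> nlinarith
    rw [hdH, hHd, abs_neg, abs_of_nonneg (by positivity)] at hge
    have : 1 / 4 ≤ (c ^ 2 + s ^ 2) ^ 2 := by nlinarith
    have h5 : |M.det| * |w| ≤ 3 * (4 * β + 2 * κ) * 8 :=
      mul_le_mul hMd hw8 (abs_nonneg _) (by positivity)
    nlinarith

/-- The homogeneous form of `far_conj`. -/
lemma far_conj' {A : Set M2} (hA : Sym A) {η : ℝ} (hη : 0 < η) (hη1 : η ≤ 1) (h4 : RealIrr A η)
    {X : M2} (hX : X.trace = 0) :
    ∃ g ∈ A ^ 4, η ^ 2 / 1000 * ‖X‖ ^ 2 ≤ ‖br X (g * X * adj g)‖ := by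
  by_cases h0 : X = 0
  · refine ⟨1, hA.one_mem 2, ?_⟩
    rw [h0]; simp
  have hn : 0 < ‖X‖ := norm_pos_iff.2 h0
  obtain ⟨g, hg, h⟩ := far_conj hA hη hη1 h4 (X := ‖X‖⁻¹ • X) (by simp [hX])
    (by rw [norm_smul, norm_inv, norm_norm, inv_mul_cancel₀ hn.ne'])
  refine ⟨g, hg, ?_⟩
  have e : br (‖X‖⁻¹ • X) (g * (‖X‖⁻¹ • X) * adj g) = (‖X‖⁻¹ ^ 2) • br X (g * X * adj g) := by
    unfold br
    simp only [smul_mul_assoc, mul_smul_comm, smul_smul, smul_sub, pow_two]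
  rw [e, norm_smul, Real.norm_eq_abs, abs_of_nonneg (by positivity), inv_pow] at h
  rwa [inv_mul_eq_div, le_div_iff₀ (by positivity)] at h

/-- Some triple of conjugates of `X` by short words is quantitatively a basis. -/
lemma irr_unit {A : Set M2} (hA : Sym A) {η : ℝ} (hη : 0 < η) (hη1 : η ≤ 1) (h4 : RealIrr A η)
    {X : M2} (hX : X.trace = 0) (hn : ‖X‖ = 1) :
    ∃ a ∈ A ^ 8, ∃ b ∈ A ^ 8,
      (η ^ 2 / 1000) ^ 3 / 40 ≤ |(X * (a * X * adj a) * (b * X * adj b)).trace| := by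
  obtain ⟨g, hg, hge⟩ := far_conj hA hη hη1 h4 hX hn
  set κ := η ^ 2 / 1000 with hκ
  have hκ0 : 0 < κ := by positivity
  set Y := br X (g * X * adj g) with hY
  have hYt : Y.trace = 0 := br_trace _ _
  have h48 : A ^ 4 ⊆ A ^ 8 := hA.pow_mono (by norm_num) ⟨2, rfl⟩
  by_contra! hcon
  have hsm : ∀ b ∈ A ^ 8, |(Y * (b * X * adj b)).trace| ≤ κ ^ 3 / 20 := by
    intro b hb
    have := hcon g (h48 hg) b hb
    rw [trace3_eq_br hX (by rw [trace_conj (hA.pow_det _ _ hg), hX])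
      (by rw [trace_conj (hA.pow_det _ _ hb), hX]), abs_div, abs_two, ← hY] at this
    linarith
  obtain ⟨h, hh, hhe⟩ := far_conj' hA hη hη1 h4 hYt
  have hhd := hA.pow_det _ _ hh
  have hgd := hA.pow_det _ _ hg
  set P := h * X * adj h with hP
  set P' := (h * g) * X * adj (h * g) with hP'
  have hhg : h * g ∈ A ^ 8 := pow_mem_mul hh hg
  have e1 : h * Y * adj h = br P P' := by
    have k : adj h * h = 1 := adj_mul hhd
    rw [hY, hP, hP', br, br, adj_mul_rev]
    have a1 : h * X * adj h * (h * g * X * (adj g * adj h)) = h * (X * (g * X * adj g)) * adj h := by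
      calc _ = h * X * (adj h * h) * (g * X * (adj g * adj h)) := by noncomm_ring
        _ = _ := by rw [k]; noncomm_ring
    have a2 : h * g * X * (adj g * adj h) * (h * X * adj h) = h * ((g * X * adj g) * X) * adj h := by
      calc _ = h * g * X * adj g * (adj h * h) * X * adj h := by noncomm_ring
        _ = _ := by rw [k]; noncomm_ring
    rw [a1, a2]; noncomm_ring
  have nconj : ∀ x ∈ A ^ 8, ‖x * X * adj x‖ ≤ 4 := by
    intro x hx
    have n2 := norm_le_two_of_near ((hA.near60 (by norm_num) hx).trans (by norm_num))
    have := norm_mul_le (x * X) (adj x)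
    have := norm_mul_le x X
    rw [norm_adj] at *
    rw [hn] at *
    nlinarith [norm_nonneg x, norm_nonneg (x * X)]
  have hPt : P.trace = 0 := by rw [hP, trace_conj hhd, hX]
  have hPt' : P'.trace = 0 := by rw [hP', trace_conj (hA.pow_det _ _ hhg), hX]
  rw [e1, double_br hYt hPt hPt'] at hhe
  have t1 : |(Y * P).trace| ≤ κ ^ 3 / 20 := hsm h (h48 hh)
  have t2 : |(Y * P').trace| ≤ κ ^ 3 / 20 := hsm (h * g) hhg
  have t3 : ‖P‖ ≤ 4 := nconj h (h48 hh)
  have t4 : ‖P'‖ ≤ 4 := nconj (h * g) hhg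
  have bd : ∀ (r : ℝ) (M : M2), |r| ≤ κ ^ 3 / 20 → ‖M‖ ≤ 4 → ‖(2 * r) • M‖ ≤ 8 * (κ ^ 3 / 20) := by
    intro r M hr hM
    rw [norm_smul, Real.norm_eq_abs, abs_mul, abs_two]
    nlinarith [norm_nonneg M, abs_nonneg r]
  have t5 := norm_sub_le ((2 * (Y * P).trace) • P') ((2 * (Y * P').trace) • P)
  have t6 := bd _ _ t1 t4
  have t7 := bd _ _ t2 t3
  have t8 : κ ^ 3 ≤ κ * ‖Y‖ ^ 2 := by
    have : κ ^ 2 ≤ ‖Y‖ ^ 2 := pow_le_pow_left₀ hκ0.le hge 2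
    nlinarith
  have : 0 < κ ^ 3 := by positivity
  have hhe' : κ * ‖Y‖ ^ 2 ≤ ‖(2 * (Y * P).trace) • P' - (2 * (Y * P').trace) • P‖ := hhe
  linarith

/-- Every traceless `X` and two of its conjugates by short words form a basis with controlled
determinant; the homogeneous form of `irr_unit`. -/
lemma irr_of_realIrr {A : Set M2} (hA : Sym A) {η Q : ℝ} (hη : 0 < η) (hη1 : η ≤ 1)
    (h4 : RealIrr A η) (hQ : 40 * (1000 / η ^ 2) ^ 3 ≤ Q) (X : M2) (hX : X.trace = 0) :
    ∃ a ∈ A ^ 8, ∃ b ∈ A ^ 8,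
      ‖X‖ ^ 3 ≤ Q * |(X * (a * X * adj a) * (b * X * adj b)).trace| := by
  by_cases h0 : X = 0
  · refine ⟨1, hA.one_mem 4, 1, hA.one_mem 4, ?_⟩
    rw [h0]; simp
  have hn : 0 < ‖X‖ := norm_pos_iff.2 h0
  obtain ⟨a, ha, b, hb, h⟩ := irr_unit hA hη hη1 h4 (X := ‖X‖⁻¹ • X) (by simp [hX])
    (by rw [norm_smul, norm_inv, norm_norm, inv_mul_cancel₀ hn.ne'])
  refine ⟨a, ha, b, hb, ?_⟩
  simp only [smul_mul_assoc, mul_smul_comm, smul_smul, Matrix.trace_smul] at h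
  rw [smul_eq_mul, abs_mul, abs_of_nonneg (by positivity)] at h
  set T := |(X * (a * X * adj a) * (b * X * adj b)).trace|
  have e : ‖X‖⁻¹ * (‖X‖⁻¹ * ‖X‖⁻¹) * T = T / ‖X‖ ^ 3 := by field_simp
  rw [e, le_div_iff₀ (by positivity)] at h
  have e2 : 40 * (1000 / η ^ 2) ^ 3 * ((η ^ 2 / 1000) ^ 3 / 40 * ‖X‖ ^ 3) = ‖X‖ ^ 3 := by
    field_simp
  rw [← e2]
  exact mul_le_mul hQ h (by positivity) ((by positivity : (0:ℝ) ≤ 40 * (1000 / η ^ 2) ^ 3).trans hQ)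

/-! ### Counting in sets of bounded tripling -/

/-- Pigeonhole principle for covering numbers. -/
lemma N_pigeon {S : Set M2} (hne : S.Nonempty) {e : ℝ} (he : 0 < e) {ι : Type*} (T : Finset ι)
    (F : ι → Set M2) (hcov : ∀ s ∈ S, ∃ t ∈ T, s ∈ F t) (hF : ∀ t ∈ T, Bdd (F t)) :
    ∃ t ∈ T, N e S ≤ T.card * N e (F t) := by
  obtain ⟨s, hs⟩ := hne
  obtain ⟨t0, ht0, -⟩ := hcov s hs
  obtain ⟨t, ht, hmax⟩ := Finset.exists_max_image T (fun t => N e (F t)) ⟨t0, ht0⟩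
  exact ⟨t, ht, N_fiber he T F hcov fun t' ht' => ⟨hF t' ht', hmax t' ht'⟩⟩

/-- Some ball of radius `e'` contains a fair share of a bounded set. -/
lemma local_pigeon {S : Set M2} (hne : S.Nonempty) (x0 : M2) {e e' l : ℝ} (he : 0 < e)
    (he' : 0 < e') (hl : 0 ≤ l) (h : ∀ s ∈ S, ‖s - x0‖ ≤ l * e') :
    ∃ t, N e S ≤ (2 * l + 3) ^ 4 * N e (S ∩ {x | ‖x - t‖ ≤ e'}) := by
  obtain ⟨T, hT, hcov⟩ := grid x0 he' hl
  obtain ⟨t, ht, hle⟩ := N_pigeon hne he T (fun t => S ∩ {x | ‖x - t‖ ≤ e'})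
    (fun s hs => by
      obtain ⟨t, ht, h'⟩ := hcov s (h s hs)
      exact ⟨t, ht, hs, h'⟩)
    (fun t _ => (Bdd_ball t e').mono Set.inter_subset_right)
  exact ⟨t, hle.trans (mul_le_mul_of_nonneg_right hT (N_nonneg _ _))⟩

/-- The consequences of the hypotheses of the product theorem and of bounded tripling that drive
the argument: up to a factor `Q`, words of length `2 m` occupy no more space than `A` at every
scale between `δ` and `1`, and any traceless matrix has three conjugates by short words which
form a basis with determinant at least `1 / Q`. -/
structure Good (A : Set M2) (δ Q : ℝ) (m : ℕ) : Prop extends Sym A where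
  δ0 : 0 < δ
  Q10 : 10 ^ 10 ≤ Q
  m100 : 100 ≤ m
  nrm : ∀ g ∈ A ^ (2 * m), ‖g‖ ≤ Q
  cov : ∀ e, δ ≤ e → e ≤ 1 → N e (A ^ (2 * m)) ≤ Q * N e A
  irr : ∀ X : M2, X.trace = 0 → ∃ a ∈ A ^ 8, ∃ b ∈ A ^ 8,
    ‖X‖ ^ 3 ≤ Q * |(X * (a * X * adj a) * (b * X * adj b)).trace|

lemma conj_sub (a X Y : M2) : a * X * adj a - a * Y * adj a = a * (X - Y) * adj a := by
  noncomm_ring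

lemma conj_sub_one {a : M2} (ha : a.det = 1) (X : M2) :
    a * X * adj a - 1 = a * (X - 1) * adj a := by
  rw [mul_sub, sub_mul, mul_one, mul_adj ha]

section good
variable {A : Set M2} {δ Q : ℝ} {m : ℕ} (hG : Good A δ Q m)
include hG

lemma Good.Q0 : 0 < Q := lt_of_lt_of_le (by norm_num) hG.Q10
lemma Good.Q1 : 1 ≤ Q := le_trans (by norm_num) hG.Q10

lemma Good.scale {S : Set M2} (hS : Bdd S) {e : ℝ} (he : 0 < e) (k : ℕ) :
    N e S ≤ Q ^ (4 * k + 1) * N (Q ^ k * e) S := by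
  have hQ := hG.Q10
  have h1 : 1 ≤ Q ^ k := one_le_pow₀ hG.Q1
  refine (N_scale hS he (l := Q ^ k) (by linarith)).trans
    (mul_le_mul_of_nonneg_right ?_ (N_nonneg _ _))
  calc (2 * Q ^ k + 3) ^ 4 ≤ (5 * Q ^ k) ^ 4 := by gcongr; linarith
    _ = 625 * Q ^ (4 * k) := by rw [mul_pow, ← pow_mul, mul_comm k]; norm_num
    _ ≤ Q * Q ^ (4 * k) := by
        have := hG.Q0; gcongr; linarith
    _ = Q ^ (4 * k + 1) := by ring

lemma Good.scale_le {S : Set M2} (hS : Bdd S) {e e' : ℝ} (he' : 0 < e') (k : ℕ)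
    (h : e' ≤ Q ^ k * e) (he : 0 < e) : N e S ≤ Q ^ (4 * k + 1) * N e' S :=
  (hG.scale hS he k).trans (mul_le_mul_of_nonneg_left (N_anti hS he' h)
    (pow_nonneg hG.Q0.le _))

/-- Words in a small ball around `1` are few: the translates of the ball by an `r`-separated
subset of `A` are almost disjoint. -/
lemma Good.r1 {k : ℕ} (hk : k + 1 ≤ m) {S : Set M2} (hS : S ⊆ A ^ (2 * k)) {e r : ℝ}
    (he : δ ≤ e) (her : e ≤ r) (he1 : e ≤ 1) (hr : ∀ x ∈ S, ‖x - 1‖ ≤ r) :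
    N e S * N r A ≤ Q ^ 3 * N e A := by
  have hA := hG.toSym
  have e0 : 0 < e := hG.δ0.trans_le he
  have r0 : 0 < r := e0.trans_le her
  obtain ⟨a1, ha1⟩ := hA.ne
  have hd := hA.det a1 ha1
  set G : Set M2 := (fun x => adj a1 * x) '' A with hGd
  have hG2 : G ⊆ A ^ 2 := by
    rintro _ ⟨x, hx, rfl⟩
    rw [pow_two]; exact Set.mul_mem_mul (hA.inv _ ha1) hx
  have hAG : A ⊆ (fun x => a1 * x) '' G := by
    intro x hx
    refine ⟨adj a1 * x, ⟨x, hx, rfl⟩, ?_⟩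
    simp only
    rw [← mul_assoc, mul_adj hd, one_mul]
  have bG : Bdd G := (hA.bdd_pow 2).mono hG2
  have c1 : N r A ≤ 7 ^ 4 * N r G := by
    refine (N_mono ?_ hAG r0).trans (N_translate bG (hA.norm_le ha1) r0)
    obtain ⟨R, hR⟩ := bG
    refine ⟨‖a1‖ * R, ?_⟩
    rintro _ ⟨x, hx, rfl⟩
    exact (norm_mul_le _ _).trans (by gcongr; exact hR x hx)
  have c2 := prod_count (X := S) bG (R := 2) (by norm_num) e0 her
    (fun g hg => hA.pow_det 2 g (hG2 hg))
    (fun g hg => norm_le_two_of_near ((hA.near60 (by norm_num) (hG2 hg)).trans (by norm_num))) hr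
  have c3 : N e (G * S) ≤ Q * N e A := by
    refine le_trans ?_ (hG.cov e he he1)
    refine N_mono (hA.bdd_pow _) ?_ e0
    refine (Set.mul_subset_mul hG2 hS).trans ?_
    rw [← pow_add]
    exact hA.pow_mono (by omega) ⟨m - k - 1, by omega⟩
  have hQ := hG.Q10
  have q0 := hG.Q0
  calc N e S * N r A ≤ N e S * (7 ^ 4 * N r G) := by gcongr; exact N_nonneg _ _
    _ = 7 ^ 4 * (N r G * N e S) := by ring
    _ ≤ 7 ^ 4 * ((4 * 2 + 7) ^ 8 * (Q * N e A)) := by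
        exact mul_le_mul_of_nonneg_left
          (c2.trans (mul_le_mul_of_nonneg_left c3 (by norm_num))) (by norm_num)
    _ = (7 ^ 4 * 15 ^ 8) * (Q * N e A) := by norm_num; ring
    _ ≤ Q ^ 2 * (Q * N e A) := by
        have := N_nonneg e A
        gcongr
        have : (10 ^ 10 : ℝ) ^ 2 ≤ Q ^ 2 := by gcongr
        refine le_trans (by norm_num) this
    _ = Q ^ 3 * N e A := by ring

lemma Good.conj_norm {k : ℕ} (hk : k ≤ 60) {a : M2} (ha : a ∈ A ^ k) (X : M2) :
    ‖a * X * adj a‖ ≤ 4 * ‖X‖ := by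
  have n2 := norm_le_two_of_near ((hG.toSym.near60 hk ha).trans (by norm_num))
  have h1 := norm_mul_le (a * X) (adj a)
  have h2 := norm_mul_le a X
  rw [norm_adj] at h1
  calc _ ≤ _ := h1
    _ ≤ (2 * ‖X‖) * 2 := by
        gcongr
        exact h2.trans (by gcongr)
    _ = _ := by ring

lemma Good.conj_norm' {k : ℕ} (hk : k ≤ 60) {a : M2} (ha : a ∈ A ^ k) (X : M2) :
    ‖X‖ ≤ 4 * ‖a * X * adj a‖ := by
  have hd := hG.toSym.pow_det k a ha
  have h := hG.conj_norm hk (hG.toSym.pow_inv k a ha) (a * X * adj a)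
  have e : adj a * (a * X * adj a) * adj (adj a) = X := by
    rw [adj_adj]
    calc _ = (adj a * a) * X * (adj a * a) := by noncomm_ring
      _ = X := by rw [adj_mul hd]; simp
  rwa [e] at h

lemma Good.conj_mem {k l : ℕ} {a g : M2} (ha : a ∈ A ^ k) (hg : g ∈ A ^ l) :
    a * g * adj a ∈ A ^ (k + l + k) :=
  pow_mem_mul (pow_mem_mul ha hg) (hG.toSym.pow_inv k a ha)

end good

/-! ### Curves and conjugacy classes -/

/-- A telescoping estimate for products of three matrices near the identity. -/
lemma prod3_sub {x y z x' y' z' : M2} {r d : ℝ} (hr1 : r ≤ 1 / 10)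
    (hy : ‖y - 1‖ ≤ r) (hz : ‖z - 1‖ ≤ r) (hx' : ‖x' - 1‖ ≤ r)
    (hy' : ‖y' - 1‖ ≤ r) (dx : ‖x - x'‖ ≤ d) (dy : ‖y - y'‖ ≤ d) (dz : ‖z - z'‖ ≤ d) :
    ‖(x - x') + (y - y') + (z - z')‖ ≤ ‖x * y * z - x' * y' * z'‖ + 10 * r * d := by
  have r0 : 0 ≤ r := (norm_nonneg _).trans hy
  have d0 : 0 ≤ d := (norm_nonneg _).trans dx
  have e : (x - x') + (y - y') + (z - z') = (x * y * z - x' * y' * z') -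
      ((x - x') * ((y - 1) * (z - 1)) + (x - x') * (y - 1) + (x - x') * (z - 1)
        + ((x' - 1) * (y - y') * (z - 1) + (x' - 1) * (y - y') + (y - y') * (z - 1))
        + ((x' - 1) * (y' - 1) * (z - z') + (x' - 1) * (z - z') + (y' - 1) * (z - z'))) := by
    noncomm_ring
  rw [e]
  refine (norm_sub_le _ _).trans ?_
  gcongr
  have m2 : ∀ {a b : M2} {s t : ℝ}, ‖a‖ ≤ s → ‖b‖ ≤ t → ‖a * b‖ ≤ s * t := by
    intro a b s t ha hb
    exact (norm_mul_le a b).trans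
      (mul_le_mul ha hb (norm_nonneg _) ((norm_nonneg _).trans ha))
  have t1 := m2 dx (m2 hy hz)
  have t2 := m2 dx hy
  have t3 := m2 dx hz
  have t4 := m2 (m2 hx' dy) hz
  have t5 := m2 hx' dy
  have t6 := m2 dy hz
  have t7 := m2 (m2 hx' hy') dz
  have t8 := m2 hx' dz
  have t9 := m2 hy' dz
  have hrd : 0 ≤ r * d := by positivity
  have h2 : r * (r * d) ≤ 1 / 10 * (r * d) := by gcongr
  refine (norm_add₃_le).trans ?_
  refine (add_le_add (add_le_add norm_add₃_le norm_add₃_le) norm_add₃_le).trans ?_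
  nlinarith

section good
variable {A : Set M2} {δ Q : ℝ} {m : ℕ} (hG : Good A δ Q m)
include hG

set_option maxHeartbeats 1000000 in
/-- A set of words close to a one-parameter subgroup: three conjugates of it are transversal, so
the product map is injective at the appropriate scale. -/
lemma Good.curve {X : M2} (hX : X.trace = 0) (hn : ‖X‖ = 1) {S : Set M2} (hS : S ⊆ A ^ 2)
    {ρ q E : ℝ} (hq : 0 < q) (hqE : q ≤ E) (hρ0 : 0 ≤ ρ) (hρ : Q ^ 2 * ρ ≤ 1)
    (h1 : ∀ s ∈ S, ‖s - 1‖ ≤ ρ) (hl : ∀ s ∈ S, ∃ c : ℝ, ‖dv s - c • X‖ ≤ E) :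
    N (Q ^ 2 * E) S ^ 3 ≤ N q (A ^ (2 * 19) ∩ {x | ‖x - 1‖ ≤ Q * ρ}) := by
  have hA := hG.toSym
  have hQ := hG.Q10
  have q0 := hG.Q0
  have E0 : 0 < E := hq.trans_le hqE
  have hρ1 : ρ ≤ 1 / 10 ^ 20 := by
    have : (10 ^ 10 : ℝ) ^ 2 ≤ Q ^ 2 := by gcongr
    rw [le_div_iff₀ (by norm_num)]; nlinarith
  obtain ⟨a, ha, b, hb, hab⟩ := hG.irr X hX
  rw [hn, one_pow] at hab
  have had := hA.pow_det _ _ ha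
  have hbd := hA.pow_det _ _ hb
  obtain ⟨P, hPS, hsep, -, hcard⟩ := exists_sep ((hA.bdd_pow 2).mono hS)
    (by positivity : 0 < Q ^ 2 * E)
  refine (pow_le_pow_left₀ (N_nonneg _ _) hcard 3).trans ?_
  have key := inj_count (P ×ˢ P ×ˢ P)
    (fun p => p.1 * (a * p.2.1 * adj a) * (b * p.2.2 * adj b))
    (W := A ^ (2 * 19) ∩ {x | ‖x - 1‖ ≤ Q * ρ})
    ((hA.bdd_pow _).mono Set.inter_subset_left) hq ?_ ?_
  · rw [Finset.card_product, Finset.card_product] at key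
    push_cast at key
    calc (P.card : ℝ) ^ 3 = P.card * (P.card * P.card) := by ring
      _ ≤ _ := key
  · rintro ⟨x, y, z⟩ hp
    simp only [Finset.mem_product] at hp
    have hx := hPS hp.1
    have hy := hPS hp.2.1
    have hz := hPS hp.2.2
    constructor
    · have := pow_mem_mul (pow_mem_mul (hS hx) (hG.conj_mem ha (hS hy))) (hG.conj_mem hb (hS hz))
      exact this
    · simp only [Set.mem_ofPred_eq]
      have y1 : ‖a * y * adj a - 1‖ ≤ 4 * ρ := by
        rw [conj_sub_one had]
        exact (hG.conj_norm (by norm_num) ha _).trans (by linarith [h1 y hy])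
      have z1 : ‖b * z * adj b - 1‖ ≤ 4 * ρ := by
        rw [conj_sub_one hbd]
        exact (hG.conj_norm (by norm_num) hb _).trans (by linarith [h1 z hz])
      have x1 := h1 x hx
      set y' := a * y * adj a
      set z' := b * z * adj b
      have e : x * y' * z' - 1 = (x - 1) * (y' * z') + (y' - 1) * z' + (z' - 1) := by noncomm_ring
      have ny : ‖y'‖ ≤ 2 := norm_le_two_of_near (by linarith)
      have nz : ‖z'‖ ≤ 2 := norm_le_two_of_near (by linarith)
      rw [e]
      refine norm_add₃_le.trans ?_
      have t1 : ‖(x - 1) * (y' * z')‖ ≤ ρ * (2 * 2) :=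
        (norm_mul_le _ _).trans (mul_le_mul x1 ((norm_mul_le _ _).trans
          (mul_le_mul ny nz (norm_nonneg _) (by norm_num))) (norm_nonneg _) hρ0)
      have t2 : ‖(y' - 1) * z'‖ ≤ 4 * ρ * 2 :=
        (norm_mul_le _ _).trans (mul_le_mul y1 nz (norm_nonneg _) (by linarith))
      nlinarith
  · rintro ⟨x, y, z⟩ hp ⟨x', y', z'⟩ hp' hd
    simp only [Finset.mem_product] at hp hp'
    simp only at hd
    have hx := hPS hp.1
    have hy := hPS hp.2.1
    have hz := hPS hp.2.2
    have hx' := hPS hp'.1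
    have hy' := hPS hp'.2.1
    have hz' := hPS hp'.2.2
    have gen : ∀ w ∈ S, ∀ g ∈ A ^ 8, ‖g * w * adj g - 1‖ ≤ 4 * ρ := by
      intro w hw g hg
      rw [conj_sub_one (hA.pow_det _ _ hg)]
      exact (hG.conj_norm (by norm_num) hg _).trans (by linarith [h1 w hw])
    -- the maximal distance between corresponding factors
    set D := max ‖x - x'‖ (max ‖y - y'‖ ‖z - z'‖) with hD
    have D0 : 0 ≤ D := (norm_nonneg _).trans (le_max_left _ _)
    have dx : ‖x - x'‖ ≤ D := le_max_left _ _
    have dy : ‖y - y'‖ ≤ D := (le_max_left _ _).trans (le_max_right _ _)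
    have dz : ‖z - z'‖ ≤ D := (le_max_right _ _).trans (le_max_right _ _)
    have main := prod3_sub (x := x) (y := a * y * adj a) (z := b * z * adj b) (x' := x')
      (y' := a * y' * adj a) (z' := b * z' * adj b) (r := 4 * ρ) (d := 4 * D) (by linarith)
      (gen y hy a ha) (gen z hz b hb) (by linarith [h1 x' hx']) (gen y' hy' a ha)
      (by linarith)
      (by rw [conj_sub]; exact (hG.conj_norm (by norm_num) ha _).trans (by linarith))
      (by rw [conj_sub]; exact (hG.conj_norm (by norm_num) hb _).trans (by linarith))
    rw [conj_sub, conj_sub] at main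
    have hlin : ∀ w ∈ S, ∀ w' ∈ S, ∃ c : ℝ, ‖dv (w - w') - c • X‖ ≤ 2 * E := by
      intro w hw w' hw'
      obtain ⟨c, hc⟩ := hl w hw
      obtain ⟨c', hc'⟩ := hl w' hw'
      refine ⟨c - c', ?_⟩
      have e : dv (w - w') - (c - c') • X = (dv w - c • X) - (dv w' - c' • X) := by
        rw [dv_sub, sub_smul]; abel
      rw [e]; exact (norm_sub_le _ _).trans (by linarith)
    obtain ⟨c1, hc1⟩ := hlin x hx x' hx'
    obtain ⟨c2, hc2⟩ := hlin y hy y' hy'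
    obtain ⟨c3, hc3⟩ := hlin z hz z' hz'
    have e2 : c1 • X + c2 • (a * X * adj a) + c3 • (b * X * adj b) =
        dv ((x - x') + a * (y - y') * adj a + b * (z - z') * adj b) -
        ((dv (x - x') - c1 • X) + a * (dv (y - y') - c2 • X) * adj a +
          b * (dv (z - z') - c3 • X) * adj b) := by
      have dadd : ∀ U V : M2, dv (U + V) = dv U + dv V := by
        intro U V
        have := dv_sub (U + V) V
        rw [add_sub_cancel_right] at this
        rw [this]; abel
      rw [dadd, dadd, dv_conj had, dv_conj hbd]
      simp only [mul_sub, sub_mul, mul_smul_comm, smul_mul_assoc]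
      abel
    have hη : ‖c1 • X + c2 • (a * X * adj a) + c3 • (b * X * adj b)‖ ≤
        2 * q + 160 * ρ * D + 18 * E := by
      rw [e2]
      refine (norm_sub_le _ _).trans ?_
      have t0 := norm_dv_le ((x - x') + a * (y - y') * adj a + b * (z - z') * adj b)
      have t1 := hG.conj_norm (by norm_num) ha (dv (y - y') - c2 • X)
      have t2 := hG.conj_norm (by norm_num) hb (dv (z - z') - c3 • X)
      have t3 := norm_add₃_le (a := dv (x - x') - c1 • X)
        (b := a * (dv (y - y') - c2 • X) * adj a) (c := b * (dv (z - z') - c3 • X) * adj b)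
      nlinarith
    have nXa := hG.conj_norm (by norm_num) ha X
    have nXb := hG.conj_norm (by norm_num) hb X
    rw [hn] at nXa nXb
    have hcb := coeff_bound hX (by rw [trace_conj had, hX]) (by rw [trace_conj hbd, hX])
      (R := 4) (by rw [hn]; norm_num) (by linarith) (by linarith) hη
    set η := 2 * q + 160 * ρ * D + 18 * E with hηd
    have η0 : 0 ≤ η := by positivity
    have tb : ∀ c : ℝ, |c| * |(X * (a * X * adj a) * (b * X * adj b)).trace| ≤ η * 4 ^ 2 →
        |c| ≤ 16 * Q * η := by
      intro c hc
      set T := |(X * (a * X * adj a) * (b * X * adj b)).trace|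
      calc |c| = |c| * 1 := by ring
        _ ≤ |c| * (Q * T) := by gcongr
        _ = Q * (|c| * T) := by ring
        _ ≤ Q * (η * 4 ^ 2) := by gcongr
        _ = 16 * Q * η := by ring
    have fin : ∀ w ∈ S, ∀ w' ∈ S, ∀ c : ℝ, ‖dv (w - w') - c • X‖ ≤ 2 * E → |c| ≤ 16 * Q * η →
        ‖w - w'‖ ≤ 2 * (16 * Q * η + 2 * E) := by
      intro w hw w' hw' c hc hc'
      have := norm_sub_le_dv (hA.pow_det _ _ (hS hw)) (hA.pow_det _ _ (hS hw'))
        (by linarith [h1 w hw]) (by linarith [h1 w' hw'])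
      rw [← dv_sub] at this
      have h3 := norm_add_le (dv (w - w') - c • X) (c • X)
      rw [sub_add_cancel, norm_smul, hn, Real.norm_eq_abs] at h3
      linarith
    have hDle : D ≤ 2 * (16 * Q * η + 2 * E) :=
      max_le (fin x hx x' hx' c1 hc1 (tb c1 hcb.1))
        (max_le (fin y hy y' hy' c2 hc2 (tb c2 hcb.2.1)) (fin z hz z' hz' c3 hc3 (tb c3 hcb.2.2)))
    have hDf : D ≤ Q ^ 2 * E := by
      have hQρ : Q * ρ ≤ 1 / 10 ^ 10 := by
        rw [le_div_iff₀ (by norm_num)]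
        have : Q * ρ * 10 ^ 10 ≤ Q * ρ * Q := by gcongr
        nlinarith
      have k1 : Q * ρ * D ≤ 1 / 10 ^ 10 * D := by gcongr
      have k2 : Q * q ≤ Q * E := by gcongr
      have k3 : 10 ^ 10 * (Q * E) ≤ Q ^ 2 * E := by
        rw [pow_two, mul_assoc]; gcongr
      have k4 : E ≤ Q * E := by nlinarith [hG.Q1]
      rw [hηd] at hDle
      linarith
    rw [hsep x hp.1 x' hp'.1 (dx.trans hDf), hsep y hp.2.1 y' hp'.2.1 (dy.trans hDf),
      hsep z hp.2.2 z' hp'.2.2 (dz.trans hDf)]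

/-- Bound for the number of short words in a small neighbourhood of `1` and close to a line. -/
lemma Good.curve_bound {X : M2} (hX : X.trace = 0) (hn : ‖X‖ = 1) {S : Set M2} (hS : S ⊆ A ^ 2)
    {ρ q : ℝ} (hq : δ ≤ q) (hqρ : q ≤ ρ) (hρ : Q ^ 2 * ρ ≤ 1)
    (h1 : ∀ s ∈ S, ‖s - 1‖ ≤ ρ) (hl : ∀ s ∈ S, ∃ c : ℝ, ‖dv s - c • X‖ ≤ 16 * q) :
    N q S ^ 3 * N ρ A ≤ Q ^ 50 * N q A := by
  have hA := hG.toSym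
  have hQ := hG.Q10
  have Q0 := hG.Q0
  have q0 : 0 < q := hG.δ0.trans_le hq
  have ρ0 : 0 < ρ := q0.trans_le hqρ
  have c1 := hG.curve hX hn hS q0 (E := 16 * q) (by linarith) ρ0.le hρ h1 hl
  have hρ1 : ρ ≤ 1 := by nlinarith [one_le_pow₀ hG.Q1 (n := 2)]
  have hm := hG.m100
  have hQρ : ρ ≤ Q * ρ := by nlinarith [hG.Q1]
  have c2 := hG.r1 (k := 19) (by omega)
    (S := A ^ (2 * 19) ∩ {x | ‖x - 1‖ ≤ Q * ρ}) Set.inter_subset_left hq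
    (r := Q * ρ) (by linarith) (by linarith) (fun x hx => hx.2)
  have c3 : N q S ≤ Q ^ 13 * N (Q ^ 2 * (16 * q)) S := by
    have := hG.scale_le (S := S) ((hA.bdd_pow 2).mono hS) (e' := Q ^ 2 * (16 * q))
      (by positivity) 3 (by
        have : Q ^ 3 * q = Q ^ 2 * (Q * q) := by ring
        rw [this]; gcongr; linarith) q0
    simpa using this
  have c4 : N ρ A ≤ Q ^ 5 * N (Q * ρ) A := by
    have := hG.scale hA.bdd ρ0 1
    simpa using this
  calc N q S ^ 3 * N ρ A
      ≤ (Q ^ 13 * N (Q ^ 2 * (16 * q)) S) ^ 3 * (Q ^ 5 * N (Q * ρ) A) := by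
        have := N_nonneg q S
        have := N_nonneg ρ A
        have := N_nonneg (Q ^ 2 * (16 * q)) S
        gcongr
    _ = Q ^ 44 * (N (Q ^ 2 * (16 * q)) S ^ 3 * N (Q * ρ) A) := by ring
    _ ≤ Q ^ 44 * (N q (A ^ (2 * 19) ∩ {x | ‖x - 1‖ ≤ Q * ρ}) * N (Q * ρ) A) := by
        have := N_nonneg (Q * ρ) A
        gcongr
    _ ≤ Q ^ 44 * (Q ^ 3 * N q A) := by gcongr
    _ = Q ^ 47 * N q A := by ring
    _ ≤ Q ^ 50 * N q A := by
        have := N_nonneg q A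
        gcongr
        · exact hG.Q1
        · norm_num

end good

lemma abs_trace_sub_le {p p' : M2} (hp : p.det = 1) (hp' : p'.det = 1) {r d : ℝ}
    (h : ‖p - 1‖ ≤ r) (h' : ‖p' - 1‖ ≤ r) (hd : ‖p - p'‖ ≤ d) : |(p - p').trace| ≤ r * d := by
  have e : (p - p').trace = (p' - 1).det - (p - 1).det := by
    have h1 := trace_sub_one hp
    have h2 := trace_sub_one hp'
    rw [Matrix.trace_sub] at *
    linarith
  have r0 : 0 ≤ r := (norm_nonneg _).trans h
  rw [e]
  refine (abs_det_sub_le _ _).trans ?_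
  have e2 : p' - 1 - (p - 1) = p' - p := by abel
  rw [e2, norm_sub_rev p' p]
  exact mul_le_mul (by linarith) hd (norm_nonneg _) r0

lemma trace_mul_dv (U w : M2) :
    (dv U * dv w).trace = (U * w).trace - w.trace / 2 * U.trace := by
  simp only [dv, Matrix.trace_fin_two, Matrix.mul_apply, Fin.sum_univ_two, Matrix.sub_apply,
    Matrix.smul_apply, Matrix.one_apply, smul_eq_mul]
  simp
  ring

set_option maxHeartbeats 1000000 in
/-- Three conjugate elements in general position are determined by the two quotients
`w₂⁻¹ w₁` and `w₂⁻¹ w₃`, up to a controlled loss: if two triples have almost the same quotients,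
then they differ by left multiplication by some `u`, and the equality of traces forces `u ≈ 1`. -/
lemma class_core {w₁ w₂ w₃ w₁' w₂' w₃' : M2} {s e κ Q τ : ℝ} (hs : 0 < s) (hs1 : s ≤ 1)
    (he : 0 < e) (hκ : 0 < κ) (hκQ : Q ^ 3 * κ ≤ 1) (hQ : 10 ^ 10 ≤ Q)
    (d1 : w₁.det = 1) (d2 : w₂.det = 1) (d3 : w₃.det = 1) (d1' : w₁'.det = 1)
    (d2' : w₂'.det = 1) (d3' : w₃'.det = 1)
    (t1 : w₁.trace = τ) (t2 : w₂.trace = τ) (t3 : w₃.trace = τ) (t1' : w₁'.trace = τ)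
    (t2' : w₂'.trace = τ) (t3' : w₃'.trace = τ)
    (n1 : ‖w₁ - 1‖ ≤ 32 * s) (n2 : ‖w₂ - 1‖ ≤ 32 * s) (n3 : ‖w₃ - 1‖ ≤ 32 * s)
    (n1' : ‖w₁' - 1‖ ≤ 32 * s) (n2' : ‖w₂' - 1‖ ≤ 32 * s) (n3' : ‖w₃' - 1‖ ≤ 32 * s)
    (hD1 : ‖adj w₂ * w₁ - adj w₂' * w₁'‖ ≤ 2 * e) (hD3 : ‖adj w₂ * w₃ - adj w₂' * w₃'‖ ≤ 2 * e)
    (hloc : ‖w₂' - w₂‖ ≤ 8 * κ * s)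
    (hT : s ^ 3 ≤ 128 * Q * |(dv w₁ * dv w₂ * dv w₃).trace|) :
    ‖w₁ - w₁'‖ ≤ 40 * Q ^ 2 * e ∧ ‖w₂ - w₂'‖ ≤ 40 * Q ^ 2 * e ∧ ‖w₃ - w₃'‖ ≤ 40 * Q ^ 2 * e := by
  have Q0 : 0 < Q := lt_of_lt_of_le (by norm_num) hQ
  have bnd : ∀ w : M2, ‖w - 1‖ ≤ 32 * s → ‖w‖ ≤ 34 := by
    intro w hw
    have := norm_add_le (w - 1) 1
    rw [sub_add_cancel] at this
    linarith [norm_one_le]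
  set U := w₂' * adj w₂ - 1 with hU
  have hUd : (w₂' * adj w₂).det = 1 := by rw [Matrix.det_mul, det_adj, d2, d2', mul_one]
  have hUn : ‖U‖ ≤ 272 * κ * s := by
    have e1 : U = (w₂' - w₂) * adj w₂ := by rw [hU, sub_mul, mul_adj d2]
    rw [e1]
    refine (norm_mul_le _ _).trans ?_
    rw [norm_adj]
    have := mul_le_mul hloc (bnd _ n2) (norm_nonneg _) (by positivity)
    linarith
  have κ1 : κ ≤ 1 / 10 ^ 30 := by
    have h3 : (10 ^ 10 : ℝ) ^ 3 ≤ Q ^ 3 := by gcongr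
    rw [le_div_iff₀ (by norm_num)]; nlinarith
  have κs : κ * s ≤ 1 / 10 ^ 30 := by nlinarith
  have hUn1 : ‖U‖ ≤ 1 / 10 := by linarith
  have htrU : |U.trace| ≤ 136 * κ * s * ‖U‖ := by
    have e1 : U.trace = -U.det := trace_sub_one hUd
    rw [e1, abs_neg]
    refine (abs_det_le U).trans ?_
    nlinarith [norm_nonneg U]
  -- traces of the quotients
  have quot : ∀ w w' : M2, w.det = 1 → w'.det = 1 → w.trace = τ → w'.trace = τ →
      ‖w - 1‖ ≤ 32 * s → ‖w' - 1‖ ≤ 32 * s → ‖adj w₂ * w - adj w₂' * w'‖ ≤ 2 * e →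
      |(U * w).trace| ≤ 4500 * s * e ∧ w - w' = w₂' * (adj w₂ * w - adj w₂' * w') - U * w := by
    intro w w' d d' t t' n n' hD
    have e1 : w - w' = w₂' * (adj w₂ * w - adj w₂' * w') - U * w := by
      have : w₂' * (adj w₂ * w - adj w₂' * w') = w₂' * adj w₂ * w - (w₂' * adj w₂') * w' := by
        noncomm_ring
      rw [this, mul_adj d2', hU, one_mul, sub_mul, one_mul]; abel
    refine ⟨?_, e1⟩
    set D := adj w₂ * w - adj w₂' * w' with hDd
    have e2 : (U * w).trace = ((w₂' - 1) * D).trace + D.trace := by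
      have e3 : U * w = (w₂' - 1) * D + D - (w - w') := by rw [e1]; noncomm_ring
      rw [e3, Matrix.trace_sub, Matrix.trace_sub, Matrix.trace_add, t, t']; ring
    have near : ∀ x y : M2, x.det = 1 → ‖x - 1‖ ≤ 32 * s → ‖y - 1‖ ≤ 32 * s →
        ‖adj x * y - 1‖ ≤ 2200 * s := by
      intro x y dx nx ny
      have e4 : adj x * y - 1 = adj x * ((y - 1) - (x - 1)) := by
        rw [← adj_mul dx]; noncomm_ring
      rw [e4]
      refine (norm_mul_le _ _).trans ?_
      rw [norm_adj]
      have h5 : ‖(y - 1) - (x - 1)‖ ≤ 64 * s := (norm_sub_le _ _).trans (by linarith)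
      have := mul_le_mul (bnd x nx) h5 (norm_nonneg _) (by norm_num)
      linarith
    have k1 := abs_trace_sub_le (by rw [Matrix.det_mul, det_adj, d2, d, mul_one])
      (by rw [Matrix.det_mul, det_adj, d2', d', mul_one]) (near w₂ w d2 n2 n)
      (near w₂' w' d2' n2' n') hD
    have k2 : |((w₂' - 1) * D).trace| ≤ 32 * s * (2 * e) :=
      (abs_trace_mul_le _ _).trans (mul_le_mul n2' hD (norm_nonneg _) (by positivity))
    rw [e2]
    refine (abs_add_le _ _).trans ?_
    have : 0 < s * e := by positivity
    linarith
  obtain ⟨q1, f1⟩ := quot w₁ w₁' d1 d1' t1 t1' n1 n1' hD1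
  obtain ⟨q3, f3⟩ := quot w₃ w₃' d3 d3' t3 t3' n3 n3' hD3
  have q2 : |(U * w₂).trace| ≤ 4500 * s * e := by
    have : U * w₂ = w₂' - w₂ := by
      rw [hU, sub_mul, mul_assoc, adj_mul d2, mul_one, one_mul]
    rw [this, Matrix.trace_sub, t2, t2', sub_self, abs_zero]; positivity
  have hτ : |τ| ≤ 51 := by
    rw [← t1]
    refine (abs_trace_le _).trans ?_
    linarith [bnd _ n1]
  have dvt : ∀ w : M2, w.trace = τ → |(U * w).trace| ≤ 4500 * s * e →
      |(dv U * dv w).trace| ≤ 4500 * s * e + 3600 * κ * s * ‖U‖ := by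
    intro w t h
    rw [trace_mul_dv, t]
    refine (abs_sub _ _).trans (add_le_add h ?_)
    rw [abs_mul, abs_div, abs_two]
    have h6 : |τ| / 2 ≤ 26 := by linarith
    have h7 := mul_le_mul h6 htrU (abs_nonneg _) (by norm_num)
    have : 0 ≤ κ * s * ‖U‖ := by positivity
    linarith
  have dvn : ∀ w : M2, ‖w - 1‖ ≤ 32 * s → ‖dv w‖ ≤ 32 * s := by
    intro w h
    rw [← dv_sub_one]; exact (norm_dv_le _).trans h
  have hdual := dual_norm (dv_trace w₁) (dv_trace w₂) (dv_trace w₃) (dv_trace U)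
    (dvn _ n1) (dvn _ n2) (dvn _ n3) (dvt _ t1 q1) (dvt _ t2 q2) (dvt _ t3 q3)
  have hdv : ‖dv U‖ ≤ 128 * Q * (3 * (4500 * e + 3600 * κ * ‖U‖) * 1024) := by
    have h8 : s ^ 3 * ‖dv U‖ ≤ s ^ 3 * (128 * Q * (3 * (4500 * e + 3600 * κ * ‖U‖) * 1024)) := by
      calc s ^ 3 * ‖dv U‖ ≤ (128 * Q * |(dv w₁ * dv w₂ * dv w₃).trace|) * ‖dv U‖ := by gcongr
        _ = 128 * Q * (|(dv w₁ * dv w₂ * dv w₃).trace| * ‖dv U‖) := by ring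
        _ ≤ 128 * Q * (3 * (4500 * s * e + 3600 * κ * s * ‖U‖) * (32 * s) ^ 2) := by gcongr
        _ = _ := by ring
    exact le_of_mul_le_mul_left h8 (by positivity)
  have hdU : dv (w₂' * adj w₂) = dv U := by rw [hU, dv_sub_one]
  have hUU : ‖U‖ ≤ 2 * ‖dv U‖ := by
    rw [← hdU]
    apply norm_sub_one_le hUd
    · have h9 : (w₂' * adj w₂).trace = U.trace + 2 := by
        rw [hU, Matrix.trace_sub, Matrix.trace_one]; simp
      have := abs_le.1 ((abs_trace_le U).trans (by linarith : _ ≤ (1 : ℝ)))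
      rw [h9]; linarith
    · rw [hdU]; exact (norm_dv_le U).trans (by linarith)
  have hQκ : Q * κ ≤ 1 / 10 ^ 20 := by
    have h3 : (10 ^ 10 : ℝ) ^ 2 ≤ Q ^ 2 := by gcongr
    rw [le_div_iff₀ (by norm_num)]
    calc Q * κ * 10 ^ 20 = Q * κ * (10 ^ 10) ^ 2 := by norm_num
      _ ≤ Q * κ * Q ^ 2 := by gcongr
      _ = Q ^ 3 * κ := by ring
      _ ≤ 1 := hκQ
  have hUf : ‖U‖ ≤ Q ^ 2 * e := by
    have h10 : Q * κ * ‖U‖ ≤ 1 / 10 ^ 20 * ‖U‖ := by gcongr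
    have h11 : 10 ^ 10 * (Q * e) ≤ Q ^ 2 * e := by
      rw [pow_two, mul_assoc]; gcongr
    have h12 : 0 < Q * e := by positivity
    linarith [norm_nonneg U]
  have hQ2 : e ≤ Q ^ 2 * e := by
    have : 1 ≤ Q ^ 2 := one_le_pow₀ (le_trans (by norm_num) hQ)
    nlinarith
  have hQ3 : 10 ^ 10 * e ≤ Q ^ 2 * e := by
    have : 10 ^ 10 ≤ Q ^ 2 := hQ.trans (le_self_pow₀ (le_trans (by norm_num) hQ) two_ne_zero)
    gcongr
  have fin : ∀ w D : M2, ‖w - 1‖ ≤ 32 * s → ‖D‖ ≤ 2 * e → ‖w₂' * D - U * w‖ ≤ 40 * Q ^ 2 * e := by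
    intro w D n hD
    refine (norm_sub_le _ _).trans ?_
    have a1 := (norm_mul_le w₂' D).trans
      (mul_le_mul (bnd _ n2') hD (norm_nonneg _) (by norm_num))
    have a2 := (norm_mul_le U w).trans (mul_le_mul hUf (bnd _ n) (norm_nonneg _) (by positivity))
    linarith
  refine ⟨?_, ?_, ?_⟩
  · rw [f1]; exact fin _ _ n1 hD1
  · have : w₂ - w₂' = w₂' * 0 - U * w₂ := by
      rw [hU, sub_mul, mul_assoc, adj_mul d2, mul_one, one_mul, mul_zero]; abel
    rw [this]; exact fin _ _ n2 (by rw [norm_zero]; positivity)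
  · rw [f3]; exact fin _ _ n3 hD3

lemma trace3_sub_le {X Y Z X' Y' Z' : M2} {R d : ℝ} (hY : ‖Y‖ ≤ R) (hZ : ‖Z‖ ≤ R)
    (hX' : ‖X'‖ ≤ R) (hY' : ‖Y'‖ ≤ R) (dx : ‖X - X'‖ ≤ d) (dy : ‖Y - Y'‖ ≤ d)
    (dz : ‖Z - Z'‖ ≤ d) :
    |(X * Y * Z).trace| ≤ |(X' * Y' * Z').trace| + 3 * R ^ 2 * d := by
  have R0 : 0 ≤ R := (norm_nonneg _).trans hY
  have d0 : 0 ≤ d := (norm_nonneg _).trans dx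
  have e : (X * Y * Z).trace = (X' * Y' * Z').trace + (((X - X') * Y * Z).trace +
      (X' * (Y - Y') * Z).trace + (X' * Y' * (Z - Z')).trace) := by
    rw [← Matrix.trace_add, ← Matrix.trace_add, ← Matrix.trace_add]; congr 1; noncomm_ring
  have m3 : ∀ (a b c : M2) (x y z : ℝ), ‖a‖ ≤ x → ‖b‖ ≤ y → ‖c‖ ≤ z →
      |(a * b * c).trace| ≤ x * y * z := by
    intro a b c x y z ha hb hc
    have x0 := (norm_nonneg _).trans ha
    have y0 := (norm_nonneg _).trans hb
    exact (abs_trace3_le a b c).trans (by gcongr)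
  rw [e]
  refine (abs_add_le _ _).trans (add_le_add_right ?_ _)
  refine (abs_add_three _ _ _).trans ?_
  have := m3 _ _ _ _ _ _ dx hY hZ
  have := m3 _ _ _ _ _ _ hX' dy hZ
  have := m3 _ _ _ _ _ _ hX' hY' dz
  linarith

section good
variable {A : Set M2} {δ Q : ℝ} {m : ℕ} (hG : Good A δ Q m)
include hG

set_option maxHeartbeats 1000000 in
/-- A piece of a conjugacy class of small diameter contains few elements: the map
`(v₁, v₂, v₃) ↦ (w₂⁻¹ w₁, w₂⁻¹ w₃)`, where the `wᵢ` are conjugates of the `vᵢ` by fixed short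
words, is injective at the appropriate scale. -/
lemma Good.class_inj {k : ℕ} {V : Set M2}
    {s q τ : ℝ} (s0 : 0 < s) (s1 : s ≤ 1) (q0 : 0 < q)
    (hV : V ⊆ A ^ (2 * (k + 1))) (hVt : ∀ v ∈ V, v.trace = τ) (hV1 : ∀ v ∈ V, ‖v - 1‖ ≤ 8 * s)
    (hVs : ∀ v ∈ V, s ≤ 4 * ‖dv v‖) (hVd : ∀ v ∈ V, ∀ v' ∈ V, ‖v - v'‖ ≤ 2 * (1 / Q ^ 3) * s)
    (hne : V.Nonempty) :
    N (Q ^ 3 * (s * q)) V ^ 3 ≤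
      N (s * q) (A ^ (2 * (2 * k + 18)) ∩ {x | ‖x - 1‖ ≤ Q * s}) ^ 2 := by
  have hA := hG.toSym
  have hQ := hG.Q10
  have Q0 := hG.Q0
  set e := s * q with he
  have e0 : 0 < e := by positivity
  set κ := 1 / Q ^ 3 with hκ
  have κ0 : 0 < κ := by positivity
  have κQ : Q ^ 3 * κ = 1 := by rw [hκ]; field_simp
  obtain ⟨v0, hv0⟩ := hne
  obtain ⟨a, ha, b, hb, hab⟩ := hG.irr (dv v0) (dv_trace v0)
  have had := hA.pow_det _ _ ha
  have hbd := hA.pow_det _ _ hb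
  have hVdet : ∀ v ∈ V, v.det = 1 := fun v hv => hA.pow_det _ _ (hV hv)
  have hdv : ∀ v ∈ V, ‖dv v‖ ≤ 8 * s := fun v hv => by
    rw [← dv_sub_one]; exact (norm_dv_le _).trans (hV1 v hv)
  obtain ⟨P, hPS, hsep, -, hcard⟩ := exists_sep ((hA.bdd_pow _).mono hV)
    (by positivity : 0 < Q ^ 3 * e)
  refine (pow_le_pow_left₀ (N_nonneg _ _) hcard 3).trans ?_
  have bW : Bdd (A ^ (2 * (2 * k + 18)) ∩ {x | ‖x - 1‖ ≤ Q * s}) :=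
    (hA.bdd_pow _).mono Set.inter_subset_left
  have n1a : ∀ g ∈ A ^ 8, ∀ v ∈ V, ‖g * v * adj g - 1‖ ≤ 32 * s := by
    intro g hg v hv
    rw [conj_sub_one (hA.pow_det _ _ hg)]
    exact (hG.conj_norm (by norm_num) hg _).trans (by linarith [hV1 v hv])
  have n1 : ∀ v ∈ V, ‖v - 1‖ ≤ 32 * s := fun v hv => (hV1 v hv).trans (by linarith)
  have quo : ∀ x y : M2, x.det = 1 → ‖x - 1‖ ≤ 32 * s → ‖y - 1‖ ≤ 32 * s →
      ‖adj x * y - 1‖ ≤ Q * s := by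
    intro x y dx nx ny
    have e4 : adj x * y - 1 = adj x * ((y - 1) - (x - 1)) := by
      rw [← adj_mul dx]; noncomm_ring
    rw [e4]
    refine (norm_mul_le _ _).trans ?_
    rw [norm_adj]
    have h5 : ‖(y - 1) - (x - 1)‖ ≤ 64 * s := (norm_sub_le _ _).trans (by linarith)
    have h6 : ‖x‖ ≤ 34 := by
      have := norm_add_le (x - 1) 1
      rw [sub_add_cancel] at this
      linarith [norm_one_le]
    have := mul_le_mul h6 h5 (norm_nonneg _) (by norm_num)
    nlinarith
  have key := inj_count2 (P ×ˢ P ×ˢ P)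
    (fun p => adj (a * p.2.1 * adj a) * p.1)
    (fun p => adj (a * p.2.1 * adj a) * (b * p.2.2 * adj b)) bW bW e0 e0 ?_ ?_ ?_
  · rw [Finset.card_product, Finset.card_product] at key
    push_cast at key
    calc (P.card : ℝ) ^ 3 = P.card * (P.card * P.card) := by ring
      _ ≤ _ := key
      _ = _ := by ring
  · rintro ⟨x, y, z⟩ hp
    simp only [Finset.mem_product] at hp
    have hx := hPS hp.1
    have hy := hPS hp.2.1
    have hy8 := hG.conj_mem ha (hV hy)
    constructor
    · have := pow_mem_mul (hA.pow_inv _ _ hy8) (hV hx)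
      exact hA.pow_mono (by omega) ⟨8, by omega⟩ this
    · exact quo _ _ (hA.pow_det _ _ hy8) (n1a a ha y hy) (n1 x hx)
  · rintro ⟨x, y, z⟩ hp
    simp only [Finset.mem_product] at hp
    have hz := hPS hp.2.2
    have hy := hPS hp.2.1
    have hy8 := hG.conj_mem ha (hV hy)
    constructor
    · have := pow_mem_mul (hA.pow_inv _ _ hy8) (hG.conj_mem hb (hV hz))
      have e5 : 8 + 2 * (k + 1) + 8 + (8 + 2 * (k + 1) + 8) = 2 * (2 * k + 18) := by ring
      rwa [e5] at this
    · exact quo _ _ (hA.pow_det _ _ hy8) (n1a a ha y hy) (n1a b hb z hz)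
  · rintro ⟨x, y, z⟩ hp ⟨x', y', z'⟩ hp' hd1 hd3
    simp only [Finset.mem_product] at hp hp'
    simp only at hd1 hd3
    have hx := hPS hp.1
    have hy := hPS hp.2.1
    have hz := hPS hp.2.2
    have hx' := hPS hp'.1
    have hy' := hPS hp'.2.1
    have hz' := hPS hp'.2.2
    have dca : ∀ v ∈ V, (a * v * adj a).det = 1 := fun v hv => by
      rw [det_conj had, hVdet v hv]
    have dcb : ∀ v ∈ V, (b * v * adj b).det = 1 := fun v hv => by
      rw [det_conj hbd, hVdet v hv]
    have tca : ∀ v ∈ V, (a * v * adj a).trace = τ := fun v hv => by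
      rw [trace_conj had, hVt v hv]
    have tcb : ∀ v ∈ V, (b * v * adj b).trace = τ := fun v hv => by
      rw [trace_conj hbd, hVt v hv]
    -- general position of the conjugates
    have hT : s ^ 3 ≤ 128 * Q * |(dv x * dv (a * y * adj a) * dv (b * z * adj b)).trace| := by
      rw [dv_conj had, dv_conj hbd]
      have dd : ∀ v ∈ V, ‖dv v0 - dv v‖ ≤ 2 * κ * s := fun v hv => by
        rw [← dv_sub]; exact (norm_dv_le _).trans (hVd v0 hv0 v hv)
      have ca := fun v (hv : v ∈ V) => hG.conj_norm (by norm_num) ha (dv v)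
      have cb := fun v (hv : v ∈ V) => hG.conj_norm (by norm_num) hb (dv v)
      have hκs : 0 ≤ κ * s := by positivity
      have := trace3_sub_le (X := dv v0) (Y := a * dv v0 * adj a) (Z := b * dv v0 * adj b)
        (X' := dv x) (Y' := a * dv y * adj a) (Z' := b * dv z * adj b) (R := 32 * s)
        (d := 8 * κ * s)
        ((ca v0 hv0).trans (by linarith [hdv v0 hv0])) ((cb v0 hv0).trans (by linarith [hdv v0 hv0]))
        ((hdv x hx).trans (by linarith)) ((ca y hy).trans (by linarith [hdv y hy]))
        ((dd x hx).trans (by linarith))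
        (by rw [conj_sub]; exact (hG.conj_norm (by norm_num) ha _).trans (by linarith [dd y hy]))
        (by rw [conj_sub]; exact (hG.conj_norm (by norm_num) hb _).trans (by linarith [dd z hz]))
      set T := |(dv x * (a * dv y * adj a) * (b * dv z * adj b)).trace|
      have h1 : s ^ 3 ≤ (4 * ‖dv v0‖) ^ 3 := pow_le_pow_left₀ s0.le (hVs v0 hv0) 3
      have h2 : ‖dv v0‖ ^ 3 ≤ Q * (T + 3 * (32 * s) ^ 2 * (8 * κ * s)) :=
        hab.trans (by gcongr)
      have h3 : Q * κ ≤ 1 / 10 ^ 20 := by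
        have h3 : (10 ^ 10 : ℝ) ^ 2 ≤ Q ^ 2 := by gcongr
        rw [le_div_iff₀ (by norm_num)]
        calc Q * κ * 10 ^ 20 = Q * κ * (10 ^ 10) ^ 2 := by norm_num
          _ ≤ Q * κ * Q ^ 2 := by gcongr
          _ = Q ^ 3 * κ := by ring
          _ ≤ 1 := κQ.le
      have h4 : Q * κ * s ^ 3 ≤ 1 / 10 ^ 20 * s ^ 3 := by gcongr
      have h5 : 0 < s ^ 3 := by positivity
      have h6 : (4 * ‖dv v0‖) ^ 3 = 64 * ‖dv v0‖ ^ 3 := by ring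
      have h7 : Q * (T + 3 * (32 * s) ^ 2 * (8 * κ * s)) = Q * T + 24576 * (Q * κ * s ^ 3) := by
        ring
      rw [h7] at h2
      rw [h6] at h1
      have h8 : 128 * Q * T = 128 * (Q * T) := by ring
      rw [h8]
      linarith
    have core := class_core s0 s1 e0 κ0 κQ.le hQ (hVdet x hx) (dca y hy) (dcb z hz) (hVdet x' hx')
      (dca y' hy') (dcb z' hz') (hVt x hx) (tca y hy) (tcb z hz) (hVt x' hx') (tca y' hy')
      (tcb z' hz') (n1 x hx) (n1a a ha y hy) (n1a b hb z hz) (n1 x' hx') (n1a a ha y' hy')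
      (n1a b hb z' hz') hd1 hd3
      (by rw [conj_sub]; exact (hG.conj_norm (by norm_num) ha _).trans
            (by linarith [hVd y' hy' y hy])) hT
    rw [conj_sub, conj_sub] at core
    obtain ⟨c1, c2, c3⟩ := core
    have hQe : 10 ^ 10 * (Q ^ 2 * e) ≤ Q ^ 3 * e := by
      have : Q ^ 3 * e = Q * (Q ^ 2 * e) := by ring
      rw [this]; gcongr
    have hQe0 : 0 < Q ^ 2 * e := by positivity
    have r2 := (hG.conj_norm' (by norm_num) ha (y - y'))
    have r3 := (hG.conj_norm' (by norm_num) hb (z - z'))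
    rw [hsep x hp.1 x' hp'.1 (by linarith), hsep y hp.2.1 y' hp'.2.1 (by linarith),
      hsep z hp.2.2 z' hp'.2.2 (by linarith)]

set_option maxHeartbeats 1000000 in
/-- Upper bound for the number of conjugates of a word `g` by elements of `A`. -/
lemma Good.class_bound {k : ℕ} (hk : 2 * k + 19 ≤ m) {g : M2} (hg : g ∈ A ^ (2 * k))
    (ht : 0 ≤ g.trace) {s q : ℝ} (hs : ‖dv g‖ = s) (s0 : 0 < s) (s1 : s ≤ 1) (q0 : 0 < q)
    (q1 : q ≤ 1) (he : δ ≤ s * q) :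
    N (s * q) ((fun a => a * g * adj a) '' A) ^ 3 * N s A ^ 2 ≤ Q ^ 100 * N (s * q) A ^ 2 := by
  have hA := hG.toSym
  have hQ := hG.Q10
  have Q0 := hG.Q0
  set e := s * q with hed
  have e0 : 0 < e := by positivity
  have es : e ≤ s := by rw [hed]; nlinarith
  set V := (fun a => a * g * adj a) '' A with hVd
  have hA1 : ∀ a ∈ A, a ∈ A ^ 1 := fun a ha => by rwa [pow_one]
  have hV : V ⊆ A ^ (2 * (k + 1)) := by
    rintro _ ⟨a, ha, rfl⟩
    have := hG.conj_mem (hA1 a ha) hg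
    have e1 : 1 + 2 * k + 1 = 2 * (k + 1) := by ring
    rwa [e1] at this
  have hg1 : ‖g - 1‖ ≤ 2 * s := by
    rw [← hs]; exact norm_sub_one_le (hA.pow_det _ _ hg) ht (by rw [hs]; exact s1)
  have hV1 : ∀ v ∈ V, ‖v - 1‖ ≤ 8 * s := by
    rintro _ ⟨a, ha, rfl⟩
    simp only
    rw [conj_sub_one (hA.det a ha)]
    exact (hG.conj_norm (k := 1) (by norm_num) (hA1 a ha) _).trans (by linarith)
  have hVt : ∀ v ∈ V, v.trace = g.trace := by
    rintro _ ⟨a, ha, rfl⟩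
    exact trace_conj (hA.det a ha) g
  have hVs : ∀ v ∈ V, s ≤ 4 * ‖dv v‖ := by
    rintro _ ⟨a, ha, rfl⟩
    simp only
    rw [dv_conj (hA.det a ha), ← hs]
    exact hG.conj_norm' (k := 1) (by norm_num) (hA1 a ha) _
  have hVne : V.Nonempty := hA.ne.image _
  have bV : Bdd V := (hA.bdd_pow _).mono hV
  obtain ⟨t, hloc⟩ := local_pigeon (S := V) hVne 1 e0 (e' := 1 / Q ^ 3 * s) (l := 8 * Q ^ 3)
    (by positivity) (by positivity) (fun v hv => (hV1 v hv).trans (by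
      apply le_of_eq; field_simp))
  set V0 := V ∩ {x | ‖x - t‖ ≤ 1 / Q ^ 3 * s} with hV0
  have V0V : V0 ⊆ V := Set.inter_subset_left
  have V0ne : V0.Nonempty := by
    by_contra hemp
    rw [Set.not_nonempty_iff_eq_empty] at hemp
    have h1 : N e V0 ≤ 0 := by
      have := N_le (e := e) (S := V0) ∅ (by rw [hemp]; simp)
      simpa using this
    have h2 := N_pos bV hVne e0
    have h3 : (2 * (8 * Q ^ 3) + 3) ^ 4 * N e V0 ≤ 0 :=
      mul_nonpos_of_nonneg_of_nonpos (by positivity) h1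
    linarith
  have hinj := hG.class_inj (V := V0) (τ := g.trace) (k := k) s0 s1 q0 (V0V.trans hV)
    (fun v hv => hVt v hv.1) (fun v hv => hV1 v hv.1) (fun v hv => hVs v hv.1)
    (fun v hv v' hv' => by
      have e2 : v - v' = (v - t) - (v' - t) := by abel
      rw [e2]
      have h1 : ‖v - t‖ ≤ 1 / Q ^ 3 * s := hv.2
      have h2 : ‖v' - t‖ ≤ 1 / Q ^ 3 * s := hv'.2
      exact (norm_sub_le _ _).trans (by linarith)) V0ne
  rw [← hed] at hinj
  set W := A ^ (2 * (2 * k + 18)) ∩ {x | ‖x - 1‖ ≤ Q * s} with hW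
  have sQ : s ≤ Q * s := by nlinarith [hG.Q1]
  have hr := hG.r1 (k := 2 * k + 18) (by omega) (S := W) Set.inter_subset_left he
    (r := Q * s) (by linarith) (by linarith) (fun x hx => hx.2)
  have c1 : N e V ≤ Q ^ 13 * N e V0 := by
    refine hloc.trans (mul_le_mul_of_nonneg_right ?_ (N_nonneg _ _))
    have h3 : 1 ≤ Q ^ 3 := one_le_pow₀ hG.Q1
    calc (2 * (8 * Q ^ 3) + 3) ^ 4 ≤ (19 * Q ^ 3) ^ 4 := by gcongr; linarith
      _ = 130321 * Q ^ 12 := by ring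
      _ ≤ Q * Q ^ 12 := by gcongr; linarith
      _ = Q ^ 13 := by ring
  have c2 : N e V0 ≤ Q ^ 13 * N (Q ^ 3 * e) V0 := by
    simpa using hG.scale (bV.mono V0V) e0 3
  have c3 : N s A ≤ Q ^ 5 * N (Q * s) A := by
    simpa using hG.scale hA.bdd s0 1
  have p1 := N_nonneg e V
  have p2 := N_nonneg e V0
  have p3 := N_nonneg (Q ^ 3 * e) V0
  have p4 := N_nonneg s A
  have p5 := N_nonneg (Q * s) A
  have p6 := N_nonneg e W
  have p7 := N_nonneg e A
  calc N e V ^ 3 * N s A ^ 2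
      ≤ (Q ^ 13 * (Q ^ 13 * N (Q ^ 3 * e) V0)) ^ 3 * (Q ^ 5 * N (Q * s) A) ^ 2 := by
        gcongr; exact c1.trans (by gcongr)
    _ = Q ^ 88 * (N (Q ^ 3 * e) V0 ^ 3 * N (Q * s) A ^ 2) := by ring
    _ ≤ Q ^ 88 * (N e W ^ 2 * N (Q * s) A ^ 2) := by gcongr
    _ = Q ^ 88 * (N e W * N (Q * s) A) ^ 2 := by ring
    _ ≤ Q ^ 88 * (Q ^ 3 * N e A) ^ 2 := by gcongr
    _ = Q ^ 94 * N e A ^ 2 := by ring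
    _ ≤ Q ^ 100 * N e A ^ 2 := by
        gcongr
        · exact hG.Q1
        · norm_num

end good

/-! ### Approximate centralizers are large -/

/-- The approximate centralizer of `g` in `A²` at the scale `q`: the elements whose traceless part is
within `16 q` of the line through `dv g`. Up to constants, this means that the commutator with `g`
has size at most `q ‖dv g‖`. -/
def Cent (A : Set M2) (g : M2) (q : ℝ) : Set M2 :=
  A ^ 2 ∩ {x | ∃ c : ℝ, ‖dv x - c • dv g‖ ≤ 16 * q}

/-- The elements of the approximate centralizer of `g` at distance at least `t` from `1`. -/
def Big (A : Set M2) (g : M2) (q t : ℝ) : Set M2 :=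
  Cent A g q ∩ {x | t ≤ ‖dv x‖}

lemma trace_nonneg_of_near {g : M2} (h : ‖g - 1‖ ≤ 1 / 2) : 1 ≤ g.trace := by
  have := (abs_le.1 (abs_trace_le (g - 1))).1
  have e : (g - 1).trace = g.trace - 2 := by simp
  rw [e] at this; linarith

section good
variable {A : Set M2} {δ Q : ℝ} {m : ℕ} (hG : Good A δ Q m)
include hG

set_option maxHeartbeats 1000000 in
/-- Orbit-stabilizer inequality for the conjugation map `a ↦ a g a⁻¹` on `A`, at scale `q`. -/
lemma Good.orbit_stab {g : M2} {s q : ℝ} (hs : ‖dv g‖ = s) (s0 : 0 < s) (q0 : 0 < q) :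
    N q A ≤ 7 ^ 4 * (N (s * q) ((fun a => a * g * adj a) '' A) * N q (Cent A g q)) := by
  have hA := hG.toSym
  set e := s * q with hed
  have e0 : 0 < e := by positivity
  set V := (fun a => a * g * adj a) '' A with hVd
  have hA1 : ∀ a ∈ A, a ∈ A ^ 1 := fun a ha => by rwa [pow_one]
  have bV : Bdd V := by
    refine ⟨4 * ‖g‖, ?_⟩
    rintro _ ⟨a, ha, rfl⟩
    exact hG.conj_norm (k := 1) (by norm_num) (hA1 a ha) _
  have bC : Bdd (Cent A g q) := (hA.bdd_pow 2).mono Set.inter_subset_left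
  obtain ⟨T, hT, hcov⟩ := N_exists bV e0
  rw [← hT]
  have hfib : ∀ t ∈ T, N q (A ∩ {a | ‖a * g * adj a - t‖ ≤ e}) ≤ 7 ^ 4 * N q (Cent A g q) := by
    intro t _
    rcases (A ∩ {a | ‖a * g * adj a - t‖ ≤ e}).eq_empty_or_nonempty with h0 | ⟨a0, ha0, ht0⟩
    · rw [h0]
      have := N_le (e := q) (S := (∅ : Set M2)) ∅ (by simp)
      have h2 := N_nonneg q (Cent A g q)
      simp only [Finset.card_empty, Nat.cast_zero] at this
      linarith
    have hd0 := hA.det a0 ha0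
    have hsub : A ∩ {a | ‖a * g * adj a - t‖ ≤ e} ⊆ (fun x => a0 * x) '' Cent A g q := by
      rintro a ⟨ha, hat⟩
      have hda := hA.det a ha
      refine ⟨adj a0 * a, ⟨?_, ?_⟩, ?_⟩
      · rw [pow_two]; exact Set.mul_mem_mul (hA.inv _ ha0) ha
      · have h1 : ‖a * g * adj a - a0 * g * adj a0‖ ≤ 2 * e := by
          have e1 : a * g * adj a - a0 * g * adj a0 =
            (a * g * adj a - t) - (a0 * g * adj a0 - t) := by abel
          rw [e1]
          simp only [Set.mem_ofPred_eq] at hat ht0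
          exact (norm_sub_le _ _).trans (by linarith)
        have e2 : (adj a0 * a) * g - g * (adj a0 * a) =
            adj a0 * (a * g * adj a - a0 * g * adj a0) * a := by
          calc (adj a0 * a) * g - g * (adj a0 * a)
              = (adj a0 * a) * g * 1 - 1 * g * (adj a0 * a) := by rw [mul_one, one_mul]
            _ = (adj a0 * a) * g * (adj a * a) - (adj a0 * a0) * g * (adj a0 * a) := by
                rw [adj_mul hda, adj_mul hd0]
            _ = _ := by noncomm_ring
        have h2 : ‖(adj a0 * a) * g - g * (adj a0 * a)‖ ≤ 8 * e := by
          rw [e2]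
          have n1 := hA.norm_le ha0
          have n2 := hA.norm_le ha
          calc _ ≤ ‖adj a0‖ * ‖a * g * adj a - a0 * g * adj a0‖ * ‖a‖ :=
                (norm_mul_le _ _).trans (by gcongr; exact norm_mul_le _ _)
            _ ≤ 2 * (2 * e) * 2 := by rw [norm_adj]; gcongr
            _ = 8 * e := by ring
        obtain ⟨c, hc⟩ := near_line (dv_trace g) (dv_trace (adj a0 * a))
        refine ⟨c, ?_⟩
        have e3 : br (dv g) (dv (adj a0 * a)) = -((adj a0 * a) * g - g * (adj a0 * a)) := by
          simp only [br, dv]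
          simp only [sub_mul, mul_sub, smul_mul_assoc, mul_smul_comm, one_mul, mul_one]
          module
        rw [e3, norm_neg, hs] at hc
        have h3 : s * ‖dv (adj a0 * a) - c • dv g‖ ≤ s * (8 * q) := by
          refine hc.trans (h2.trans (le_of_eq ?_))
          rw [hed]; ring
        exact (le_of_mul_le_mul_left h3 s0).trans (by linarith)
      · simp only
        rw [← mul_assoc, mul_adj hd0, one_mul]
    refine (N_mono ?_ hsub q0).trans (N_translate bC (hA.norm_le ha0) q0)
    obtain ⟨R, hR⟩ := bC
    refine ⟨‖a0‖ * R, ?_⟩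
    rintro _ ⟨x, hx, rfl⟩
    exact (norm_mul_le _ _).trans (by gcongr; exact hR x hx)
  have := N_fiber (S := A) q0 T (fun t => A ∩ {a | ‖a * g * adj a - t‖ ≤ e})
    (fun a ha => by
      obtain ⟨t, ht, h⟩ := hcov _ ⟨a, ha, rfl⟩
      exact ⟨t, ht, ha, h⟩)
    (fun t ht => ⟨hA.bdd.mono Set.inter_subset_left, hfib t ht⟩)
  linarith

/-- Lower bound for approximate centralizers, combining the orbit-stabilizer inequality with the
upper bound for conjugacy classes. -/
lemma Good.cent {k : ℕ} (hk : 2 * k + 19 ≤ m) {g : M2} (hg : g ∈ A ^ (2 * k))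
    (ht : 0 ≤ g.trace) {s q : ℝ} (hs : ‖dv g‖ = s) (s0 : 0 < s) (s1 : s ≤ 1) (q0 : 0 < q)
    (q1 : q ≤ 1) (he : δ ≤ s * q) :
    N q A ^ 3 * N s A ^ 2 ≤ Q ^ 102 * N (s * q) A ^ 2 * N q (Cent A g q) ^ 3 := by
  have hQ := hG.Q10
  have Q0 := hG.Q0
  have h1 := hG.orbit_stab (q := q) hs s0 q0
  have h2 := hG.class_bound hk hg ht hs s0 s1 q0 q1 he
  set V := (fun a => a * g * adj a) '' A
  have p1 := N_nonneg q A
  have p2 := N_nonneg s A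
  have p3 := N_nonneg (s * q) V
  have p4 := N_nonneg q (Cent A g q)
  have p5 := N_nonneg (s * q) A
  have h3 := mul_le_mul_of_nonneg_right h2 (pow_nonneg p4 3)
  have h4 : N q A ^ 3 * N s A ^ 2 ≤
      (7 ^ 4 * (N (s * q) V * N q (Cent A g q))) ^ 3 * N s A ^ 2 := by gcongr
  have h5 : (10 ^ 10 : ℝ) ^ 2 ≤ Q ^ 2 := by gcongr
  have h6 : (7 ^ 12 : ℝ) ≤ Q ^ 2 := le_trans (by norm_num) h5
  have h7 := mul_le_mul h6 h3 (by positivity) (by positivity)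
  calc _ ≤ _ := h4
    _ = 7 ^ 12 * (N (s * q) V ^ 3 * N s A ^ 2 * N q (Cent A g q) ^ 3) := by ring
    _ ≤ _ := h7
    _ = _ := by ring

set_option maxHeartbeats 1000000 in
/-- If `A` grows little between the scales `q` and `s q`, then most of the approximate
centralizer of `g` stays away from `1`. -/
lemma Good.dich {k : ℕ} (hk : 2 * k + 19 ≤ m) {g : M2} (hg : g ∈ A ^ (2 * k))
    (ht : 0 ≤ g.trace) {s q t : ℝ} (hs : ‖dv g‖ = s) (s0 : 0 < s) (s1 : s ≤ 1) (q0 : 0 < q)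
    (q1 : q ≤ 1) (he : δ ≤ s * q) (hqt : q ≤ 2 * t) (hQt : Q ^ 3 * t ≤ 1)
    (hsel : Q ^ 200 * N (s * q) A ^ 2 ≤ N q A ^ 2 * N s A ^ 2 * N t A) :
    t ^ 4 * N q A ≤ N q (Big A g q t) ^ 3 := by
  have hA := hG.toSym
  have hQ := hG.Q10
  have Q0 := hG.Q0
  have Q1 := hG.Q1
  have t0 : 0 < t := by linarith
  have hcent := hG.cent hk hg ht hs s0 s1 q0 q1 he
  have bA := hA.bdd
  have hne := hA.ne
  have a1 := N_pos bA hne q0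
  have a2 := N_pos bA hne s0
  have a3 := N_pos bA hne (mul_pos s0 q0)
  have a4 := N_pos bA hne t0
  set S : Set M2 := Cent A g q ∩ {x | ‖dv x‖ ≤ t} with hS
  have bC : Bdd (Cent A g q) := (hA.bdd_pow 2).mono Set.inter_subset_left
  have bS : Bdd S := bC.mono Set.inter_subset_left
  have bB : Bdd (Big A g q t) := bC.mono Set.inter_subset_left
  have hcov : N q (Cent A g q) ≤ N q S + N q (Big A g q t) := by
    refine (N_mono (S' := S ∪ Big A g q t) ?_ ?_ q0).trans (N_union bS bB q0)
    · refine bC.mono ?_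
      rintro x (hx | hx) <;> exact hx.1
    · intro x hx
      rcases le_total ‖dv x‖ t with h | h
      · exact Or.inl ⟨hx, h⟩
      · exact Or.inr ⟨hx, h⟩
  -- the part of the centralizer near `1`
  have hsmall : N q S ^ 3 * N t A ≤ Q ^ 51 * N q A := by
    have hline := hG.curve_bound (X := ‖dv g‖⁻¹ • dv g) (S := S) (ρ := 2 * t) (q := q)
      (by simp [dv_trace]) (by rw [norm_smul, norm_inv, norm_norm, hs]; field_simp)
      (fun x hx => hx.1.1) (by nlinarith) hqt (by
        have e1 : Q ^ 3 * t = Q * (Q ^ 2 * t) := by ring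
        rw [e1] at hQt
        have : 0 ≤ Q ^ 2 * t := by positivity
        nlinarith)
      (by
        rintro x ⟨hx, hxt⟩
        have hx1 := hA.near60 (by norm_num) hx.1
        have h3 : ‖dv x‖ ≤ 1 := by
          rw [← dv_sub_one]; exact (norm_dv_le _).trans (hx1.trans (by norm_num))
        have := norm_sub_one_le (hA.pow_det _ _ hx.1)
          (by linarith [trace_nonneg_of_near (hx1.trans (by norm_num))]) h3
        simp only [Set.mem_ofPred_eq] at hxt
        linarith)
      (by
        rintro x ⟨⟨-, c, hc⟩, -⟩
        refine ⟨c * s, ?_⟩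
        rw [hs, smul_smul, mul_assoc, mul_inv_cancel₀ s0.ne', mul_one]
        exact hc)
    have h2 := N_scale bA t0 (l := 2) (by norm_num)
    have p1 := N_nonneg q S
    calc N q S ^ 3 * N t A ≤ N q S ^ 3 * ((2 * 2 + 3) ^ 4 * N (2 * t) A) := by gcongr
      _ = (2 * 2 + 3) ^ 4 * (N q S ^ 3 * N (2 * t) A) := by ring
      _ ≤ Q * (Q ^ 50 * N q A) := by
          have := N_nonneg (2 * t) A
          gcongr
          linarith
      _ = _ := by ring
  have p1 := N_nonneg q S
  have p2 := N_nonneg q (Big A g q t)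
  have p3 := N_nonneg q (Cent A g q)
  -- comparison of the sizes of `A` at the various scales
  have hbig : Q ^ 98 * N q A ≤ N t A * N q (Cent A g q) ^ 3 := by
    have h1 : Q ^ 200 * (N q A ^ 3 * N s A ^ 2) ≤
        Q ^ 102 * (N q A ^ 2 * N s A ^ 2 * N t A) * N q (Cent A g q) ^ 3 := by
      calc Q ^ 200 * (N q A ^ 3 * N s A ^ 2)
          ≤ Q ^ 200 * (Q ^ 102 * N (s * q) A ^ 2 * N q (Cent A g q) ^ 3) := by gcongr
        _ = Q ^ 102 * (Q ^ 200 * N (s * q) A ^ 2) * N q (Cent A g q) ^ 3 := by ring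
        _ ≤ _ := by gcongr
    have h2 : (Q ^ 102 * N q A ^ 2 * N s A ^ 2) * (Q ^ 98 * N q A) ≤
        (Q ^ 102 * N q A ^ 2 * N s A ^ 2) * (N t A * N q (Cent A g q) ^ 3) := by
      linarith [h1]
    exact le_of_mul_le_mul_left h2 (by positivity)
  have hcb : N q (Cent A g q) ≤ 2 * N q (Big A g q t) := by
    by_contra hcon
    push Not at hcon
    have h1 : N q (Cent A g q) ≤ 2 * N q S := by linarith
    have h2 : Q ^ 98 * N q A ≤ 8 * (Q ^ 51 * N q A) := by
      calc Q ^ 98 * N q A ≤ N t A * N q (Cent A g q) ^ 3 := hbig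
        _ ≤ N t A * (2 * N q S) ^ 3 := by gcongr
        _ = 8 * (N q S ^ 3 * N t A) := by ring
        _ ≤ _ := by gcongr
    have h3 : Q ^ 98 = Q ^ 51 * Q ^ 47 := by ring
    have h4 : Q ≤ Q ^ 47 := by
      calc Q = Q ^ 1 := (pow_one Q).symm
        _ ≤ Q ^ 47 := pow_le_pow_right₀ Q1 (by norm_num)
    have h5 : 0 < Q ^ 51 * N q A := by positivity
    have h6 : Q * (Q ^ 51 * N q A) ≤ Q ^ 98 * N q A := by
      rw [h3]
      have : Q ^ 51 * Q ^ 47 * N q A = Q ^ 47 * (Q ^ 51 * N q A) := by ring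
      rw [this]; gcongr
    nlinarith
  have ht1 : t ≤ 1 := by nlinarith [one_le_pow₀ Q1 (n := 3)]
  have htA : t ^ 4 * N t A ≤ Q := by
    have h1 := N_ball_le (S := A) (1 : M2) (l := 1 / t) t0 (by positivity) (fun a ha => by
      have := hA.near a ha
      have e1 : 1 / t * t = 1 := by field_simp
      rw [e1]; linarith)
    calc t ^ 4 * N t A ≤ t ^ 4 * (2 * (1 / t) + 3) ^ 4 := by gcongr
      _ = (2 + 3 * t) ^ 4 := by rw [← mul_pow]; congr 1; field_simp
      _ ≤ (2 + 3 * 1) ^ 4 := by gcongr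
      _ ≤ Q := by norm_num; linarith
  have h1 : Q ^ 98 * (t ^ 4 * N q A) ≤ Q ^ 98 * N q (Big A g q t) ^ 3 := by
    calc Q ^ 98 * (t ^ 4 * N q A) = t ^ 4 * (Q ^ 98 * N q A) := by ring
      _ ≤ t ^ 4 * (N t A * N q (Cent A g q) ^ 3) := by gcongr
      _ ≤ t ^ 4 * (N t A * (2 * N q (Big A g q t)) ^ 3) := by gcongr
      _ = 8 * (t ^ 4 * N t A) * N q (Big A g q t) ^ 3 := by ring
      _ ≤ 8 * Q * N q (Big A g q t) ^ 3 := by gcongr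
      _ ≤ Q ^ 98 * N q (Big A g q t) ^ 3 := by
          gcongr
          calc 8 * Q ≤ Q * Q := by gcongr; linarith
            _ = Q ^ 2 := by ring
            _ ≤ Q ^ 98 := pow_le_pow_right₀ Q1 (by norm_num)
  exact le_of_mul_le_mul_left h1 (by positivity)

/-- The approximate centralizer is contained in a thin tube, hence has at most `O(1/q)`
elements at scale `q`. -/
lemma Good.cent_le {g : M2} {q : ℝ} (q0 : 0 < q) (q1 : q ≤ 1) (hg : dv g ≠ 0) :
    q * N q (Cent A g q) ≤ Q ^ 2 := by
  have hA := hG.toSym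
  have hQ := hG.Q10
  have hn : 0 < ‖dv g‖ := norm_pos_iff.2 hg
  -- cover by fibres of the coordinate along the line
  set X := ‖dv g‖⁻¹ • dv g with hX
  have hXn : ‖X‖ = 1 := by rw [hX, norm_smul, norm_inv, norm_norm]; field_simp
  set L : ℤ := ⌈17 / q⌉ with hL
  have hLle : (L : ℝ) ≤ 17 / q + 1 := (Int.ceil_lt_add_one _).le
  have hL0 : 0 ≤ L := Int.ceil_nonneg (by positivity)
  have hline : ∀ x ∈ Cent A g q, ∃ c : ℝ, ‖dv x - c • X‖ ≤ 16 * q := by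
    rintro x ⟨-, c, hc⟩
    refine ⟨c * ‖dv g‖, ?_⟩
    rw [hX, smul_smul, mul_assoc, mul_inv_cancel₀ hn.ne', mul_one]
    exact hc
  have := N_fiber (S := Cent A g q) (c := 4 * 10 ^ 8) q0 (Finset.Icc (-L) L)
    (fun i => Cent A g q ∩ {x | ‖dv x - ((i : ℝ) * q) • X‖ ≤ 17 * q})
    (fun x hx => by
      obtain ⟨c, hc⟩ := hline x hx
      have hdx : ‖dv x‖ ≤ 1 := by
        rw [← dv_sub_one]
        exact (norm_dv_le _).trans ((hA.near60 (by norm_num) hx.1).trans (by norm_num))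
      have hcb : |c| ≤ 17 := by
        have h1 := norm_sub_norm_le (c • X) (dv x)
        rw [norm_sub_rev, norm_smul, hXn, mul_one, Real.norm_eq_abs] at h1
        linarith
      refine ⟨round (c / q), ?_, hx, ?_⟩
      · have h2 : |c / q| ≤ 17 / q := by rw [abs_div, abs_of_pos q0]; gcongr
        rw [Finset.mem_Icc]
        have h3 := abs_le.1 h2
        have h4 : (17 / q : ℝ) ≤ L := Int.le_ceil _
        constructor
        · rw [round_eq, Int.le_floor]; push_cast; linarith [h3.1]
        · have : c / q ≤ L := h3.2.trans h4
          rw [round_eq, ← Int.lt_add_one_iff, Int.floor_lt]; push_cast; linarith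
      · have h5 := abs_sub_round (c / q)
        have e1 : dv x - ((round (c / q) : ℝ) * q) • X =
            (dv x - c • X) + (c - (round (c / q) : ℝ) * q) • X := by module
        simp only [Set.mem_ofPred_eq]
        rw [e1]
        refine (norm_add_le _ _).trans ?_
        rw [norm_smul, hXn, mul_one, Real.norm_eq_abs]
        have e2 : c - (round (c / q) : ℝ) * q = (c / q - round (c / q)) * q := by field_simp
        rw [e2, abs_mul, abs_of_pos q0]
        nlinarith)
    (fun i _ => by
      refine ⟨(hA.bdd_pow 2).mono fun x hx => hx.1.1, ?_⟩
      rcases (Cent A g q ∩ {x | ‖dv x - ((i : ℝ) * q) • X‖ ≤ 17 * q}).eq_empty_or_nonempty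
        with h0 | ⟨x0, hx0, h0⟩
      · rw [h0]
        have := N_le (e := q) (S := (∅ : Set M2)) ∅ (by simp)
        simp only [Finset.card_empty, Nat.cast_zero] at this
        exact this.trans (by norm_num)
      · refine (N_ball_le x0 (l := 68) q0 (by norm_num) ?_).trans ?_
        · rintro x ⟨hx, h⟩
          have n1 := hA.near60 (by norm_num) hx.1
          have n2 := hA.near60 (by norm_num) hx0.1
          have := norm_sub_le_dv (hA.pow_det _ _ hx.1) (hA.pow_det _ _ hx0.1)
            (n1.trans (by norm_num)) (n2.trans (by norm_num))
          have h3 : ‖dv x - dv x0‖ ≤ 34 * q := by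
            have e1 : dv x - dv x0 = (dv x - ((i : ℝ) * q) • X) - (dv x0 - ((i : ℝ) * q) • X) := by
              abel
            rw [e1]
            simp only [Set.mem_ofPred_eq] at h h0
            exact (norm_sub_le _ _).trans (by linarith)
          linarith
        · norm_num)
  have hcard : ((Finset.Icc (-L) L).card : ℝ) ≤ 2 * (17 / q + 1) + 1 := by
    rw [Int.card_Icc]
    have : ((L + 1 - -L).toNat : ℝ) = ((L + 1 - -L : ℤ) : ℝ) := by
      rw [← Int.cast_natCast, Int.toNat_of_nonneg (by omega)]
    rw [this]; push_cast; linarith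
  calc q * N q (Cent A g q) ≤ q * ((2 * (17 / q + 1) + 1) * (4 * 10 ^ 8)) := by
        gcongr
        exact this.trans (by gcongr)
    _ = (34 + 3 * q) * (4 * 10 ^ 8) := by field_simp; ring
    _ ≤ 37 * (4 * 10 ^ 8) := by gcongr; linarith
    _ ≤ 10 ^ 10 * 10 ^ 10 := by norm_num
    _ ≤ Q * Q := by gcongr
    _ = Q ^ 2 := by ring

end good

/-! ### Elements at prescribed distance from the identity -/

/-- Lengths of the words obtained by iterated commutators. -/
def wl : ℕ → ℕ
  | 0 => 1
  | k + 1 => 2 * wl k + 18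

lemma wl_mono : Monotone wl := monotone_nat_of_le_succ fun k => by simp only [wl]; omega

/-- If a `b`-separated subset of `A` has more than `lam⁻⁴` points, then two of them are so close that
their quotient is an element of `A²` whose distance from `1` lies between `b²` and `lam`. -/
lemma exists_start {A : Set M2} (hA : Sym A) {b lam : ℝ} (b0 : 0 ≤ b) (b1 : b ≤ 1 / 4) (l0 : 0 < lam)
    (l1 : lam ≤ 1 / 10) (X : Finset M2) (hXA : ↑X ⊆ A)
    (hsep : ∀ x ∈ X, ∀ x' ∈ X, x ≠ x' → b ≤ ‖x - x'‖) (hcard : (1 / lam) ^ 4 < X.card) :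
    ∃ h ∈ A ^ 2, b ^ 2 ≤ ‖dv h‖ ∧ ‖dv h‖ ≤ lam := by
  classical
  obtain ⟨T, hT, hcov⟩ := grid (1 : M2) (l := 8 / (1000 * lam)) (e := lam / 8) (by positivity)
    (by positivity)
  have hl : 8 / (1000 * lam) * (lam / 8) = 1 / 1000 := by field_simp
  choose! f hf1 hf2 using hcov
  have hlt : T.card < X.card := by
    have h1 : (2 * (8 / (1000 * lam)) + 3) ^ 4 ≤ (1 / lam) ^ 4 := by
      gcongr
      rw [← sub_nonneg]
      have : 1 / lam - (2 * (8 / (1000 * lam)) + 3) = (984 / 1000 - 3 * lam) / lam := by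
        field_simp; ring
      rw [this]
      apply div_nonneg _ l0.le
      linarith
    exact_mod_cast (hT.trans h1).trans_lt hcard
  have hn : ∀ x ∈ X, ‖x - 1‖ ≤ 8 / (1000 * lam) * (lam / 8) := fun x hx => by
    rw [hl]; exact hA.near x (hXA hx)
  obtain ⟨x, hx, y, hy, hxy, he⟩ := Finset.exists_ne_map_eq_of_card_lt_of_maps_to hlt
    (fun x hx => hf1 x (hn x hx))
  have hdx := hA.det x (hXA hx)
  have h1 : ‖y - x‖ ≤ lam / 4 := by
    have e1 : y - x = (y - f y) - (x - f x) := by rw [he]; abel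
    rw [e1]
    exact (norm_sub_le _ _).trans (by linarith [hf2 x (hn x hx), hf2 y (hn y hy)])
  have h2 : b ≤ ‖y - x‖ := hsep y hy x hx (Ne.symm hxy)
  have hmem : adj x * y ∈ A ^ 2 := by
    rw [pow_two]; exact Set.mul_mem_mul (hA.inv _ (hXA hx)) (hXA hy)
  have e2 : adj x * y - 1 = adj x * (y - x) := by rw [mul_sub, adj_mul hdx]
  have e3 : y - x = x * (adj x * y - 1) := by
    rw [e2, ← mul_assoc, mul_adj hdx, one_mul]
  have nx := hA.norm_le (hXA hx)
  have h3 : ‖adj x * y - 1‖ ≤ lam / 2 := by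
    rw [e2]
    refine (norm_mul_le _ _).trans ?_
    rw [norm_adj]
    nlinarith [norm_nonneg (y - x), norm_nonneg x]
  have h4 : b ≤ 2 * ‖adj x * y - 1‖ := by
    refine h2.trans ?_
    rw [e3]
    exact (norm_mul_le _ _).trans (by gcongr)
  have h5 : ‖dv (adj x * y)‖ ≤ ‖adj x * y - 1‖ := by rw [← dv_sub_one]; exact norm_dv_le _
  refine ⟨_, hmem, ?_, by linarith⟩
  have h6 := norm_sub_one_le (hA.pow_det _ _ hmem)
    (by linarith [trace_nonneg_of_near (h3.trans (by linarith))]) (by linarith)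
  nlinarith

section good
variable {A : Set M2} {δ Q : ℝ} {m : ℕ} (hG : Good A δ Q m)
include hG

/-- Some conjugate of `X` by a short word has large commutator with `Z`. -/
lemma Good.irr_br {X Z : M2} (hX : X.trace = 0) (hZ : Z.trace = 0) :
    ∃ a ∈ A ^ 8, ‖X‖ * ‖Z‖ ≤ 24 * Q * ‖br Z (a * X * adj a)‖ := by
  by_contra! hcon
  obtain ⟨a, ha, b, hb, hab⟩ := hG.irr X hX
  have h1 : (1 : M2) ∈ A ^ 8 := hG.toSym.one_mem 4
  have Q0 := hG.Q0
  have c1 := hcon 1 h1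
  have c2 := hcon a ha
  have c3 := hcon b hb
  rw [adj_one, one_mul, mul_one] at c1
  have hpos : 0 < ‖X‖ * ‖Z‖ := lt_of_le_of_lt (by positivity) c1
  have hX0 : 0 < ‖X‖ := by
    rcases (norm_nonneg X).eq_or_lt with h | h
    · rw [← h] at hpos; simp at hpos
    · exact h
  have hη : ∃ η, 24 * Q * η < ‖X‖ * ‖Z‖ ∧ ‖br Z X‖ ≤ η ∧ ‖br Z (a * X * adj a)‖ ≤ η ∧
      ‖br Z (b * X * adj b)‖ ≤ η := by
    refine ⟨max (‖br Z X‖) (max (‖br Z (a * X * adj a)‖) (‖br Z (b * X * adj b)‖)), ?_,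
      le_max_left _ _, (le_max_left _ _).trans (le_max_right _ _),
      (le_max_right _ _).trans (le_max_right _ _)⟩
    rcases max_choice (‖br Z X‖) (max (‖br Z (a * X * adj a)‖) (‖br Z (b * X * adj b)‖)) with h | h
    · rw [h]; exact c1
    · rw [h]
      rcases max_choice (‖br Z (a * X * adj a)‖) (‖br Z (b * X * adj b)‖) with h | h
      · rw [h]; exact c2
      · rw [h]; exact c3
  obtain ⟨η, hlt, e1, e2, e3⟩ := hη
  have := basis_br_norm hX (by rw [trace_conj (hG.toSym.pow_det _ _ ha)]; exact hX)
    (by rw [trace_conj (hG.toSym.pow_det _ _ hb)]; exact hX) hZ (R := 4 * ‖X‖) (by linarith)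
    (hG.conj_norm (by norm_num) ha X) (hG.conj_norm (by norm_num) hb X) e1 e2 e3
  have h2 : ‖X‖ ^ 3 * ‖Z‖ ≤ ‖X‖ ^ 2 * (24 * Q * η) := by
    calc ‖X‖ ^ 3 * ‖Z‖ ≤ (Q * |(X * (a * X * adj a) * (b * X * adj b)).trace|) * ‖Z‖ := by gcongr
      _ = Q * (|(X * (a * X * adj a) * (b * X * adj b)).trace| * ‖Z‖) := by ring
      _ ≤ Q * (3 / 2 * η * (4 * ‖X‖) ^ 2) := by gcongr
      _ = _ := by ring
  have h3 : ‖X‖ ^ 2 * (24 * Q * η) < ‖X‖ ^ 2 * (‖X‖ * ‖Z‖) := by gcongr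
  nlinarith

/-- Some conjugate of `X` by a short word has large inner product with `Z`. -/
lemma Good.irr_tr {X Z : M2} (hX : X.trace = 0) (hZ : Z.trace = 0) :
    ∃ a ∈ A ^ 8, ‖X‖ * ‖Z‖ ≤ 48 * Q * |(Z * (a * X * adj a)).trace| := by
  by_contra! hcon
  obtain ⟨a, ha, b, hb, hab⟩ := hG.irr X hX
  have h1 : (1 : M2) ∈ A ^ 8 := hG.toSym.one_mem 4
  have Q0 := hG.Q0
  have c1 := hcon 1 h1
  have c2 := hcon a ha
  have c3 := hcon b hb
  rw [adj_one, one_mul, mul_one] at c1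
  have hpos : 0 < ‖X‖ * ‖Z‖ := lt_of_le_of_lt (by positivity) c1
  have hX0 : 0 < ‖X‖ := by
    rcases (norm_nonneg X).eq_or_lt with h | h
    · rw [← h] at hpos; simp at hpos
    · exact h
  have hη : ∃ η, 48 * Q * η < ‖X‖ * ‖Z‖ ∧ |(Z * X).trace| ≤ η ∧ |(Z * (a * X * adj a)).trace| ≤ η ∧
      |(Z * (b * X * adj b)).trace| ≤ η := by
    refine ⟨max (|(Z * X).trace|) (max (|(Z * (a * X * adj a)).trace|)
      (|(Z * (b * X * adj b)).trace|)), ?_,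
      le_max_left _ _, (le_max_left _ _).trans (le_max_right _ _),
      (le_max_right _ _).trans (le_max_right _ _)⟩
    rcases max_choice (|(Z * X).trace|) (max (|(Z * (a * X * adj a)).trace|)
      (|(Z * (b * X * adj b)).trace|)) with h | h
    · rw [h]; exact c1
    · rw [h]
      rcases max_choice (|(Z * (a * X * adj a)).trace|) (|(Z * (b * X * adj b)).trace|) with h | h
      · rw [h]; exact c2
      · rw [h]; exact c3
  obtain ⟨η, hlt, e1, e2, e3⟩ := hη
  have := dual_norm hX (by rw [trace_conj (hG.toSym.pow_det _ _ ha)]; exact hX)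
    (by rw [trace_conj (hG.toSym.pow_det _ _ hb)]; exact hX) hZ (R := 4 * ‖X‖) (by linarith)
    (hG.conj_norm (by norm_num) ha X) (hG.conj_norm (by norm_num) hb X) e1 e2 e3
  have h2 : ‖X‖ ^ 3 * ‖Z‖ ≤ ‖X‖ ^ 2 * (48 * Q * η) := by
    calc ‖X‖ ^ 3 * ‖Z‖ ≤ (Q * |(X * (a * X * adj a) * (b * X * adj b)).trace|) * ‖Z‖ := by gcongr
      _ = Q * (|(X * (a * X * adj a) * (b * X * adj b)).trace| * ‖Z‖) := by ring
      _ ≤ Q * (3 * η * (4 * ‖X‖) ^ 2) := by gcongr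
      _ = _ := by ring
  have h3 : ‖X‖ ^ 2 * (48 * Q * η) < ‖X‖ ^ 2 * (‖X‖ * ‖Z‖) := by gcongr
  nlinarith

set_option maxHeartbeats 1000000 in
/-- Taking the commutator with a suitable conjugate of `h₁` shrinks `h` by a controlled factor. -/
lemma Good.shrink {h1 h : M2} {L : ℕ} {lam lam' b : ℝ} (hh1 : h1 ∈ A ^ 2)
    (hb1 : b ^ 2 ≤ ‖dv h1‖) (hl1 : ‖dv h1‖ ≤ lam) (hlam : 64 * lam ≤ lam') (hlam' : lam' ≤ 1 / 10)
    (b0 : 0 < b) (hbQ : b * Q ^ 2 ≤ 1) (hh : h ∈ A ^ (2 * L)) (ht : 0 ≤ h.trace)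
    (hs : ‖dv h‖ ≤ 1 / 10) :
    ∃ h' ∈ A ^ (2 * (2 * L + 18)), 0 ≤ h'.trace ∧ b ^ 3 * ‖dv h‖ ≤ ‖dv h'‖ ∧
      ‖dv h'‖ ≤ lam' * ‖dv h‖ := by
  have hA := hG.toSym
  have hQ := hG.Q10
  have Q0 := hG.Q0
  obtain ⟨a, ha, hbr⟩ := hG.irr_br (dv_trace h1) (dv_trace h)
  have had := hA.pow_det _ _ ha
  set u := a * h1 * adj a with hu
  have hum : u ∈ A ^ (8 + 2 + 8) := hG.conj_mem ha hh1
  have hud := hA.pow_det _ _ hum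
  have hhd := hA.pow_det _ _ hh
  have hu1 := hA.near60 (by norm_num) hum
  have hun := norm_le_two_of_near (hu1.trans (by norm_num))
  have hhn : ‖h‖ ≤ 2 :=
    norm_le_two_of_near ((norm_sub_one_le hhd ht (by linarith)).trans (by linarith))
  have hdu : dv u = a * dv h1 * adj a := dv_conj had h1
  rw [← hdu] at hbr
  have hduN : ‖dv u‖ ≤ 4 * lam := by
    rw [hdu]; exact (hG.conj_norm (by norm_num) ha _).trans (by linarith)
  set k := h * u * (adj h * adj u) with hk
  have hkm : k ∈ A ^ (2 * (2 * L + 18)) := by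
    have := pow_mem_mul (pow_mem_mul hh hum) (pow_mem_mul (hA.pow_inv _ _ hh) (hA.pow_inv _ _ hum))
    have e1 : 2 * L + (8 + 2 + 8) + (2 * L + (8 + 2 + 8)) = 2 * (2 * L + 18) := by ring
    rwa [e1] at this
  have ebr : h * u - u * h = br (dv h) (dv u) := by
    simp only [br, dv]
    simp only [sub_mul, mul_sub, smul_mul_assoc, mul_smul_comm, one_mul, mul_one]
    module
  have ek : k - 1 = br (dv h) (dv u) * (adj h * adj u) := by
    rw [← ebr, hk, sub_mul]
    congr 1
    calc (1 : M2) = u * (h * adj h) * adj u := by rw [mul_adj hhd, mul_one, mul_adj hud]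
      _ = _ := by noncomm_ring
  have ek2 : br (dv h) (dv u) = (k - 1) * (u * h) := by
    rw [ek]
    calc _ = br (dv h) (dv u) * (adj h * ((adj u * u) * h)) := by
          rw [adj_mul hud, one_mul, adj_mul hhd, mul_one]
      _ = _ := by noncomm_ring
  have n0 := norm_nonneg (dv h)
  have hl0 : 0 ≤ lam := (norm_nonneg _).trans hl1
  have nbr : ‖br (dv h) (dv u)‖ ≤ 2 * ‖dv h‖ * (4 * lam) :=
    (norm_br_le _ _).trans (by gcongr)
  have up : ‖k - 1‖ ≤ lam' / 2 * ‖dv h‖ := by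
    rw [ek]
    calc _ ≤ ‖br (dv h) (dv u)‖ * (‖adj h‖ * ‖adj u‖) :=
          (norm_mul_le _ _).trans (by gcongr; exact norm_mul_le _ _)
      _ ≤ (2 * ‖dv h‖ * (4 * lam)) * (2 * 2) := by
          rw [norm_adj, norm_adj]
          gcongr
      _ = 32 * lam * ‖dv h‖ := by ring
      _ ≤ _ := by gcongr; linarith
  have lo : ‖br (dv h) (dv u)‖ ≤ 4 * ‖k - 1‖ := by
    rw [ek2]
    calc _ ≤ ‖k - 1‖ * (‖u‖ * ‖h‖) := (norm_mul_le _ _).trans (by gcongr; exact norm_mul_le _ _)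
      _ ≤ ‖k - 1‖ * (2 * 2) := by gcongr
      _ = _ := by ring
  have ksmall : ‖k - 1‖ ≤ 1 / 2 := up.trans (by nlinarith)
  have ktr := trace_nonneg_of_near ksmall
  have kdv : ‖dv k‖ ≤ ‖k - 1‖ := by rw [← dv_sub_one]; exact norm_dv_le _
  have k3 := norm_sub_one_le (hA.pow_det _ _ hkm) (by linarith) (by linarith)
  refine ⟨k, hkm, by linarith, ?_, kdv.trans (up.trans ?_)⟩
  · have h2 : b ^ 2 * ‖dv h‖ ≤ Q ^ 2 * ‖dv k‖ := by
      calc b ^ 2 * ‖dv h‖ ≤ ‖dv h1‖ * ‖dv h‖ := by gcongr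
        _ ≤ 24 * Q * ‖br (dv h) (dv u)‖ := hbr
        _ ≤ 24 * Q * (4 * (2 * ‖dv k‖)) := by gcongr; exact lo.trans (by gcongr)
        _ = 192 * Q * ‖dv k‖ := by ring
        _ ≤ Q * Q * ‖dv k‖ := by gcongr; linarith
        _ = _ := by ring
    calc b ^ 3 * ‖dv h‖ = b * (b ^ 2 * ‖dv h‖) := by ring
      _ ≤ b * (Q ^ 2 * ‖dv k‖) := by gcongr
      _ = b * Q ^ 2 * ‖dv k‖ := by ring
      _ ≤ 1 * ‖dv k‖ := by gcongr
      _ = _ := one_mul _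
  · nlinarith

/-- There are words at distance comparable to `r` from `1`, up to a factor `b³`. -/
lemma Good.small {h1 : M2} {lam lam' b : ℝ} (hh1 : h1 ∈ A ^ 2)
    (hb1 : b ^ 2 ≤ ‖dv h1‖) (hl1 : ‖dv h1‖ ≤ lam) (hlam : 64 * lam ≤ lam') (hlam' : lam' ≤ 1 / 10)
    (b0 : 0 < b) (hbQ : b * Q ^ 2 ≤ 1) (b1 : b ≤ 1) {r : ℝ} (r0 : 0 < r) (r1 : r ≤ 1) {K : ℕ}
    (hK : lam' ^ (K + 1) ≤ r) :
    ∃ h ∈ A ^ (2 * wl K), 0 ≤ h.trace ∧ b ^ 3 * r ≤ ‖dv h‖ ∧ ‖dv h‖ ≤ r ∧ ‖dv h‖ ≤ 1 / 10 := by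
  have hA := hG.toSym
  have hl0 : 0 ≤ lam := (norm_nonneg _).trans hl1
  have hl0' : 0 ≤ lam' := by linarith
  have key : ∀ k, ∃ h ∈ A ^ (2 * wl k), 0 ≤ h.trace ∧ ‖dv h‖ ≤ 1 / 10 ∧
      ((b ^ 3 * r ≤ ‖dv h‖ ∧ ‖dv h‖ ≤ r) ∨ (r < ‖dv h‖ ∧ ‖dv h‖ ≤ lam' ^ (k + 1))) := by
    intro k
    induction k with
    | zero =>
      have hn := hA.near60 (by norm_num) hh1
      refine ⟨h1, hh1, by linarith [trace_nonneg_of_near (hn.trans (by norm_num))],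
        by linarith, ?_⟩
      rcases le_or_gt ‖dv h1‖ r with h | h
      · refine Or.inl ⟨?_, h⟩
        have : b ^ 3 * r ≤ b ^ 2 * 1 := by
          have : b ^ 3 = b ^ 2 * b := by ring
          have h2 : 0 ≤ b ^ 2 := by positivity
          rw [this]
          nlinarith [mul_le_mul b1 r1 r0.le zero_le_one]
        linarith
      · refine Or.inr ⟨h, ?_⟩
        simp only [zero_add, pow_one]; linarith
    | succ k ih =>
      obtain ⟨h, hm, ht, hs, hor⟩ := ih
      rcases hor with hor | ⟨hr, hle⟩
      · exact ⟨h, hA.pow_mem hm (by have := wl_mono (Nat.le_add_right k 1); omega), ht, hs, Or.inl hor⟩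
      obtain ⟨h', hm', ht', hlo, hup⟩ :=
        hG.shrink hh1 hb1 hl1 hlam hlam' b0 hbQ hm ht hs
      refine ⟨h', hm', ht', by nlinarith [norm_nonneg (dv h)], ?_⟩
      rcases le_or_gt ‖dv h'‖ r with h2 | h2
      · refine Or.inl ⟨le_trans ?_ hlo, h2⟩
        gcongr
      · refine Or.inr ⟨h2, hup.trans ?_⟩
        rw [pow_succ, mul_comm]
        gcongr
  obtain ⟨h, hm, ht, hs, hor⟩ := key K
  rcases hor with ⟨h2, h3⟩ | ⟨h2, h3⟩
  · exact ⟨h, hm, ht, h2, h3, hs⟩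
  · exact absurd (h3.trans hK) (not_le.2 h2)

end good

/-! ### Euclidean geometry of traceless matrices -/

lemma norm_add_sq' (X Y : M2) :
    ‖X + Y‖ ^ 2 = ‖X‖ ^ 2 + 2 * (Y * X.transpose).trace + ‖Y‖ ^ 2 := by
  rw [nsq, nsq, nsq]
  simp [Matrix.trace_fin_two, Matrix.mul_apply, Fin.sum_univ_two, Matrix.transpose_apply]
  ring

lemma norm_transpose' (X : M2) : ‖X.transpose‖ = ‖X‖ := by
  have h : ‖X.transpose‖ ^ 2 = ‖X‖ ^ 2 := by
    rw [nsq, nsq]; simp [Matrix.transpose_apply]; ring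
  exact (pow_left_inj₀ (norm_nonneg _) (norm_nonneg _) (by norm_num)).1 h

/-- Orthogonal projection to a line. -/
lemma exists_proj {u : M2} (hu : u ≠ 0) (p : M2) :
    ∃ c : ℝ, (u * (c • u - p).transpose).trace = 0 ∧ ∀ c0 : ℝ, ‖c • u - p‖ ≤ ‖c0 • u - p‖ := by
  have hn : 0 < ‖u‖ := norm_pos_iff.2 hu
  have hn2 : ‖u‖ ^ 2 ≠ 0 := by positivity
  set c := (u * p.transpose).trace / ‖u‖ ^ 2 with hc
  have hcu : c * ‖u‖ ^ 2 = (u * p.transpose).trace := by rw [hc]; field_simp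
  have huu : (u * u.transpose).trace = ‖u‖ ^ 2 := by
    rw [nsq]
    simp [Matrix.trace_fin_two, Matrix.mul_apply, Fin.sum_univ_two, Matrix.transpose_apply]
    ring
  have horth : (u * (c • u - p).transpose).trace = 0 := by
    rw [Matrix.transpose_sub, Matrix.transpose_smul, mul_sub, Matrix.trace_sub, mul_smul_comm,
      Matrix.trace_smul, huu, smul_eq_mul, hcu, sub_self]
  refine ⟨c, horth, fun c0 => ?_⟩
  have e : c0 • u - p = (c • u - p) + (c0 - c) • u := by module
  have h2 := norm_add_sq' (c • u - p) ((c0 - c) • u)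
  rw [← e, smul_mul_assoc, Matrix.trace_smul, horth, smul_zero, mul_zero, add_zero] at h2
  apply le_of_sq_le_sq _ (norm_nonneg _)
  nlinarith [sq_nonneg ‖(c0 - c) • u‖]

/-- For `x` far from the light cone, the commutator with `x` is bounded below on the vectors
whose transpose is orthogonal to `x`. -/
lemma br_lower {x v : M2} (hx : x.trace = 0) (hv : v.trace = 0)
    (hxv : (x * v.transpose).trace = 0) :
    2 * |x.det| * ‖v‖ ≤ ‖x‖ * ‖br x v.transpose‖ := by
  have hvt : v.transpose.trace = 0 := by rw [Matrix.trace_transpose]; exact hv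
  have h1 := double_br hx hx hvt
  rw [hxv, mul_zero, zero_smul, sub_zero] at h1
  have h2 : (x * x).trace = -2 * x.det := by
    have := entry11 hx
    simp [Matrix.det_fin_two, Matrix.trace_fin_two, Matrix.mul_apply, Fin.sum_univ_two, this]; ring
  have h3 := norm_br_le x (br x v.transpose)
  rw [h1, norm_smul, h2, norm_transpose', Real.norm_eq_abs] at h3
  have e : |2 * (-2 * x.det)| = 4 * |x.det| := by
    rw [show 2 * (-2 * x.det) = -(4 * x.det) by ring, abs_neg, abs_mul]; norm_num
  rw [e] at h3
  linarith

/-- A planar grid of directions around the unit vector `X0`, transverse to it. -/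
lemma plane_grid {X0 : M2} (hX : X0.trace = 0) (hn : ‖X0‖ = 1) {d : ℝ} (d0 : 0 < d) (n : ℕ)
    (hdn : d * n ≤ 1 / 8) : ∃ p : Fin n × Fin n → M2, (∀ i, (p i).trace = 0) ∧
      (∀ i, ‖p i - X0‖ ≤ 4 * (d * n)) ∧
      ∀ i j, i ≠ j → ∀ c c' : ℝ, |c| * d ≤ 10 * ‖c • p i - c' • p j‖ := by
  have h11 := entry11 hX
  have hsq := nsq X0
  rw [hn, h11] at hsq
  have hcast : ∀ i : Fin n, d * (i : ℝ) ≤ d * n := fun i => by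
    gcongr; exact_mod_cast i.2.le
  have hcast0 : ∀ i : Fin n, 0 ≤ d * (i : ℝ) := fun i => by positivity
  have habs : ∀ i j : Fin n, i ≠ j → (1 : ℝ) ≤ |(i : ℝ) - j| := by
    intro i j hij
    have : (i : ℤ) - j ≠ 0 := by
      intro h; apply hij; apply Fin.ext; omega
    have h2 := Int.one_le_abs this
    exact_mod_cast h2
  -- the estimate in coordinates: `m` is the largest coordinate, `y` another one
  have core : ∀ (mm y : ℝ), 1 / 2 ≤ |mm| → |y| ≤ 1 → ∀ (i i' : Fin n), i ≠ i' → ∀ (c c' η : ℝ),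
      |c * mm - c' * mm| ≤ η → |c * (y + d * i) - c' * (y + d * i')| ≤ η →
      |c| * d ≤ 10 * η := by
    intro mm y hm hy i i' hi c c' η h1 h2
    have h3 : |c - c'| ≤ 2 * η := by
      rw [← sub_mul, abs_mul] at h1
      nlinarith [abs_nonneg (c - c')]
    have h4 : c * d * ((i : ℝ) - i') = (c * (y + d * i) - c' * (y + d * i')) -
      (c - c') * (y + d * i') := by ring
    have h5 : |y + d * i'| ≤ 2 := by
      refine (abs_add_le _ _).trans ?_
      rw [abs_of_nonneg (hcast0 i')]
      linarith [hcast i']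
    have h6 : |c * d * ((i : ℝ) - i')| ≤ η + 2 * η * 2 := by
      rw [h4]
      refine (abs_sub _ _).trans (add_le_add h2 ?_)
      rw [abs_mul]
      exact mul_le_mul h3 h5 (abs_nonneg _) ((abs_nonneg _).trans h3)
    have hη : 0 ≤ η := (abs_nonneg _).trans h1
    have h7 : |c| * d * 1 ≤ |c * d * ((i : ℝ) - i')| := by
      rw [abs_mul, abs_mul, abs_of_pos d0]
      gcongr
      exact habs i i' hi
    linarith
  have hx1 : |X0 0 0| ≤ 1 := hn ▸ abs_entry_le X0 0 0
  have hy1 : |X0 0 1| ≤ 1 := hn ▸ abs_entry_le X0 0 1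
  have hz1 : |X0 1 0| ≤ 1 := hn ▸ abs_entry_le X0 1 0
  have nb : ∀ x y z : ℝ, |x| ≤ d * n → |y| ≤ d * n → |z| ≤ d * n →
      ‖(!![x, y; z, -x] : M2)‖ ≤ 4 * (d * n) := by
    intro x y z hx hy hz
    have dn0 : 0 ≤ d * n := by positivity
    apply le_of_sq_le_sq _ (by positivity)
    rw [nsq]
    simp
    have := sq_le_sq' (abs_le.1 hx).1 (abs_le.1 hx).2
    have := sq_le_sq' (abs_le.1 hy).1 (abs_le.1 hy).2
    have := sq_le_sq' (abs_le.1 hz).1 (abs_le.1 hz).2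
    nlinarith
  have hX0 : X0 = !![X0 0 0, X0 0 1; X0 1 0, -X0 0 0] := by
    ext i j; fin_cases i <;> fin_cases j <;> simp [h11]
  have hbig : 1 / 2 ≤ |X0 0 0| ∨ 1 / 2 ≤ |X0 0 1| ∨ 1 / 2 ≤ |X0 1 0| := by
    by_contra! hcon
    obtain ⟨a1, a2, a3⟩ := hcon
    have := sq_lt_sq' (abs_lt.1 a1).1 (abs_lt.1 a1).2
    have := sq_lt_sq' (abs_lt.1 a2).1 (abs_lt.1 a2).2
    have := sq_lt_sq' (abs_lt.1 a3).1 (abs_lt.1 a3).2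
    nlinarith
  rcases hbig with hb | hb | hb
  · refine ⟨fun i => !![X0 0 0, X0 0 1 + d * (i.1 : ℕ); X0 1 0 + d * (i.2 : ℕ), -X0 0 0],
      fun i => by simp [Matrix.trace_fin_two], fun i => ?_, fun i j hij c c' => ?_⟩
    · have e : (!![X0 0 0, X0 0 1 + d * (i.1 : ℕ); X0 1 0 + d * (i.2 : ℕ), -X0 0 0] : M2) - X0 =
          !![0, d * (i.1 : ℕ); d * (i.2 : ℕ), -0] := by
        conv_lhs => rw [hX0]
        ext i j; fin_cases i <;> fin_cases j <;> simp
      rw [e]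
      exact nb _ _ _ (by simp; positivity) (by rw [abs_of_nonneg (hcast0 _)]; exact hcast _)
        (by rw [abs_of_nonneg (hcast0 _)]; exact hcast _)
    · set Y := c • (!![X0 0 0, X0 0 1 + d * (i.1 : ℕ); X0 1 0 + d * (i.2 : ℕ), -X0 0 0] : M2) -
        c' • (!![X0 0 0, X0 0 1 + d * (j.1 : ℕ); X0 1 0 + d * (j.2 : ℕ), -X0 0 0] : M2) with hY
      have b1 := abs_entry_le Y 0 0
      have b2 := abs_entry_le Y 0 1
      have b3 := abs_entry_le Y 1 0
      simp only [hY, Matrix.sub_apply, Matrix.smul_apply, Matrix.of_apply, Matrix.cons_val',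
        Matrix.cons_val_zero, Matrix.cons_val_one, Matrix.cons_val_fin_one, smul_eq_mul] at b1 b2 b3
      rw [← hY] at b1 b2 b3
      rcases eq_or_ne i.1 j.1 with h | h
      · exact core _ _ hb hz1 i.2 j.2 (fun h' => hij (Prod.ext h h')) c c' _ b1 b3
      · exact core _ _ hb hy1 i.1 j.1 h c c' _ b1 b2
  · refine ⟨fun i => !![X0 0 0 + d * (i.1 : ℕ), X0 0 1; X0 1 0 + d * (i.2 : ℕ),
      -(X0 0 0 + d * (i.1 : ℕ))],
      fun i => by simp [Matrix.trace_fin_two], fun i => ?_, fun i j hij c c' => ?_⟩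
    · have e : (!![X0 0 0 + d * (i.1 : ℕ), X0 0 1; X0 1 0 + d * (i.2 : ℕ),
          -(X0 0 0 + d * (i.1 : ℕ))] : M2) - X0 =
          !![d * (i.1 : ℕ), 0; d * (i.2 : ℕ), -(d * (i.1 : ℕ))] := by
        conv_lhs => rw [hX0]
        ext i j; fin_cases i <;> fin_cases j <;> simp
      rw [e]
      exact nb _ _ _ (by rw [abs_of_nonneg (hcast0 _)]; exact hcast _) (by simp; positivity)
        (by rw [abs_of_nonneg (hcast0 _)]; exact hcast _)
    · set Y := c • (!![X0 0 0 + d * (i.1 : ℕ), X0 0 1; X0 1 0 + d * (i.2 : ℕ),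
        -(X0 0 0 + d * (i.1 : ℕ))] : M2) -
        c' • (!![X0 0 0 + d * (j.1 : ℕ), X0 0 1; X0 1 0 + d * (j.2 : ℕ),
        -(X0 0 0 + d * (j.1 : ℕ))] : M2) with hY
      have b1 := abs_entry_le Y 0 0
      have b2 := abs_entry_le Y 0 1
      have b3 := abs_entry_le Y 1 0
      simp only [hY, Matrix.sub_apply, Matrix.smul_apply, Matrix.of_apply, Matrix.cons_val',
        Matrix.cons_val_zero, Matrix.cons_val_one, Matrix.cons_val_fin_one, smul_eq_mul] at b1 b2 b3
      rw [← hY] at b1 b2 b3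
      rcases eq_or_ne i.1 j.1 with h | h
      · exact core _ _ hb hz1 i.2 j.2 (fun h' => hij (Prod.ext h h')) c c' _ b2 b3
      · exact core _ _ hb hx1 i.1 j.1 h c c' _ b2 b1
  · refine ⟨fun i => !![X0 0 0 + d * (i.1 : ℕ), X0 0 1 + d * (i.2 : ℕ); X0 1 0,
      -(X0 0 0 + d * (i.1 : ℕ))],
      fun i => by simp [Matrix.trace_fin_two], fun i => ?_, fun i j hij c c' => ?_⟩
    · have e : (!![X0 0 0 + d * (i.1 : ℕ), X0 0 1 + d * (i.2 : ℕ); X0 1 0,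
          -(X0 0 0 + d * (i.1 : ℕ))] : M2) - X0 =
          !![d * (i.1 : ℕ), d * (i.2 : ℕ); 0, -(d * (i.1 : ℕ))] := by
        conv_lhs => rw [hX0]
        ext i j; fin_cases i <;> fin_cases j <;> simp
      rw [e]
      exact nb _ _ _ (by rw [abs_of_nonneg (hcast0 _)]; exact hcast _)
        (by rw [abs_of_nonneg (hcast0 _)]; exact hcast _) (by simp; positivity)
    · set Y := c • (!![X0 0 0 + d * (i.1 : ℕ), X0 0 1 + d * (i.2 : ℕ); X0 1 0,
        -(X0 0 0 + d * (i.1 : ℕ))] : M2) -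
        c' • (!![X0 0 0 + d * (j.1 : ℕ), X0 0 1 + d * (j.2 : ℕ); X0 1 0,
        -(X0 0 0 + d * (j.1 : ℕ))] : M2) with hY
      have b1 := abs_entry_le Y 0 0
      have b2 := abs_entry_le Y 0 1
      have b3 := abs_entry_le Y 1 0
      simp only [hY, Matrix.sub_apply, Matrix.smul_apply, Matrix.of_apply, Matrix.cons_val',
        Matrix.cons_val_zero, Matrix.cons_val_one, Matrix.cons_val_fin_one, smul_eq_mul] at b1 b2 b3
      rw [← hY] at b1 b2 b3
      rcases eq_or_ne i.1 j.1 with h | h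
      · exact core _ _ hb hy1 i.2 j.2 (fun h' => hij (Prod.ext h h')) c c' _ b3 b2
      · exact core _ _ hb hx1 i.1 j.1 h c c' _ b3 b1

/-! ### Regular semisimple elements and walks in the space of directions -/

section good
variable {A : Set M2} {δ Q : ℝ} {m : ℕ} (hG : Good A δ Q m)
include hG

/-- Some word of length `8` is at distance at least about `1 / Q` from the centre. -/
lemma Good.far : ∃ a ∈ A ^ 8, 1 ≤ 24 * Q * ‖dv a‖ := by
  have hA := hG.toSym
  have Q0 := hG.Q0
  set X : M2 := !![0, 1; 0, 0] with hX
  have hXt : X.trace = 0 := by simp [hX, Matrix.trace_fin_two]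
  have hXn : ‖X‖ = 1 := by
    have : ‖X‖ ^ 2 = 1 := by rw [nsq]; simp [hX]
    nlinarith [norm_nonneg X]
  obtain ⟨a, ha, b, hb, hab⟩ := hG.irr X hXt
  refine ⟨a, ha, ?_⟩
  have had := hA.pow_det _ _ ha
  have hbd := hA.pow_det _ _ hb
  rw [hXn] at hab
  have n1 : ‖b * X * adj b‖ ≤ 4 := by
    have := hG.conj_norm (by norm_num : 8 ≤ 60) hb X
    rwa [hXn, mul_one] at this
  have hbt : (b * X * adj b).trace = 0 := by rw [trace_conj hbd, hXt]
  have e0 := trace_XXY hXt hbt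
  have e1 : (X * (a * X * adj a) * (b * X * adj b)).trace
      = (X * (a * X * adj a - X) * (b * X * adj b)).trace := by
    rw [mul_sub, sub_mul, Matrix.trace_sub, e0, sub_zero]
  have e2 : a * X * adj a - X = br (dv a) X * adj a := by
    have : X = X * a * adj a := by rw [mul_assoc, mul_adj had, mul_one]
    have h2 : br (dv a) X = a * X - X * a := by
      simp only [br, dv]; simp only [sub_mul, mul_sub, smul_mul_assoc, mul_smul_comm, one_mul, mul_one]
      module
    rw [h2, sub_mul, ← this]
  have n2 : ‖a * X * adj a - X‖ ≤ 4 * ‖dv a‖ := by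
    rw [e2]
    refine (norm_mul_le _ _).trans ?_
    have h1 := norm_br_le (dv a) X
    have h2 : ‖adj a‖ ≤ 2 := by
      rw [norm_adj]; exact norm_le_two_of_near ((hA.near60 (by norm_num) ha).trans (by norm_num))
    rw [hXn, mul_one] at h1
    nlinarith [norm_nonneg (br (dv a) X), norm_nonneg (adj a)]
  have n3 : |(X * (a * X * adj a) * (b * X * adj b)).trace| ≤ 24 * ‖dv a‖ := by
    rw [e1]
    refine (abs_trace_mul_le _ _).trans ?_
    have h3 := norm_mul_le X (a * X * adj a - X)
    rw [hXn, one_mul] at h3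
    have := norm_nonneg (dv a)
    calc _ ≤ (4 * ‖dv a‖) * 4 := by gcongr; exact h3.trans n2
      _ ≤ _ := by linarith
  nlinarith

/-- A word of bounded length which is quantitatively regular semisimple. -/
lemma Good.regular : ∃ g ∈ A ^ (2 * 16), 0 ≤ g.trace ∧ ‖dv g‖ ≤ 1 ∧ 1 ≤ Q ^ 4 * |(dv g).det| := by
  have hA := hG.toSym
  have Q0 := hG.Q0
  have hQ := hG.Q10
  obtain ⟨a, ha, han⟩ := hG.far
  have had := hA.pow_det _ _ ha
  obtain ⟨c, hc, hcT⟩ := hG.irr_tr (dv_trace a) (dv_trace a)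
  have hcd := hA.pow_det _ _ hc
  set g2 := c * a * adj c with hg2
  have hdg2 : dv g2 = c * dv a * adj c := dv_conj hcd a
  have hg2m : g2 ∈ A ^ (8 + 8 + 8) := hG.conj_mem hc ha
  have hg2d := hA.pow_det _ _ hg2m
  have htr2 : g2.trace = a.trace := trace_conj hcd a
  rw [← hdg2] at hcT
  set T := (dv a * dv g2).trace with hT
  have hTl : 1 ≤ 27648 * Q ^ 3 * |T| := by
    have h1 : 1 ≤ (24 * Q * ‖dv a‖) ^ 2 := one_le_pow₀ han
    have h2 : (24 * Q) ^ 2 * (‖dv a‖ * ‖dv a‖) ≤ (24 * Q) ^ 2 * (48 * Q * |T|) := by gcongr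
    linarith
  have hTl2 : 1 ≤ Q ^ 4 * (|T| / 4) := by
    have h3 : 27648 * Q ^ 3 * |T| ≤ Q ^ 4 * (|T| / 4) := by
      have : 0 ≤ Q ^ 3 * |T| := by positivity
      calc 27648 * Q ^ 3 * |T| = (Q ^ 3 * |T|) * 27648 := by ring
        _ ≤ (Q ^ 3 * |T|) * (Q / 4) := by gcongr; linarith
        _ = _ := by ring
    linarith
  have near : ∀ {k : ℕ}, k ≤ 60 → ∀ {g : M2}, g ∈ A ^ k → 0 ≤ g.trace ∧ ‖dv g‖ ≤ 1 := by
    intro k hk g hg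
    have h := hA.near60 hk hg
    refine ⟨(trace_nonneg_of_near (h.trans (by norm_num))).trans' zero_le_one, ?_⟩
    rw [← dv_sub_one]
    exact (norm_dv_le _).trans (h.trans (by norm_num))
  by_cases hcase : |T| / 4 ≤ |(dv a).det|
  · have hm : a ∈ A ^ (2 * 16) := hA.pow_mono (by norm_num) (by decide) ha
    obtain ⟨h1, h2⟩ := near (by norm_num) hm
    refine ⟨a, hm, h1, h2, hTl2.trans ?_⟩
    gcongr
  · push Not at hcase
    have hm : a * g2 ∈ A ^ (2 * 16) := by
      have h := pow_mem_mul ha hg2m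
      norm_num at h ⊢
      exact h
    obtain ⟨h1, h2⟩ := near (by norm_num) hm
    refine ⟨a * g2, hm, h1, h2, hTl2.trans ?_⟩
    gcongr
    have hd := hA.pow_det _ _ hm
    have e1 := det_eq_dv (a * g2)
    have e2 := det_eq_dv a
    rw [hd] at e1
    rw [had] at e2
    have e3 : (a * g2).trace = 2 * (a.trace / 2) ^ 2 + T := by
      have ea : a = dv a + (a.trace / 2) • (1 : M2) := by simp only [dv]; abel
      have eg : g2 = dv g2 + (a.trace / 2) • (1 : M2) := by rw [← htr2]; simp only [dv]; abel
      have h3 : a * g2 = dv a * dv g2 + (a.trace / 2) • dv g2 + (a.trace / 2) • dv a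
          + ((a.trace / 2) ^ 2) • (1 : M2) := by
        conv_lhs => rw [ea, eg]
        simp only [mul_add, add_mul, mul_smul_comm, smul_mul_assoc, mul_one, one_mul]
        module
      rw [h3]
      simp only [Matrix.trace_add, Matrix.trace_smul, dv_trace, smul_zero, add_zero, Matrix.trace_one]
      simp [hT]; ring
    set γ := a.trace / 2
    have e4 : (dv (a * g2)).det = ((dv a).det - T / 2) * (1 + (a * g2).trace / 2) := by
      have : (dv a).det = 1 - γ ^ 2 := by linarith
      have h5 : (dv (a * g2)).det = 1 - ((a * g2).trace / 2) ^ 2 := by linarith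
      rw [h5, this, e3]; ring
    rw [e4, abs_mul]
    have h6 : |T| / 4 ≤ |(dv a).det - T / 2| := by
      have := abs_sub_abs_le_abs_sub (T / 2) (dv a).det
      rw [abs_sub_comm, abs_div, abs_of_pos (by norm_num : (0:ℝ) < 2)] at this
      linarith
    have h7 : 1 ≤ |1 + (a * g2).trace / 2| := by
      rw [abs_of_nonneg (by linarith)]; linarith
    calc |T| / 4 = |T| / 4 * 1 := by ring
      _ ≤ _ := by gcongr
end good

/-- A direction of the walk reached by an element of `A²`: up to an error `E`, the matrix `p` is
a multiple of the traceless part of an element of `A²` at distance at least `t` from `1`. -/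
def Reach (A : Set M2) (t : ℝ) (p : M2) (E : ℝ) : Prop :=
  ∃ g ∈ A ^ 2, t ≤ ‖dv g‖ ∧ ∃ c : ℝ, ‖c • dv g - p‖ ≤ E

lemma Reach.mono {A : Set M2} {t : ℝ} {p : M2} {E E' : ℝ} (h : Reach A t p E) (hE : E ≤ E') :
    Reach A t p E' := by
  obtain ⟨g, h1, h2, c, h3⟩ := h
  exact ⟨g, h1, h2, c, h3.trans hE⟩

/-- The gain of one step of the walk. Conjugation by the small element `l` moves `x` by
`[dv l, x]` to first order, and the sign of the trace makes this move point towards `p`. -/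
lemma walk_geom {l x p : M2} {y Q : ℝ} (hl : l.det = 1) (ht : 0 ≤ l.trace) (y0 : 0 ≤ y)
    (hQ : 10 ^ 10 ≤ Q) (hy : y ≤ 1 / 64) (hly : ‖dv l‖ ≤ 4 * y) (hx : ‖x‖ ≤ 2) (hv : ‖x - p‖ ≤ 1)
    (hZ : ‖x - p‖ ≤ 2 * Q ^ 4 * ‖br x (x - p).transpose‖)
    (htr : y * ‖br x (x - p).transpose‖ ≤ -(48 * Q) * (br x (x - p).transpose * dv l).trace)
    (hD : Q ^ 7 * y ≤ ‖x - p‖) : ‖l * x * adj l - p‖ ≤ ‖x - p‖ - 2 * (y / Q ^ 6) := by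
  have Q0 : 0 < Q := lt_of_lt_of_le (by norm_num) hQ
  set v := x - p with hvdef
  set Z := br x v.transpose with hZdef
  set B := br (dv l) x with hB
  have hl1 : ‖adj l - 1‖ ≤ 8 * y := by
    have h := norm_sub_one_le hl ht (by linarith)
    have e : adj l - 1 = adj (l - 1) := by rw [adj_sub, adj_one]
    rw [e, norm_adj]; linarith
  have hl2 : ‖adj l‖ ≤ 2 := norm_le_two_of_near (hl1.trans (by linarith))
  have hBn : ‖B‖ ≤ 16 * y := by
    refine (norm_br_le _ _).trans ?_
    calc 2 * ‖dv l‖ * ‖x‖ ≤ 2 * (4 * y) * 2 := by gcongr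
      _ = _ := by ring
  have ew : l * x * adj l - p = v + B * adj l := by
    have h1 : x * l * adj l = x := by rw [mul_assoc, mul_adj hl, mul_one]
    have h2 : B = l * x - x * l := by
      simp only [hB, br, dv]; simp only [sub_mul, mul_sub, smul_mul_assoc, mul_smul_comm, one_mul, mul_one]
      module
    rw [h2, sub_mul, h1, hvdef]; abel
  have hwn : ‖B * adj l‖ ≤ 32 * y := by
    refine (norm_mul_le _ _).trans ?_
    calc ‖B‖ * ‖adj l‖ ≤ (16 * y) * 2 := by gcongr
      _ = _ := by ring
  have etr : (B * adj l * v.transpose).trace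
      = (Z * dv l).trace + (B * ((adj l - 1) * v.transpose)).trace := by
    have h1 : (B * v.transpose).trace = (Z * dv l).trace := by
      simp only [hB, hZdef, br, sub_mul, Matrix.trace_sub]
      rw [mul_assoc, trace_comm (dv l), mul_assoc x (dv l), trace_comm x, mul_assoc (dv l), trace_comm (dv l)]
    rw [← h1, ← Matrix.trace_add, sub_mul, one_mul, mul_sub, ← mul_assoc]
    congr 1; abel
  have herr : (B * ((adj l - 1) * v.transpose)).trace ≤ 128 * y ^ 2 * ‖v‖ := by
    refine (le_abs_self _).trans ((abs_trace_mul_le _ _).trans ?_)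
    have h1 := norm_mul_le (adj l - 1) v.transpose
    rw [norm_transpose'] at h1
    calc ‖B‖ * ‖(adj l - 1) * v.transpose‖ ≤ (16 * y) * ((8 * y) * ‖v‖) := by
          gcongr; exact h1.trans (by gcongr)
      _ = _ := by ring
  have hsq := norm_add_sq' v (B * adj l)
  rw [← ew, etr] at hsq
  set K := y * ‖v‖ / Q ^ 5 with hK
  have K0 : 0 ≤ K := by positivity
  have k1 : (Z * dv l).trace ≤ -(K / 96) := by
    have h1 : K / 96 * (96 * Q ^ 5) ≤ -(Z * dv l).trace * (96 * Q ^ 5) := by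
      have e : K / 96 * (96 * Q ^ 5) = y * ‖v‖ := by rw [hK]; field_simp
      rw [e]
      calc y * ‖v‖ ≤ y * (2 * Q ^ 4 * ‖Z‖) := by gcongr
        _ = 2 * Q ^ 4 * (y * ‖Z‖) := by ring
        _ ≤ 2 * Q ^ 4 * (-(48 * Q) * (Z * dv l).trace) := by gcongr
        _ = _ := by ring
    have := le_of_mul_le_mul_right h1 (by positivity)
    linarith
  have k2 : y ^ 2 ≤ K / Q ^ 2 := by
    rw [hK, div_div, le_div_iff₀ (by positivity)]
    calc y ^ 2 * (Q ^ 5 * Q ^ 2) = y * (Q ^ 7 * y) := by ring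
      _ ≤ _ := by gcongr
  have k3 : K / Q ^ 2 ≤ K / 122880 := by
    gcongr
    calc (122880 : ℝ) ≤ (10 ^ 10) ^ 2 := by norm_num
      _ ≤ _ := by gcongr
  have k4 : y ^ 2 * ‖v‖ ≤ y ^ 2 := by
    calc y ^ 2 * ‖v‖ ≤ y ^ 2 * 1 := by gcongr
      _ = _ := mul_one _
  have k5 : ‖B * adj l‖ ^ 2 ≤ 1024 * y ^ 2 := by
    calc _ ≤ (32 * y) ^ 2 := by gcongr
      _ = _ := by ring
  have k6 : y * ‖v‖ / Q ^ 6 ≤ K / 384 := by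
    have : y * ‖v‖ / Q ^ 6 = K / Q := by rw [hK]; field_simp
    rw [this]
    gcongr
    linarith
  have k7 : 2 * (y / Q ^ 6) ≤ ‖v‖ := by
    have h1 : 2 * (y / Q ^ 6) ≤ Q ^ 7 * y := by
      have h2 : y / Q ^ 6 ≤ y := div_le_self y0 (one_le_pow₀ (by linarith))
      have h3 : 2 ≤ Q ^ 7 := by
        calc (2:ℝ) ≤ 2 ^ 7 := by norm_num
          _ ≤ Q ^ 7 := by gcongr; linarith
      have h4 : 2 * y ≤ Q ^ 7 * y := by gcongr
      linarith
    exact h1.trans hD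
  apply le_of_sq_le_sq _ (by linarith)
  have e8 : (‖v‖ - 2 * (y / Q ^ 6)) ^ 2
      = ‖v‖ ^ 2 - 4 * (y * ‖v‖ / Q ^ 6) + (2 * (y / Q ^ 6)) ^ 2 := by ring
  rw [e8, hsq]
  have := sq_nonneg (2 * (y / Q ^ 6))
  linarith

section good
variable {A : Set M2} {δ Q : ℝ} {m : ℕ} (hG : Good A δ Q m)
include hG

/-- A word whose traceless part is at least `t / 2` long can be replaced, up to a small error in
its direction, by an element of `A²`. -/
lemma Good.restore {t q : ℝ} (q0 : 0 < q) (q1 : q ≤ 1) (hqt : 64 * q ≤ t) (hQt : Q ^ 3 * t ≤ 1)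
    (hδ : δ ≤ t / 2 * q)
    (hsel : ∀ s, t / 2 ≤ s → s ≤ 1 →
      Q ^ 200 * N (s * q) A ^ 2 ≤ N q A ^ 2 * N s A ^ 2 * N t A)
    {k : ℕ} (hk : 2 * k + 19 ≤ m) {g : M2} (hg : g ∈ A ^ (2 * k)) (ht : 0 ≤ g.trace)
    (hgt : t / 2 ≤ ‖dv g‖) (hg1 : ‖dv g‖ ≤ 1) {c E : ℝ} {p : M2} (hc : ‖c • dv g‖ ≤ 2)
    (hE : ‖c • dv g - p‖ ≤ E) : Reach A t p (E + 64 * q / t) := by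
  have t0 : 0 < t := by linarith
  have hd := hG.dich hk hg ht rfl (by linarith) hg1 q0 q1
    (hδ.trans (by gcongr)) (by linarith) hQt (hsel _ hgt hg1)
  have hne : (Big A g q t).Nonempty := by
    by_contra h
    rw [Set.not_nonempty_iff_eq_empty] at h
    have h0 : N q (Big A g q t) ≤ 0 := by
      rw [h]; have := N_le (e := q) (S := (∅ : Set M2)) ∅ (by simp); simpa using this
    have h1 : N q (Big A g q t) = 0 := le_antisymm h0 (N_nonneg _ _)
    rw [h1] at hd
    have h2 := N_pos hG.toSym.bdd hG.toSym.ne q0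
    have : 0 < t ^ 4 * N q A := by positivity
    norm_num at hd
    linarith
  obtain ⟨g', ⟨hg'2, c', hc'⟩, hg't⟩ := hne
  have hg't : t ≤ ‖dv g'‖ := hg't
  have hc'n : t / 2 ≤ |c'| * ‖dv g‖ := by
    have h1 := norm_sub_norm_le (dv g') (c' • dv g)
    rw [norm_smul, Real.norm_eq_abs] at h1
    linarith
  have hdg : 0 < ‖dv g‖ := by linarith
  have hc'0 : 0 < |c'| := by
    by_contra h
    have : |c'| = 0 := le_antisymm (not_lt.1 h) (abs_nonneg _)
    rw [this, zero_mul] at hc'n; linarith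
  have hc'1 : c' ≠ 0 := abs_pos.1 hc'0
  refine ⟨g', hg'2, hg't, c / c', ?_⟩
  have e : (c / c') • dv g' - p = (c • dv g - p) + (c / c') • (dv g' - c' • dv g) := by
    rw [smul_sub, smul_smul, div_mul_cancel₀ c hc'1]; abel
  rw [e]
  refine (norm_add_le _ _).trans (add_le_add hE ?_)
  rw [norm_smul, Real.norm_eq_abs, abs_div]
  rw [norm_smul, Real.norm_eq_abs] at hc
  have h2 : |c| / |c'| ≤ 4 / t := by
    rw [div_le_div_iff₀ hc'0 t0]
    have : |c| * t * ‖dv g‖ ≤ 4 * |c'| * ‖dv g‖ := by nlinarith [abs_nonneg c]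
    exact le_of_mul_le_mul_right this hdg
  calc |c| / |c'| * ‖dv g' - c' • dv g‖ ≤ 4 / t * (16 * q) := by gcongr
    _ = _ := by ring

set_option maxHeartbeats 2000000 in
/-- One step of the walk towards `p`: unless `p` is already close, the error decreases by a
definite amount. -/
lemma Good.step {t q : ℝ} (q0 : 0 < q) (q1 : q ≤ 1) (hqt : 64 * q ≤ t) (hQt : Q ^ 3 * t ≤ 1)
    (hδ : δ ≤ t / 2 * q)
    (hsel : ∀ s, t / 2 ≤ s → s ≤ 1 →
      Q ^ 200 * N (s * q) A ^ 2 ≤ N q A ^ 2 * N s A ^ 2 * N t A)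
    {L : ℕ} (hL : 4 * L + 53 ≤ m) {h : M2} (hh : h ∈ A ^ (2 * L)) (hht : 0 ≤ h.trace)
    (hy1 : Q ^ 7 * q ≤ t * ‖dv h‖) (hy2 : Q ^ 14 * ‖dv h‖ ≤ t)
    {X0 : M2} (hXn : ‖X0‖ = 1) (hXd : 1 ≤ Q ^ 4 * |X0.det|)
    {p : M2} (hp : p.trace = 0) (hpX : Q ^ 5 * ‖p - X0‖ ≤ 1) {E : ℝ} (hE : Q ^ 5 * E ≤ 1)
    (hR : Reach A t p E) :
    Reach A t p (Q ^ 7 * ‖dv h‖) ∨ Reach A t p (E - ‖dv h‖ / Q ^ 6) := by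
  have hA := hG.toSym
  have Q0 := hG.Q0
  have hQ := hG.Q10
  have t0 : 0 < t := by linarith
  obtain ⟨y, hy⟩ : ∃ y, y = ‖dv h‖ := ⟨_, rfl⟩
  rw [← hy] at hy1 hy2 ⊢
  have y0 : 0 < y := by
    have : 0 < t * y := lt_of_lt_of_le (by positivity) hy1
    exact pos_of_mul_pos_right this t0.le
  have Q3 : 10 ^ 30 ≤ Q ^ 3 := by
    calc (10:ℝ) ^ 30 = (10 ^ 10) ^ 3 := by norm_num
      _ ≤ _ := by gcongr
  have t1 : t ≤ 1 / 10 := by nlinarith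
  have Q5 : 10 ^ 10 * Q ^ 4 ≤ Q ^ 5 := by
    calc _ ≤ Q * Q ^ 4 := by gcongr
      _ = _ := by ring
  have Q4 : 10 ^ 10 ≤ Q ^ 4 := by
    calc (10:ℝ) ^ 10 ≤ (10 ^ 10) ^ 4 := by norm_num
      _ ≤ _ := by gcongr
  have Q14 : 10 ^ 10 ≤ Q ^ 14 := by
    calc (10:ℝ) ^ 10 ≤ (10 ^ 10) ^ 14 := by norm_num
      _ ≤ _ := by gcongr
  have y1 : y ≤ 1 / 64 := by
    have : 10 ^ 10 * y ≤ Q ^ 14 * y := by gcongr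
    linarith
  obtain ⟨g, hg, hgt, c0, hc0⟩ := hR
  have hdg : dv g ≠ 0 := by
    intro h0; rw [h0, norm_zero] at hgt; linarith
  obtain ⟨c, hc1, hc2⟩ := exists_proj hdg p
  have hcE := (hc2 c0).trans hc0
  obtain ⟨x, hx⟩ : ∃ x, x = c • dv g := ⟨_, rfl⟩
  rw [← hx] at hc1 hc2 hcE
  have hxt : x.trace = 0 := by rw [hx, Matrix.trace_smul, dv_trace, smul_zero]
  by_cases hbig : ‖x - p‖ ≤ Q ^ 7 * y
  · exact Or.inl ⟨g, hg, hgt, c, by rwa [← hx]⟩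
  right
  push Not at hbig
  have hs : 10 ^ 20 * (‖x - p‖ + ‖p - X0‖) ≤ 2 := by
    have a1 : Q ^ 5 * ‖x - p‖ ≤ 1 := le_trans (by gcongr) hE
    have a2 : (10:ℝ) ^ 20 ≤ Q ^ 5 := by linarith
    calc _ ≤ Q ^ 5 * (‖x - p‖ + ‖p - X0‖) := by gcongr
      _ ≤ _ := by linarith
  have hs2 : 10 ^ 10 * (Q ^ 4 * (‖x - p‖ + ‖p - X0‖)) ≤ 2 := by
    have a1 : Q ^ 5 * ‖x - p‖ ≤ 1 := le_trans (by gcongr) hE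
    calc _ = 10 ^ 10 * Q ^ 4 * (‖x - p‖ + ‖p - X0‖) := by ring
      _ ≤ Q ^ 5 * (‖x - p‖ + ‖p - X0‖) := by gcongr
      _ ≤ _ := by linarith
  have hxX : ‖x - X0‖ ≤ ‖x - p‖ + ‖p - X0‖ := norm_sub_le_norm_sub_add_norm_sub _ _ _
  have np := norm_nonneg (x - p)
  have npX := norm_nonneg (p - X0)
  have hxn : ‖x‖ ≤ 5 / 4 := by
    have := norm_sub_norm_le x X0
    rw [hXn] at this
    linarith
  -- the determinant of `x` is bounded below, as that of `X0` is
  have hxd : 1 ≤ 2 * Q ^ 4 * |x.det| := by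
    have h1 := abs_det_sub_le X0 x
    rw [hXn, norm_sub_rev] at h1
    have h2 : (1 + ‖x‖) / 2 * ‖x - X0‖ ≤ 2 * (‖x - p‖ + ‖p - X0‖) := by
      gcongr
      linarith
    have h3 := abs_sub_abs_le_abs_sub X0.det x.det
    have h4 : |X0.det| ≤ |x.det| + 2 * (‖x - p‖ + ‖p - X0‖) := by linarith
    have h5 : Q ^ 4 * |X0.det| ≤ Q ^ 4 * (|x.det| + 2 * (‖x - p‖ + ‖p - X0‖)) := by gcongr
    linarith
  have hvt : (x - p).trace = 0 := by rw [Matrix.trace_sub, hxt, hp, sub_zero]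
  have hxv : (x * (x - p).transpose).trace = 0 := by
    conv_lhs => rw [show x * (x - p).transpose = c • (dv g * (x - p).transpose) by
      rw [hx, smul_mul_assoc]]
    rw [Matrix.trace_smul, hc1, smul_zero]
  have hbr := br_lower hxt hvt hxv
  obtain ⟨Z, hZ⟩ : ∃ Z, Z = br x (x - p).transpose := ⟨_, rfl⟩
  rw [← hZ] at hbr
  have hZl : ‖x - p‖ ≤ 2 * Q ^ 4 * ‖Z‖ := by
    have h1 : 2 * |x.det| * ‖x - p‖ ≤ 5 / 4 * ‖Z‖ := hbr.trans (by gcongr)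
    have h2 : 1 * ‖x - p‖ ≤ 2 * Q ^ 4 * |x.det| * ‖x - p‖ := by gcongr
    have h3 : Q ^ 4 * (2 * |x.det| * ‖x - p‖) ≤ Q ^ 4 * (5 / 4 * ‖Z‖) := by gcongr
    have h4 : 0 ≤ Q ^ 4 * ‖Z‖ := by positivity
    linarith
  have hZt : Z.trace = 0 := by rw [hZ]; exact br_trace _ _
  obtain ⟨a, ha, hatr⟩ := hG.irr_tr (dv_trace h) hZt
  rw [← hy] at hatr
  have had := hA.pow_det _ _ ha
  have hhd := hA.pow_det _ _ hh
  have hconj : ‖a * dv h * adj a‖ ≤ 4 * y := by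
    rw [hy]; exact hG.conj_norm (by norm_num) ha _
  have hneg : a * -dv h * adj a = -(a * dv h * adj a) := by rw [mul_neg, neg_mul]
  -- the conjugate of `h` or of its inverse, according to the sign of the trace
  obtain ⟨l, hlm, hlt, hln, hltr⟩ : ∃ l ∈ A ^ (8 + 2 * L + 8), 0 ≤ l.trace ∧ ‖dv l‖ ≤ 4 * y ∧
      y * ‖Z‖ ≤ -(48 * Q) * (Z * dv l).trace := by
    rcases le_total 0 (Z * (a * dv h * adj a)).trace with hs | hs
    · refine ⟨a * adj h * adj a, hG.conj_mem ha (hA.pow_inv _ _ hh), ?_, ?_, ?_⟩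
      · rw [trace_conj had, trace_adj]; exact hht
      · rw [dv_conj had, dv_adj, hneg, norm_neg]; exact hconj
      · rw [dv_conj had, dv_adj, hneg, mul_neg Z, Matrix.trace_neg]
        rw [abs_of_nonneg hs] at hatr
        linarith
    · refine ⟨a * h * adj a, hG.conj_mem ha hh, ?_, ?_, ?_⟩
      · rw [trace_conj had]; exact hht
      · rw [dv_conj had]; exact hconj
      · rw [dv_conj had]
        rw [abs_of_nonpos hs] at hatr
        linarith
  have hld := hA.pow_det _ _ hlm
  rw [hZ] at hZl hltr
  have hgeom := walk_geom hld hlt y0.le hQ y1 hln (by linarith) (by linarith) hZl hltr hbig.le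
  have hl1 : ‖l - 1‖ ≤ 8 * y := by
    have := norm_sub_one_le hld hlt (by linarith); linarith
  have hl2 : ‖adj l‖ ≤ 2 := by
    rw [norm_adj]; exact norm_le_two_of_near (hl1.trans (by linarith))
  -- conjugation by `l` changes norms by a factor close to `1`
  have hnear : ∀ W : M2, ‖l * W * adj l - W‖ ≤ 1 / 2 * ‖W‖ := by
    intro W
    have h1 : W * l * adj l = W := by rw [mul_assoc, mul_adj hld, mul_one]
    have e : l * W * adj l - W = br (l - 1) W * adj l := by
      have h2 : br (l - 1) W = l * W - W * l := by
        simp only [br]; noncomm_ring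
      rw [h2, sub_mul, h1]
    rw [e]
    refine (norm_mul_le _ _).trans ?_
    calc ‖br (l - 1) W‖ * ‖adj l‖ ≤ (2 * (8 * y) * ‖W‖) * 2 := by
          gcongr; exact (norm_br_le _ _).trans (by gcongr)
      _ = 32 * y * ‖W‖ := by ring
      _ ≤ _ := by gcongr; linarith
  have hgd := hA.pow_det _ _ hg
  have hg1 := hA.near60 (by norm_num) hg
  have hgn : ‖dv g‖ ≤ 1 / 10 := by
    rw [← dv_sub_one]; exact (norm_dv_le _).trans hg1
  have hdc := dv_conj hld g
  have nr := hnear (dv g)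
  have hm : l * g * adj l ∈ A ^ (2 * (2 * L + 17)) := by
    have h1 := hG.conj_mem hlm hg
    rwa [show 8 + 2 * L + 8 + 2 + (8 + 2 * L + 8) = 2 * (2 * L + 17) by ring] at h1
  have ec : c • dv (l * g * adj l) = l * x * adj l := by
    rw [hdc, hx, mul_smul_comm, smul_mul_assoc]
  have hR' := hG.restore q0 q1 hqt hQt hδ hsel (k := 2 * L + 17) (by omega) hm
    (by rw [trace_conj hld]; exact (trace_nonneg_of_near (hg1.trans (by norm_num))).trans' zero_le_one)
    (by rw [hdc]; have := norm_sub_norm_le (dv g) (l * dv g * adj l)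
        rw [norm_sub_rev] at this; linarith)
    (by rw [hdc]; have := norm_sub_norm_le (l * dv g * adj l) (dv g); linarith)
    (c := c) (p := p)
    (by rw [ec]; have := norm_sub_norm_le (l * x * adj l) x; linarith [hnear x])
    (E := ‖x - p‖ - 2 * (y / Q ^ 6)) (by rw [ec]; exact hgeom)
  refine hR'.mono ?_
  have h64 : 64 * q / t ≤ y / Q ^ 6 := by
    rw [div_le_div_iff₀ t0 (by positivity)]
    calc 64 * q * Q ^ 6 ≤ Q * q * Q ^ 6 := by gcongr; linarith
      _ = Q ^ 7 * q := by ring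
      _ ≤ _ := by linarith
  linarith

/-- The walk towards `p`, obtained by iterating `Good.step`, comes as close to `p` as the size of its
steps permits. -/
lemma Good.walk {t q : ℝ} (q0 : 0 < q) (q1 : q ≤ 1) (hqt : 64 * q ≤ t) (hQt : Q ^ 3 * t ≤ 1)
    (hδ : δ ≤ t / 2 * q)
    (hsel : ∀ s, t / 2 ≤ s → s ≤ 1 →
      Q ^ 200 * N (s * q) A ^ 2 ≤ N q A ^ 2 * N s A ^ 2 * N t A)
    {L : ℕ} (hL : 4 * L + 53 ≤ m) {h : M2} (hh : h ∈ A ^ (2 * L)) (hht : 0 ≤ h.trace)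
    (hy1 : Q ^ 7 * q ≤ t * ‖dv h‖) (hy2 : Q ^ 14 * ‖dv h‖ ≤ t)
    {X0 : M2} (hXn : ‖X0‖ = 1) (hXd : 1 ≤ Q ^ 4 * |X0.det|)
    {p : M2} (hp : p.trace = 0) (hpX : Q ^ 5 * ‖p - X0‖ ≤ 1) {E : ℝ} (hE : Q ^ 5 * E ≤ 1)
    (hR : Reach A t p E) : Reach A t p (Q ^ 7 * ‖dv h‖) := by
  have Q0 := hG.Q0
  have t0 : 0 < t := by linarith
  have y0 : 0 < ‖dv h‖ := by
    have : 0 < t * ‖dv h‖ := lt_of_lt_of_le (by positivity) hy1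
    exact pos_of_mul_pos_right this t0.le
  have hz : 0 < ‖dv h‖ / Q ^ 6 := by positivity
  have key : ∀ n : ℕ, Reach A t p (Q ^ 7 * ‖dv h‖) ∨ Reach A t p (E - n * (‖dv h‖ / Q ^ 6)) := by
    intro n
    induction n with
    | zero => right; simpa using hR
    | succ n ih =>
      rcases ih with ih | ih
      · exact Or.inl ih
      have hE' : Q ^ 5 * (E - n * (‖dv h‖ / Q ^ 6)) ≤ 1 := by
        have : 0 ≤ Q ^ 5 * (n * (‖dv h‖ / Q ^ 6)) := by positivity
        linarith
      rcases hG.step q0 q1 hqt hQt hδ hsel hL hh hht hy1 hy2 hXn hXd hp hpX hE' ih with h1 | h1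
      · exact Or.inl h1
      · right
        refine h1.mono (le_of_eq ?_)
        push_cast; ring
  obtain ⟨n, hn⟩ := exists_nat_gt (E / (‖dv h‖ / Q ^ 6))
  rw [div_lt_iff₀ hz] at hn
  rcases key n with h1 | ⟨g, -, -, c, hc⟩
  · exact h1
  · have := norm_nonneg (c • dv g - p)
    linarith

omit hG in
/-- Elements near two different lines, both of size at least `t`, are far apart. -/
lemma line_sep {g g' y y' p p' : M2} {c c' t q D d : ℝ} (q0 : 0 < q)
    (hqD : q ≤ D) (hd : 2000 * D < t * d) (hDt : 100 * D ≤ t)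
    (hy : t ≤ ‖dv y‖) (hy1 : ‖dv y‖ ≤ 1 / 4) (hg : ∃ e : ℝ, ‖dv y - e • dv g‖ ≤ 16 * q)
    (hy' : ‖dv y'‖ ≤ 1 / 4) (hyt' : t ≤ ‖dv y'‖) (hg' : ∃ e : ℝ, ‖dv y' - e • dv g'‖ ≤ 16 * q)
    (hc : ‖c • dv g - p‖ ≤ D) (hc' : ‖c' • dv g' - p'‖ ≤ D) (hp : 3 / 4 ≤ ‖p‖) (hp' : 3 / 4 ≤ ‖p'‖)
    (hp2 : ‖p‖ ≤ 2) (d0 : 0 < d)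
    (hpp : ∀ e e' : ℝ, |e| * d ≤ 10 * ‖e • p - e' • p'‖) : 4 * q < ‖y - y'‖ := by
  have key : ∀ {g y p : M2} {c : ℝ}, t ≤ ‖dv y‖ → ‖dv y‖ ≤ 1 / 4 →
      (∃ e : ℝ, ‖dv y - e • dv g‖ ≤ 16 * q) → ‖c • dv g - p‖ ≤ D → 3 / 4 ≤ ‖p‖ →
      ∃ C : ℝ, ‖dv y - C • p‖ ≤ 16 * q + 2 * D := by
    intro g y p c h1 h2 ⟨e, he⟩ hc hp
    have hcn : 1 / 2 ≤ |c| * ‖dv g‖ := by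
      have := norm_sub_norm_le p (c • dv g)
      rw [norm_sub_rev, norm_smul, Real.norm_eq_abs] at this
      linarith
    have hg0 : 0 < ‖dv g‖ := by
      rcases (norm_nonneg (dv g)).eq_or_lt with h | h
      · rw [← h, mul_zero] at hcn; linarith
      · exact h
    have hc0 : 0 < |c| := by
      by_contra h
      have : |c| = 0 := le_antisymm (not_lt.1 h) (abs_nonneg _)
      rw [this, zero_mul] at hcn; linarith
    have hc1 : c ≠ 0 := abs_pos.1 hc0
    have hen : |e| * ‖dv g‖ ≤ 1 := by
      have := norm_sub_norm_le (e • dv g) (dv y)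
      rw [norm_sub_rev, norm_smul, Real.norm_eq_abs] at this
      linarith
    refine ⟨e / c, ?_⟩
    have e1 : dv y - (e / c) • p = (dv y - e • dv g) + (e / c) • (c • dv g - p) := by
      rw [smul_sub, smul_smul, div_mul_cancel₀ e hc1]; abel
    rw [e1]
    refine (norm_add_le _ _).trans (add_le_add he ?_)
    rw [norm_smul, Real.norm_eq_abs, abs_div]
    have h3 : |e| / |c| ≤ 2 := by
      rw [div_le_iff₀ hc0]
      have : |e| * ‖dv g‖ ≤ 2 * |c| * ‖dv g‖ := by linarith
      exact le_of_mul_le_mul_right this hg0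
    gcongr
  obtain ⟨C, hC⟩ := key hy hy1 hg hc hp
  obtain ⟨C', hC'⟩ := key hyt' hy' hg' hc' hp'
  by_contra! hcon
  have h1 : ‖dv y - dv y'‖ ≤ 4 * q := by
    rw [← dv_sub]; exact (norm_dv_le _).trans hcon
  have h2 : ‖C • p - C' • p'‖ ≤ 36 * q + 4 * D := by
    have e : C • p - C' • p' = (dv y - dv y') - (dv y - C • p) + (dv y' - C' • p') := by abel
    rw [e]
    refine (norm_add_le _ _).trans ?_
    have := norm_sub_le (dv y - dv y') (dv y - C • p)
    linarith
  have h3 := hpp C C'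
  have h4 : t / 4 ≤ |C| := by
    have h5 := norm_sub_norm_le (dv y) (C • p)
    rw [norm_smul, Real.norm_eq_abs] at h5
    have : |C| * ‖p‖ ≤ |C| * 2 := by gcongr
    linarith
  have h6 : t / 4 * d ≤ |C| * d := by gcongr
  linarith

set_option maxHeartbeats 1000000 in
/-- If the approximate centralizers are large at scale `t`, the walk provides them in every
direction of a patch of the projective plane, so that `A` has dimension almost `3` at the
scale `q`. -/
lemma Good.dim_lower {t q b : ℝ} (q0 : 0 < q) (b0 : 0 < b) (b1 : b ≤ 1) (hQt : Q ^ 3 * t ≤ 1)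
    (t0 : 0 < t) (hδ : δ ≤ t / 2 * q) (hcond : Q ^ 30 * q ≤ t ^ 2 * b ^ 3)
    (hsel : ∀ s, t / 2 ≤ s → s ≤ 1 →
      Q ^ 200 * N (s * q) A ^ 2 ≤ N q A ^ 2 * N s A ^ 2 * N t A)
    {L : ℕ} (hL : 4 * L + 53 ≤ m) {h : M2} (hh : h ∈ A ^ (2 * L)) (hht : 0 ≤ h.trace)
    (hy1 : Q ^ 7 * q ≤ t * ‖dv h‖) (hy3 : ‖dv h‖ * (t * b ^ 3) ≤ Q ^ 7 * q) :
    t ^ 16 * b ^ 18 ≤ Q ^ 150 * q ^ 6 * N q A ^ 2 := by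
  have hA := hG.toSym
  have Q0 := hG.Q0
  have hQ := hG.Q10
  have hm := hG.m100
  obtain ⟨y, hy⟩ : ∃ y, y = ‖dv h‖ := ⟨_, rfl⟩
  have y0 : 0 < y := by
    have : 0 < t * y := by rw [hy]; exact lt_of_lt_of_le (by positivity) hy1
    exact pos_of_mul_pos_right this t0.le
  have Q1 : 1 ≤ Q := by linarith
  have pw : ∀ k : ℕ, 1 ≤ k → 10 ^ 10 ≤ Q ^ k := fun k hk => by
    calc 10 ^ 10 ≤ Q := hQ
      _ = Q ^ 1 := (pow_one Q).symm
      _ ≤ Q ^ k := pow_le_pow_right₀ Q1 hk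
  have t1 : t ≤ 1 / 10 := by
    have : 10 ^ 10 * t ≤ Q ^ 3 * t := by gcongr; exact pw 3 (by norm_num)
    linarith
  have hb3 : b ^ 3 ≤ 1 := pow_le_one₀ b0.le b1
  have b30 : 0 < b ^ 3 := by positivity
  have hyt : Q ^ 23 * y ≤ t := by
    have h1 : Q ^ 23 * y * (t * b ^ 3) ≤ t * (t * b ^ 3) := by
      calc Q ^ 23 * y * (t * b ^ 3) = Q ^ 23 * (y * (t * b ^ 3)) := by ring
        _ ≤ Q ^ 23 * (Q ^ 7 * q) := by rw [hy]; gcongr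
        _ = Q ^ 30 * q := by ring
        _ ≤ t ^ 2 * b ^ 3 := hcond
        _ = _ := by ring
    exact le_of_mul_le_mul_right h1 (by positivity)
  have hqt : 64 * q ≤ t := by
    have h1 : Q ^ 30 * q ≤ t ^ 2 * 1 := hcond.trans (by gcongr)
    have h2 : 10 ^ 10 * q ≤ Q ^ 30 * q := by gcongr; exact pw 30 (by norm_num)
    nlinarith
  have q1 : q ≤ 1 := by linarith
  have hy2 : Q ^ 14 * y ≤ t := le_trans (by gcongr; norm_num) hyt
  -- the direction from which the walks start
  obtain ⟨g0, hg0, hg0t, hg01, hg0d⟩ := hG.regular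
  have hg0n : 2 ≤ Q ^ 4 * ‖dv g0‖ ^ 2 := by
    have h1 := abs_det_le (dv g0)
    have : Q ^ 4 * |(dv g0).det| ≤ Q ^ 4 * (‖dv g0‖ ^ 2 / 2) := by gcongr
    linarith
  have hg00 : 0 < ‖dv g0‖ := by
    rcases (norm_nonneg (dv g0)).eq_or_lt with h | h
    · rw [← h] at hg0n; norm_num at hg0n
    · exact h
  have hg0q : 1 ≤ Q ^ 2 * ‖dv g0‖ := by
    by_contra! hlt
    have : (Q ^ 2 * ‖dv g0‖) ^ 2 ≤ 1 := pow_le_one₀ (by positivity) hlt.le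
    linarith [show Q ^ 4 * ‖dv g0‖ ^ 2 = (Q ^ 2 * ‖dv g0‖) ^ 2 by ring]
  have hg0t2 : t / 2 ≤ ‖dv g0‖ := by
    have h1 : Q ^ 2 * t ≤ Q ^ 2 * ‖dv g0‖ := by
      have : Q ^ 2 * t ≤ Q ^ 3 * t := by gcongr; norm_num
      linarith
    have := le_of_mul_le_mul_left h1 (by positivity)
    linarith
  obtain ⟨X0, hX0⟩ : ∃ X0, X0 = (1 / ‖dv g0‖) • dv g0 := ⟨_, rfl⟩
  have hXt : X0.trace = 0 := by rw [hX0, Matrix.trace_smul, dv_trace, smul_zero]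
  have hXn : ‖X0‖ = 1 := by
    rw [hX0, norm_smul, Real.norm_eq_abs, abs_of_pos (by positivity)]; field_simp
  have hXd : 1 ≤ Q ^ 4 * |X0.det| := by
    have e : |X0.det| = |(dv g0).det| / ‖dv g0‖ ^ 2 := by
      rw [hX0, Matrix.det_smul, abs_mul]
      simp; ring
    rw [e]
    refine hg0d.trans ?_
    gcongr
    rw [le_div_iff₀ (by positivity)]
    have : ‖dv g0‖ ^ 2 ≤ 1 := pow_le_one₀ (norm_nonneg _) hg01
    calc _ ≤ |(dv g0).det| * 1 := by gcongr
      _ = _ := mul_one _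
  have hR0 : Reach A t X0 (0 + 64 * q / t) :=
    hG.restore q0 q1 hqt hQt hδ hsel (k := 16) (by omega) hg0 hg0t hg0t2 hg01
      (c := 1 / ‖dv g0‖) (p := X0) (E := 0) (by rw [← hX0, hXn]; norm_num) (by rw [← hX0]; simp)
  -- the grid of target directions
  obtain ⟨D, hD⟩ : ∃ D, D = Q ^ 7 * y := ⟨_, rfl⟩
  have D0 : 0 < D := by rw [hD]; positivity
  obtain ⟨d, hd⟩ : ∃ d, d = Q * D / t := ⟨_, rfl⟩
  have d0 : 0 < d := by rw [hd]; positivity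
  have hdt : t * d = Q * D := by rw [hd]; field_simp
  have hdQ : Q ^ 6 * d ≤ 1 := by
    have h1 : Q ^ 6 * d * t ≤ 1 * t := by
      calc Q ^ 6 * d * t = Q ^ 14 * y := by
            rw [show Q ^ 6 * d * t = Q ^ 6 * (t * d) by ring, hdt, hD]; ring
        _ ≤ 1 * t := by linarith
    exact le_of_mul_le_mul_right h1 t0
  obtain ⟨n, hn⟩ : ∃ n, n = ⌊1 / (Q ^ 6 * d)⌋₊ := ⟨_, rfl⟩
  have hn1 : n * (Q ^ 6 * d) ≤ 1 := by
    rw [← le_div_iff₀ (by positivity), hn]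
    exact Nat.floor_le (by positivity)
  have hn2 : 1 ≤ 2 * n * (Q ^ 6 * d) := by
    have h1 : 1 / (Q ^ 6 * d) < n + 1 := by rw [hn]; exact Nat.lt_floor_add_one _
    rw [div_lt_iff₀ (by positivity)] at h1
    by_cases h2 : n = 0
    · exfalso
      rw [h2] at hn
      have := Nat.floor_eq_zero.1 hn.symm
      rw [div_lt_one (by positivity)] at this
      linarith
    · have : (1 : ℝ) ≤ n := by exact_mod_cast Nat.one_le_iff_ne_zero.2 h2
      have : 1 * (Q ^ 6 * d) ≤ n * (Q ^ 6 * d) := by gcongr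
      linarith
  have hdn : 10 ^ 10 * (Q ^ 5 * (d * n)) ≤ 1 := by
    calc 10 ^ 10 * (Q ^ 5 * (d * n)) ≤ Q * (Q ^ 5 * (d * n)) := by gcongr
      _ = n * (Q ^ 6 * d) := by ring
      _ ≤ 1 := hn1
  have hdn2 : 10 ^ 10 * (d * n) ≤ 1 := by
    have : 1 * (d * n) ≤ Q ^ 5 * (d * n) := by gcongr; exact one_le_pow₀ Q1
    linarith
  obtain ⟨p, hp1, hp2, hp3⟩ := plane_grid hXt hXn d0 n (by linarith)
  have hreach : ∀ i, Reach A t (p i) (Q ^ 7 * ‖dv h‖) := by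
    intro i
    refine hG.walk q0 q1 hqt hQt hδ hsel hL hh hht hy1 (by rw [← hy]; exact hy2) hXn hXd (hp1 i)
      ?_ (E := 64 * q / t + 4 * (d * n)) ?_ ?_
    · have : Q ^ 5 * ‖p i - X0‖ ≤ Q ^ 5 * (4 * (d * n)) := by gcongr; exact hp2 i
      linarith
    · have h1 : 64 * q / t ≤ y := by
        rw [div_le_iff₀ t0]
        have h2 : 10 ^ 10 * q ≤ Q ^ 7 * q := by gcongr; exact pw 7 (by norm_num)
        rw [← hy] at hy1
        linarith
      have h3 : 10 ^ 10 * (Q ^ 5 * y) ≤ 1 := by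
        calc 10 ^ 10 * (Q ^ 5 * y) ≤ Q ^ 9 * (Q ^ 5 * y) := by gcongr; exact pw 9 (by norm_num)
          _ = Q ^ 14 * y := by ring
          _ ≤ 1 := by linarith
      have h4 : Q ^ 5 * (64 * q / t) ≤ Q ^ 5 * y := by gcongr
      linarith
    · obtain ⟨g, a1, a2, c, a3⟩ := hR0
      refine ⟨g, a1, a2, c, ?_⟩
      have e : c • dv g - p i = (c • dv g - X0) - (p i - X0) := by abel
      rw [e]
      exact (norm_sub_le _ _).trans (by linarith [hp2 i])
  rw [← hy, ← hD] at hreach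
  choose g hg hgt c hc using hreach
  have hsmall : ∀ {x}, x ∈ A ^ 2 → 0 ≤ x.trace ∧ ‖dv x‖ ≤ 1 / 4 := by
    intro x hx
    have h := hA.near60 (by norm_num) hx
    refine ⟨(trace_nonneg_of_near (h.trans (by norm_num))).trans' zero_le_one, ?_⟩
    rw [← dv_sub_one]
    exact (norm_dv_le _).trans (h.trans (by norm_num))
  have hbd2 := hA.bdd_pow 2
  have hBig : ∀ i, Bdd (Big A (g i) q t) := fun i => hbd2.mono fun x hx => hx.1.1
  have hcard : ∀ i, ∃ P : Finset M2, (↑P ⊆ Big A (g i) q t) ∧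
      (∀ x ∈ P, ∀ y ∈ P, ‖x - y‖ ≤ 2 * q → x = y) ∧
      t ^ 4 * N q A ≤ ((7:ℝ) ^ 4 * P.card) ^ 3 := by
    intro i
    obtain ⟨P, h1, h2, -, h4⟩ := exists_sep (hBig i) (e := 2 * q) (by positivity)
    refine ⟨P, h1, h2, ?_⟩
    have h5 := hG.dich (k := 1) (by omega) (hg i) (hsmall (hg i)).1 rfl (t0.trans_le (hgt i))
      (by linarith [(hsmall (hg i)).2]) q0 q1 (hδ.trans (by gcongr; linarith [hgt i]))
      (by linarith) hQt (hsel _ (by linarith [hgt i]) (by linarith [(hsmall (hg i)).2]))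
    refine h5.trans ?_
    have h6 := N_scale (hBig i) q0 (l := 2) (by norm_num)
    have h7 : N q (Big A (g i) q t) ≤ 7 ^ 4 * P.card := by
      refine h6.trans ?_
      norm_num
      exact h4
    have := N_nonneg q (Big A (g i) q t)
    gcongr
  choose P hP1 hP2 hP3 using hcard
  have hqD : q ≤ D := by
    have h1 : Q ^ 7 * q ≤ 1 * y := by
      rw [← hy] at hy1
      exact hy1.trans (by gcongr; linarith)
    have h2 : 1 * q ≤ Q ^ 7 * q := by gcongr; exact one_le_pow₀ Q1
    have h3 : 1 * y ≤ Q ^ 7 * y := by gcongr; exact one_le_pow₀ Q1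
    rw [hD]; linarith
  have hDt : 10 ^ 10 * D ≤ t := by
    calc 10 ^ 10 * D ≤ Q ^ 7 * D := by gcongr; exact pw 7 (by norm_num)
      _ = Q ^ 14 * y := by rw [hD]; ring
      _ ≤ t := hy2
  have hpn : ∀ i, 3 / 4 ≤ ‖p i‖ ∧ ‖p i‖ ≤ 2 := by
    intro i
    have h1 := norm_sub_norm_le (p i) X0
    have h2 := norm_sub_norm_le X0 (p i)
    rw [norm_sub_rev, hXn] at h2
    rw [hXn] at h1
    have := hp2 i
    constructor <;> linarith
  have hcount : (((Finset.univ : Finset (Fin n × Fin n)).sigma P).card : ℝ) ≤ N q (A ^ 2) := by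
    refine inj_count _ (fun x => x.2) hbd2 q0 ?_ ?_
    · rintro ⟨i, x⟩ hx
      exact (hP1 i (Finset.mem_sigma.1 hx).2).1.1
    · rintro ⟨i, x⟩ hx ⟨j, x'⟩ hx' hxx
      have hx := (Finset.mem_sigma.1 hx).2
      have hx' := (Finset.mem_sigma.1 hx').2
      simp only at hx hx' hxx
      have hij : i = j := by
        by_contra hne
        have b1 := hP1 i hx
        have b2 := hP1 j hx'
        have := line_sep (y := x) (y' := x') q0 hqD
          (by rw [hdt]; have : 10 ^ 10 * D ≤ Q * D := by gcongr
              linarith) (by linarith) b1.2 (hsmall b1.1.1).2 b1.1.2 (hsmall b2.1.1).2 b2.2 b2.1.2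
              (hc i) (hc j) (hpn i).1 (hpn j).1 (hpn i).2 d0 (hp3 i j hne)
        linarith
      subst hij
      rw [hP2 i x hx x' hx' hxx]
  have hNA : N q (A ^ 2) ≤ Q * N q A := by
    refine (N_mono (hA.bdd_pow _) (hA.pow_mono (l := 2 * m) (by omega) ?_) q0).trans
      (hG.cov q (hδ.trans ?_) q1)
    · exact ⟨m - 1, by omega⟩
    · have : t / 2 * q ≤ 1 * q := by gcongr; linarith
      linarith
  have hNp := N_pos hA.bdd hA.ne q0
  -- the real number `μ` bounds the cardinality of every `P i` from below
  obtain ⟨μ, μ0, hμ⟩ : ∃ μ : ℝ, 0 ≤ μ ∧ μ ^ 3 = t ^ 4 * N q A := by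
    refine ⟨(t ^ 4 * N q A) ^ ((1:ℝ) / 3), by positivity, ?_⟩
    rw [← Real.rpow_natCast, ← Real.rpow_mul (by positivity)]
    norm_num
  have hPμ : ∀ i, μ ≤ 7 ^ 4 * (P i).card := by
    intro i
    have := hP3 i
    rw [← hμ] at this
    exact le_of_pow_le_pow_left₀ (by norm_num) (by positivity) this
  have hsum : (n : ℝ) ^ 2 * μ ≤ 7 ^ 4 * (Q * N q A) := by
    have h1 : ∑ i : Fin n × Fin n, μ ≤ ∑ i : Fin n × Fin n, 7 ^ 4 * ((P i).card : ℝ) :=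
      Finset.sum_le_sum fun i _ => hPμ i
    rw [Finset.sum_const, ← Finset.mul_sum, Finset.card_univ, Fintype.card_prod, Fintype.card_fin,
      nsmul_eq_mul] at h1
    rw [Finset.card_sigma] at hcount
    push_cast at hcount h1
    calc (n : ℝ) ^ 2 * μ = n * n * μ := by ring
      _ ≤ _ := h1
      _ ≤ 7 ^ 4 * (Q * N q A) := by gcongr; exact hcount.trans hNA
  have h74 : (7:ℝ) ^ 4 ≤ Q := by
    have : (7:ℝ) ^ 4 ≤ 10 ^ 10 := by norm_num
    linarith
  have hcube : (n : ℝ) ^ 6 * t ^ 4 ≤ Q ^ 6 * N q A ^ 2 := by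
    have h1 : ((n : ℝ) ^ 2 * μ) ^ 3 ≤ (Q * (Q * N q A)) ^ 3 := by
      have : (n : ℝ) ^ 2 * μ ≤ Q * (Q * N q A) := hsum.trans (by gcongr)
      gcongr
    have h2 : (n : ℝ) ^ 6 * t ^ 4 * N q A ≤ Q ^ 6 * N q A ^ 2 * N q A := by
      calc (n : ℝ) ^ 6 * t ^ 4 * N q A = ((n : ℝ) ^ 2 * μ) ^ 3 := by
            rw [mul_pow, hμ]; ring
        _ ≤ _ := h1
        _ = _ := by ring
    exact le_of_mul_le_mul_right h2 (by linarith)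
  -- the number of directions is at least `t ^ 2 * b ^ 3 / q`, up to powers of `Q`
  have hnq : t ^ 2 * b ^ 3 ≤ 2 * n * Q ^ 21 * q := by
    have h1 : Q ^ 6 * d * (t ^ 2 * b ^ 3) ≤ Q ^ 21 * q := by
      calc Q ^ 6 * d * (t ^ 2 * b ^ 3) = Q ^ 14 * (y * (t * b ^ 3)) := by
            rw [show Q ^ 6 * d * (t ^ 2 * b ^ 3) = Q ^ 6 * (t * d) * (t * b ^ 3) by ring, hdt, hD]
            ring
        _ ≤ Q ^ 14 * (Q ^ 7 * q) := by rw [hy]; gcongr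
        _ = _ := by ring
    calc t ^ 2 * b ^ 3 = 1 * (t ^ 2 * b ^ 3) := (one_mul _).symm
      _ ≤ 2 * n * (Q ^ 6 * d) * (t ^ 2 * b ^ 3) := by gcongr
      _ = 2 * n * (Q ^ 6 * d * (t ^ 2 * b ^ 3)) := by ring
      _ ≤ 2 * n * (Q ^ 21 * q) := by gcongr
      _ = _ := by ring
  calc t ^ 16 * b ^ 18 = (t ^ 2 * b ^ 3) ^ 6 * t ^ 4 := by ring
    _ ≤ (2 * n * Q ^ 21 * q) ^ 6 * t ^ 4 := by gcongr
    _ = 64 * Q ^ 126 * q ^ 6 * (n ^ 6 * t ^ 4) := by ring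
    _ ≤ Q * Q ^ 126 * q ^ 6 * (Q ^ 6 * N q A ^ 2) := by gcongr; linarith
    _ = Q ^ 133 * q ^ 6 * N q A ^ 2 := by ring
    _ ≤ Q ^ 150 * q ^ 6 * N q A ^ 2 := by gcongr; norm_num

end good

/-! ### Propagation to smaller scales -/

/-- The property of a pair of scales needed to run the walk, for the sequence `a` of logarithms of
covering numbers: the growth of `a` over the window `[j, j + P + 1]` is controlled by `a` itself. -/
def GoodPair (a : ℕ → ℝ) (J P j : ℕ) : Prop :=
  20 ≤ P ∧ J * P ≤ j ∧ ∀ i ≤ P, 2 * (a (j + i + 1) - a j) + a P / 5 ≤ 2 * a i + a P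

section good
variable {A : Set M2} {δ Q : ℝ} {m : ℕ} (hG : Good A δ Q m)
include hG

set_option maxHeartbeats 1000000 in
/-- A good pair of scales forces the dimension of `A` at the scale `δ` to be almost `3`: the walk
gives this at the scale `b ^ j`, and the class-counting inequality for elements at distance about
`b ^ i` from `1` transports it from the scale `b ^ i` to the scale `b ^ (i + j)`. -/
lemma Good.final {b τ : ℝ} {M κ L J P j : ℕ} {a : ℕ → ℝ} (b0 : 0 < b) (b1 : b ≤ 1 / 2)
    (hδ : δ = b ^ M) (hκ : 1000 ≤ κ) (hκτ : 50 ≤ τ * κ) (hQb : Q ^ κ * b ≤ 1)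
    (ha : ∀ k ≤ M, Real.log (N (b ^ k) A) = a k * (-Real.log b)) (haP : τ * P ≤ a P)
    (hJ : 10 ≤ J) (hgp : GoodPair a J P j) (hM : j + P + 1 ≤ M) (hL : 4 * L + 53 ≤ m)
    (hsmall : ∀ r, δ ≤ r → r ≤ 1 →
      ∃ h ∈ A ^ (2 * L), 0 ≤ h.trace ∧ b ^ 3 * r ≤ ‖dv h‖ ∧ ‖dv h‖ ≤ r ∧ ‖dv h‖ ≤ 1 / 10) :
    3 * (M : ℝ) * J ≤ a M * J + 3 * (j + 3) * J + 14 * M := by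
  have hA := hG.toSym
  have bA := hA.bdd
  have hne := hA.ne
  have Q0 := hG.Q0
  have hQ := hG.Q10
  have Q1 : 1 ≤ Q := hG.Q1
  obtain ⟨hP, hj, hgp⟩ := hgp
  obtain ⟨ℓ, hℓ⟩ : ∃ ℓ, ℓ = -Real.log b := ⟨_, rfl⟩
  rw [← hℓ] at ha
  have ℓ0 : 0 < ℓ := by
    have := Real.log_neg b0 (by linarith : b < 1); linarith
  have hP' : (20 : ℝ) ≤ P := by exact_mod_cast hP
  have hj2 : 10 * P ≤ j := le_trans (by gcongr) hj
  have hlogb : ∀ k : ℕ, Real.log (b ^ k) = -(k * ℓ) := fun k => by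
    rw [Real.log_pow, hℓ]; ring
  have lQ0 : 0 ≤ Real.log Q := Real.log_nonneg Q1
  have hlogQ : κ * Real.log Q ≤ ℓ := by
    have h := Real.log_le_log (by positivity) hQb
    rw [Real.log_mul (by positivity) b0.ne', Real.log_pow, Real.log_one] at h
    linarith
  have hlogQ1 : 1000 * Real.log Q ≤ ℓ := by
    have : (1000 : ℝ) * Real.log Q ≤ κ * Real.log Q := by
      have : (1000 : ℝ) ≤ κ := by exact_mod_cast hκ
      gcongr
    linarith
  have hQb' : Q ^ 1000 * b ≤ 1 := le_trans (by gcongr) hQb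
  have bpow : ∀ {i k : ℕ}, i ≤ k → b ^ k ≤ b ^ i := fun h =>
    pow_le_pow_of_le_one b0.le (by linarith) h
  have Np : ∀ {e : ℝ}, 0 < e → 1 ≤ N e A := fun he => N_pos bA hne he
  have lpos : ∀ {e : ℝ}, 0 < e → 0 < N e A := fun he => lt_of_lt_of_le one_pos (Np he)
  have hamono : ∀ {i k : ℕ}, i ≤ k → k ≤ M → a i ≤ a k := by
    intro i k hik hkM
    have h1 : N (b ^ i) A ≤ N (b ^ k) A := N_anti bA (by positivity) (bpow hik)
    have h2 := Real.log_le_log (lpos (by positivity)) h1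
    rw [ha i (hik.trans hkM), ha k hkM] at h2
    exact le_of_mul_le_mul_right h2 ℓ0
  have q0 : 0 < b ^ j := by positivity
  have t0 : 0 < b ^ P := by positivity
  -- the inequality between covering numbers at the scales of the good pair
  have hsel : ∀ s, b ^ P / 2 ≤ s → s ≤ 1 →
      Q ^ 200 * N (s * b ^ j) A ^ 2 ≤ N (b ^ j) A ^ 2 * N s A ^ 2 * N (b ^ P) A := by
    intro s hs1 hs2
    have s0 : 0 < s := by linarith
    have hex : ∃ i, b ^ (i + 1) ≤ s := by
      refine ⟨P, le_trans ?_ hs1⟩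
      rw [pow_succ]
      nlinarith
    classical
    have hiP : Nat.find hex ≤ P := by
      refine Nat.find_min' hex (le_trans ?_ hs1)
      rw [pow_succ]
      nlinarith
    have hi1 := Nat.find_spec hex
    have hi2 : s ≤ b ^ (Nat.find hex) := by
      rcases Nat.eq_zero_or_pos (Nat.find hex) with h | h
      · rw [h, pow_zero]; exact hs2
      · have := Nat.find_min hex (m := Nat.find hex - 1) (by omega)
        rw [Nat.sub_add_cancel h] at this
        exact (not_le.1 this).le
    generalize Nat.find hex = i at hiP hi1 hi2
    have n1 : N (s * b ^ j) A ≤ N (b ^ (j + i + 1)) A := by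
      refine N_anti bA (by positivity) ?_
      rw [show b ^ (j + i + 1) = b ^ (i + 1) * b ^ j by ring]
      gcongr
    have n2 : N (b ^ i) A ≤ N s A := N_anti bA s0 hi2
    have p1 := lpos (e := b ^ (j + i + 1)) (by positivity)
    have p2 := lpos (e := b ^ i) (by positivity)
    have p3 := lpos (e := b ^ j) (by positivity)
    have p4 := lpos (e := b ^ P) (by positivity)
    have p5 := lpos (e := s * b ^ j) (by positivity)
    have main : Q ^ 200 * N (b ^ (j + i + 1)) A ^ 2
        ≤ N (b ^ j) A ^ 2 * N (b ^ i) A ^ 2 * N (b ^ P) A := by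
      rw [← Real.log_le_log_iff (by positivity) (by positivity),
        Real.log_mul (by positivity) (by positivity), Real.log_mul (by positivity) (by positivity),
        Real.log_mul (by positivity) (by positivity), Real.log_pow, Real.log_pow, Real.log_pow,
        Real.log_pow, ha _ (by omega), ha _ (by omega), ha _ (by omega), ha _ (by omega)]
      push_cast
      have g1 := mul_le_mul_of_nonneg_right (hgp i hiP) ℓ0.le
      have g2 : 200 * Real.log Q ≤ a P / 5 * ℓ := by
        have h1 : 50 * Real.log Q ≤ τ * ℓ := by
          have κ0 : (0 : ℝ) < κ := by
            have : 0 < κ := by omega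
            exact_mod_cast this
          have τ0 : 0 ≤ τ := by
            by_contra! hneg
            nlinarith
          calc 50 * Real.log Q ≤ τ * κ * Real.log Q := by gcongr
            _ = τ * (κ * Real.log Q) := by ring
            _ ≤ τ * ℓ := by gcongr
        have h2 : τ * 20 * ℓ ≤ a P * ℓ := by
          have τ0 : 0 ≤ τ := by
            by_contra! hneg
            have κ0 : (0 : ℝ) ≤ κ := by positivity
            nlinarith
          gcongr
          exact le_trans (by gcongr) haP
        linarith
      linarith
    calc _ ≤ Q ^ 200 * N (b ^ (j + i + 1)) A ^ 2 := by gcongr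
      _ ≤ _ := main
      _ ≤ _ := by gcongr
  have hQt : Q ^ 3 * b ^ P ≤ 1 := by
    calc Q ^ 3 * b ^ P ≤ Q ^ 1000 * b ^ 1 := by
          gcongr ?_ * ?_
          · exact pow_le_pow_right₀ Q1 (by norm_num)
          · exact bpow (by omega)
      _ ≤ 1 := by rwa [pow_one]
  have hδt : δ ≤ b ^ P / 2 * b ^ j := by
    rw [hδ]
    calc b ^ M ≤ b ^ (j + P + 1) := bpow hM
      _ = b ^ P * b * b ^ j := by ring
      _ ≤ b ^ P * (1 / 2) * b ^ j := by gcongr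
      _ = _ := by ring
  have hcond : Q ^ 30 * b ^ j ≤ (b ^ P) ^ 2 * b ^ 3 := by
    have h1 : Q ^ 30 * b ≤ 1 := le_trans (by gcongr; norm_num) hQb'
    calc Q ^ 30 * b ^ j ≤ Q ^ 30 * b ^ (1 + (P * 2 + 3)) := by
          gcongr ?_ * ?_; exact bpow (by omega)
      _ = Q ^ 30 * b * ((b ^ P) ^ 2 * b ^ 3) := by ring
      _ ≤ 1 * ((b ^ P) ^ 2 * b ^ 3) := by gcongr
      _ = _ := one_mul _
  have htb : b ^ P * b ^ 3 ≤ 1 := by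
    rw [← pow_add]; exact pow_le_one₀ b0.le (by linarith)
  have htb0 : 0 < b ^ P * b ^ 3 := by positivity
  -- the dimension at the scale `b ^ j`
  have hdim : 6 * (j : ℝ) - 16 * P - 19 ≤ 2 * a j := by
    obtain ⟨h, hh, ht, h1, h2, -⟩ := hsmall (Q ^ 7 * b ^ j / (b ^ P * b ^ 3))
      (by rw [le_div_iff₀ htb0, hδ]
          calc b ^ M * (b ^ P * b ^ 3) ≤ b ^ j * 1 := by gcongr ?_ * ?_; exact bpow (by omega)
            _ ≤ Q ^ 7 * b ^ j := by
              have : 1 * b ^ j ≤ Q ^ 7 * b ^ j := by gcongr; exact one_le_pow₀ Q1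
              linarith)
      (by rw [div_le_one htb0]
          have h1 : Q ^ 7 * b ^ j ≤ Q ^ 30 * b ^ j := by gcongr; norm_num
          have h2 : (b ^ P) ^ 2 * b ^ 3 = b ^ P * (b ^ P * b ^ 3) := by ring
          have h3 : b ^ P * (b ^ P * b ^ 3) ≤ 1 * (b ^ P * b ^ 3) := by
            gcongr; exact pow_le_one₀ b0.le (by linarith)
          linarith)
    have e1 : b ^ P * (b ^ 3 * (Q ^ 7 * b ^ j / (b ^ P * b ^ 3))) = Q ^ 7 * b ^ j := by field_simp
    have h3 : Q ^ 7 * b ^ j ≤ b ^ P * ‖dv h‖ := by rw [← e1]; gcongr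
    have h4 : ‖dv h‖ * (b ^ P * b ^ 3) ≤ Q ^ 7 * b ^ j := by rwa [← le_div_iff₀ htb0]
    have h5 := hG.dim_lower q0 b0 (by linarith) hQt t0 hδt hcond hsel hL hh ht h3 h4
    have p3 := lpos (e := b ^ j) (by positivity)
    have h6 := Real.log_le_log (by positivity) h5
    have f1 : Real.log ((b ^ P) ^ 16) = -(16 * (P * ℓ)) := by
      rw [Real.log_pow, hlogb]; push_cast; ring
    have f2 : Real.log (b ^ 18) = -(18 * ℓ) := by
      rw [hlogb]; push_cast; ring
    have f3 : Real.log (Q ^ 150) = 150 * Real.log Q := by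
      rw [Real.log_pow]; push_cast; ring
    have f4 : Real.log ((b ^ j) ^ 6) = -(6 * (j * ℓ)) := by
      rw [Real.log_pow, hlogb]; push_cast; ring
    have f5 : Real.log (N (b ^ j) A ^ 2) = 2 * (a j * ℓ) := by
      rw [Real.log_pow, ha _ (by omega)]; push_cast; ring
    rw [Real.log_mul (by positivity) (by positivity), Real.log_mul (by positivity) (by positivity),
      Real.log_mul (by positivity) (by positivity), f1, f2, f3, f4, f5] at h6
    have h7 : (6 * (j : ℝ) - 16 * P - 19) * ℓ ≤ 2 * a j * ℓ := by linarith
    exact le_of_mul_le_mul_right h7 ℓ0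
  -- transport from the scale `b ^ i` to the scale `b ^ (i + j + 3)`
  have hstep : ∀ i, i + j + 3 ≤ M → a i + (3 * (j + 3 : ℕ) - 12 * P - 24) ≤ a (i + (j + 3)) := by
    intro i hi
    obtain ⟨h, hh, ht, h1, h2, h3⟩ := hsmall (b ^ i) (by rw [hδ]; exact bpow (by omega))
      (pow_le_one₀ b0.le (by linarith))
    have s0 : 0 < ‖dv h‖ := lt_of_lt_of_le (by positivity) h1
    have q1 : b ^ j ≤ 1 := pow_le_one₀ b0.le (by linarith)
    have e1 : b ^ (i + (j + 3)) ≤ ‖dv h‖ * b ^ j := by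
      calc b ^ (i + (j + 3)) = b ^ 3 * b ^ i * b ^ j := by ring
        _ ≤ _ := by gcongr
    have h4 := hG.cent (k := L) (by omega) hh ht rfl s0 (by linarith) q0 q1
      (by rw [hδ]; exact (bpow (by omega)).trans e1)
    have h5 := hG.cent_le q0 q1 (norm_pos_iff.1 s0)
    have n1 : N (‖dv h‖ * b ^ j) A ≤ N (b ^ (i + (j + 3))) A := N_anti bA (by positivity) e1
    have n2 : N (b ^ i) A ≤ N ‖dv h‖ A := N_anti bA s0 h2
    have p1 := lpos (e := b ^ (i + (j + 3))) (by positivity)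
    have p2 := lpos (e := b ^ i) (by positivity)
    have p3 := lpos (e := b ^ j) (by positivity)
    have p5 := lpos (e := ‖dv h‖ * b ^ j) (by positivity)
    have c0 := N_nonneg (b ^ j) (Cent A h (b ^ j))
    generalize N (b ^ j) (Cent A h (b ^ j)) = C at h4 h5 c0
    have main : (b ^ j) ^ 3 * N (b ^ j) A ^ 3 * N (b ^ i) A ^ 2
        ≤ Q ^ 108 * N (b ^ (i + (j + 3))) A ^ 2 := by
      calc (b ^ j) ^ 3 * N (b ^ j) A ^ 3 * N (b ^ i) A ^ 2
          ≤ (b ^ j) ^ 3 * N (b ^ j) A ^ 3 * N ‖dv h‖ A ^ 2 := by gcongr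
        _ = (b ^ j) ^ 3 * (N (b ^ j) A ^ 3 * N ‖dv h‖ A ^ 2) := by ring
        _ ≤ (b ^ j) ^ 3 * (Q ^ 102 * N (‖dv h‖ * b ^ j) A ^ 2 * C ^ 3) := by gcongr
        _ = Q ^ 102 * N (‖dv h‖ * b ^ j) A ^ 2 * (b ^ j * C) ^ 3 := by ring
        _ ≤ Q ^ 102 * N (b ^ (i + (j + 3))) A ^ 2 * (Q ^ 2) ^ 3 := by gcongr
        _ = _ := by ring
    have h6 := Real.log_le_log (by positivity) main
    have f1 : Real.log ((b ^ j) ^ 3) = -(3 * (j * ℓ)) := by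
      rw [Real.log_pow, hlogb]; push_cast; ring
    have f2 : Real.log (N (b ^ j) A ^ 3) = 3 * (a j * ℓ) := by
      rw [Real.log_pow, ha _ (by omega)]; push_cast; ring
    have f3 : Real.log (N (b ^ i) A ^ 2) = 2 * (a i * ℓ) := by
      rw [Real.log_pow, ha _ (by omega)]; push_cast; ring
    have f4 : Real.log (Q ^ 108) = 108 * Real.log Q := by
      rw [Real.log_pow]; push_cast; ring
    have f5 : Real.log (N (b ^ (i + (j + 3))) A ^ 2) = 2 * (a (i + (j + 3)) * ℓ) := by
      rw [Real.log_pow, ha _ (by omega)]; push_cast; ring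
    rw [Real.log_mul (by positivity) (by positivity), Real.log_mul (by positivity) (by positivity),
      Real.log_mul (by positivity) (by positivity), f1, f2, f3, f4, f5] at h6
    push_cast
    have h7 : (-3 * (j : ℝ) + 3 * a j + 2 * a i) * ℓ ≤ (1 + 2 * a (i + (j + 3))) * ℓ := by linarith
    have h8 := le_of_mul_le_mul_right h7 ℓ0
    linarith
  have ha0 : 0 ≤ a 0 := by
    have h1 := Real.log_nonneg (Np (e := b ^ 0) (by positivity))
    rw [ha 0 (by omega)] at h1
    exact nonneg_of_mul_nonneg_left h1 ℓ0
  obtain ⟨j', hj'⟩ : ∃ j', j' = j + 3 := ⟨_, rfl⟩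
  rw [← hj'] at hstep
  have hiter : ∀ k : ℕ, k * j' ≤ M → (k : ℝ) * (3 * j' - 12 * P - 24) ≤ a (k * j') := by
    intro k
    induction k with
    | zero => intro _; simpa using ha0
    | succ k ih =>
      intro hk
      have e : (k + 1) * j' = k * j' + j' := by ring
      rw [e] at hk ⊢
      have h1 := hstep (k * j') (by omega)
      have h2 := ih (by omega)
      push_cast
      linarith
  have hk1 : M / j' * j' ≤ M := Nat.div_mul_le_self M j'
  have hk2 : M < M / j' * j' + j' := by
    have := Nat.lt_div_mul_add (a := M) (b := j') (by omega)
    exact this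
  have h1 := (hiter _ hk1).trans (hamono hk1 le_rfl)
  generalize M / j' = k at hk1 hk2 h1
  have r1 : (k : ℝ) * j' ≤ M := by exact_mod_cast hk1
  have r2 : (M : ℝ) ≤ k * j' + j' := by exact_mod_cast hk2.le
  have r3 : (J : ℝ) * P ≤ j' := by
    have : J * P ≤ j' := by omega
    exact_mod_cast this
  have r4 : (k : ℝ) * (J * P) ≤ M := le_trans (by gcongr) r1
  have J0 : (0 : ℝ) ≤ J := by positivity
  have r5 : (k : ℝ) * (3 * j' - 14 * P) ≤ a M := by
    refine le_trans (mul_le_mul_of_nonneg_left ?_ (Nat.cast_nonneg k)) h1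
    linarith
  have r6 := mul_le_mul_of_nonneg_right r5 J0
  have r7 := mul_le_mul_of_nonneg_right r2 J0
  have r8 : (j' : ℝ) = j + 3 := by rw [hj']; push_cast; ring
  rw [r8] at r5 r6 r7
  linarith
end good

/-! ### Selection of scales -/

/-- A minimizer `P` of `a P / P ^ 2` on an interval: at this scale `a` is almost superquadratic. -/
lemma regular_scale {a : ℕ → ℝ} {τ : ℝ} (ha : ∀ k, τ * k ≤ a k)
    (ha5 : ∀ k, a k ≤ 5 * k) {L M0 : ℕ} (hL : 20 ≤ τ * L) (hL1 : 1 ≤ L) (hM : 1 ≤ M0) :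
    ∃ P, 4 * M0 ≤ P ∧ P ≤ L * M0 ∧
      ∀ i, P ≤ 4 * i → i ≤ P → (i : ℝ) ^ 2 * a P ≤ a i * (P : ℝ) ^ 2 := by
  have hne : (Finset.Icc M0 (L * M0)).Nonempty := ⟨M0, by simp; nlinarith⟩
  obtain ⟨P, hP, hmin⟩ := Finset.exists_min_image (Finset.Icc M0 (L * M0))
    (fun k => a k / (k : ℝ) ^ 2) hne
  rw [Finset.mem_Icc] at hP
  have hM' : (1 : ℝ) ≤ M0 := by exact_mod_cast hM
  have hPr : (M0 : ℝ) ≤ P := by exact_mod_cast hP.1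
  have hL' : (1 : ℝ) ≤ L := by exact_mod_cast hL1
  have P0 : (0 : ℝ) < P := by linarith
  have h4 : 4 * M0 ≤ P := by
    have h1 := hmin (L * M0) (by simp; nlinarith)
    have LM : (0 : ℝ) < L * M0 := by positivity
    push_cast at h1
    have h2 : τ / P ≤ a P / (P : ℝ) ^ 2 := by
      rw [div_le_div_iff₀ P0 (by positivity)]
      nlinarith [ha P]
    have h3 : a (L * M0) / ((L : ℝ) * M0) ^ 2 ≤ 5 / (L * M0) := by
      rw [div_le_div_iff₀ (by positivity) LM]
      have := ha5 (L * M0)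
      push_cast at this
      nlinarith
    have h5 := (h2.trans h1).trans h3
    rw [div_le_div_iff₀ P0 LM] at h5
    have h6 : (20 : ℝ) * M0 ≤ τ * L * M0 := by gcongr
    have : (4 : ℝ) * M0 ≤ P := by linarith
    exact_mod_cast this
  refine ⟨P, h4, hP.2, fun i hi1 hi2 => ?_⟩
  have hi0 : M0 ≤ i := by omega
  have h1 := hmin i (by rw [Finset.mem_Icc]; exact ⟨hi0, hi2.trans hP.2⟩)
  have i0 : (0 : ℝ) < i := by
    have : (M0 : ℝ) ≤ i := by exact_mod_cast hi0
    linarith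
  rw [div_le_div_iff₀ (by positivity) (by positivity)] at h1
  linarith

/-- If the mean slope of `a` up to `Z` is at most `1.05 φ`, there is a starting point from which
the increments have slope at most `1.1 φ`. -/
lemma flat_start {a : ℕ → ℝ} (hmono : Monotone a) {J P Z N' : ℕ} (h0 : 0 ≤ a (J * P))
    {φ : ℝ} (hφ : 0 < φ) (hP : 1 ≤ P) (hN : N' = 25 * (J + 2)) (hZ : N' * P ≤ Z)
    (haZ : a Z ≤ 1.05 * φ * Z) :
    ∃ j, J * P ≤ j ∧ j ≤ Z ∧ ∀ i ≤ P + 1, a (j + i) - a j ≤ 1.1 * φ * i := by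
  classical
  by_contra! hcon
  set S := (Finset.Icc (J * P) Z).filter (fun j : ℕ => 1.1 * φ * ((j : ℝ) - (J * P : ℕ)) ≤ a j) with hS
  have hJZ : J * P ≤ Z := by subst hN; nlinarith
  have hne : S.Nonempty := ⟨J * P, by simpa [hS, hJZ] using h0⟩
  have hmax := S.max'_mem hne
  set j := S.max' hne with hj
  rw [hS, Finset.mem_filter, Finset.mem_Icc] at hmax
  obtain ⟨i, hi1, hi2⟩ := hcon j hmax.1.1 hmax.1.2
  have i0 : i ≠ 0 := by rintro rfl; simp at hi2
  have hZj : Z < j + i := by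
    by_contra! hle
    have hmem : j + i ∈ S := by
      rw [hS, Finset.mem_filter, Finset.mem_Icc]
      refine ⟨⟨by omega, hle⟩, ?_⟩
      push_cast at hmax ⊢
      linarith [hmax.2]
    have := S.le_max' _ hmem
    omega
  have h1 : a j ≤ a Z := hmono hmax.1.2
  have h2 := hmax.2
  have h3 : (Z : ℝ) ≤ j + P + 1 := by
    have : Z ≤ j + P + 1 := by omega
    exact_mod_cast this
  have h4 : ((25 * (J + 2) * P : ℕ) : ℝ) ≤ Z := by rw [← hN]; exact_mod_cast hZ
  push_cast at h2 h4
  have hP' : (1 : ℝ) ≤ P := by exact_mod_cast hP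
  have h5 : 1.1 * ((j : ℝ) - J * P) * φ ≤ 1.05 * Z * φ := by linarith
  have h6 := le_of_mul_le_mul_right h5 hφ
  nlinarith

/-- At a regular scale `P`, as provided by `regular_scale`, a flat start `j` as in `flat_start` gives a
good pair. -/
lemma goodPair_of {a : ℕ → ℝ} {τ : ℝ} (τ0 : 0 < τ) (ha : ∀ k, τ * k ≤ a k) {J P j : ℕ}
    (hP : 20 ≤ P) (hreg : ∀ i, P ≤ 4 * i → i ≤ P → (i : ℝ) ^ 2 * a P ≤ a i * (P : ℝ) ^ 2)
    (hj : J * P ≤ j) {φ : ℝ} (hφ : a P = φ * P) (φ0 : 0 < φ)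
    (hinc : ∀ i ≤ P + 1, a (j + i) - a j ≤ 1.1 * φ * i) : GoodPair a J P j := by
  refine ⟨hP, hj, fun i hi => ?_⟩
  have hP' : (20 : ℝ) ≤ P := by exact_mod_cast hP
  have h1 := hinc (i + 1) (by omega)
  rw [← add_assoc] at h1
  push_cast at h1
  have hi' : (i : ℝ) ≤ P := by exact_mod_cast hi
  have hi0 : (0 : ℝ) ≤ i := by positivity
  have a0 : 0 ≤ a i := le_trans (by positivity) (ha i)
  rw [hφ]
  rcases le_or_gt P (4 * i) with h | h
  · have h2 := hreg i h hi
    rw [hφ] at h2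
    have h3 : φ * ((i : ℝ) ^ 2) ≤ a i * P := by
      have : φ * ((i : ℝ) ^ 2) * P ≤ a i * P * P := by linarith
      exact le_of_mul_le_mul_right this (by linarith)
    have h4 : (2.2 * (i + 1) * P + P ^ 2 / 5 : ℝ) ≤ 2 * i ^ 2 + P ^ 2 := by
      nlinarith [sq_nonneg (2 * (i : ℝ) - 1.1 * P)]
    have h5 : φ * (2.2 * (i + 1) * P + P ^ 2 / 5 : ℝ) ≤ φ * (2 * i ^ 2 + P ^ 2) := by gcongr
    have h6 : (2.2 * φ * (i + 1) + φ * P / 5) * P ≤ (2 * a i + φ * P) * P := by nlinarith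
    have := le_of_mul_le_mul_right h6 (by linarith)
    linarith
  · have h' : (4 : ℝ) * i ≤ P := by exact_mod_cast h.le
    have h4 : (2.2 * (i + 1) + P / 5 : ℝ) ≤ P := by linarith
    have h5 : φ * (2.2 * (i + 1) + P / 5 : ℝ) ≤ φ * P := by gcongr
    linarith

/-- Good pairs of scales exist in a bounded range. If the construction fails at a regular scale,
the mean slope at the next one is larger by a fixed factor, which can only happen boundedly
often. -/
lemma exists_goodPair_aux {τ : ℝ} (τ0 : 0 < τ) (J : ℕ) :
    ∃ I : ℕ, ∀ a : ℕ → ℝ, Monotone a → (∀ k, τ * k ≤ a k) → (∀ k, a k ≤ 5 * k) →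
      ∃ P j, j + P + 1 ≤ I ∧ GoodPair a J P j := by
  obtain ⟨L, hL⟩ := exists_nat_ge (20 / τ + 1)
  have hτL : 20 ≤ τ * L := by
    have : 20 / τ ≤ L := by linarith
    rw [div_le_iff₀ τ0] at this
    linarith
  have hL1 : 1 ≤ L := by
    have : (0 : ℝ) < 20 / τ := by positivity
    have : (1 : ℝ) ≤ L := by linarith
    exact_mod_cast this
  obtain ⟨N', hN⟩ : ∃ N', N' = 25 * (J + 2) := ⟨_, rfl⟩
  have hN1 : 50 ≤ N' := by omega
  let B : ℕ → ℕ := fun k => 5 * L * (3 * L * N') ^ k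
  have key : ∀ a : ℕ → ℝ, Monotone a → (∀ k, τ * k ≤ a k) → (∀ k, a k ≤ 5 * k) → ∀ k,
      (∃ P j, j + P + 1 ≤ B k ∧ GoodPair a J P j) ∨
      ∃ P, 20 ≤ P ∧ P ≤ B k ∧ 1.05 ^ k * τ * P ≤ a P ∧
        ∀ i, P ≤ 4 * i → i ≤ P → (i : ℝ) ^ 2 * a P ≤ a i * (P : ℝ) ^ 2 := by
    intro a hmono ha ha5 k
    induction k with
    | zero =>
      right
      obtain ⟨P, h1, h2, h3⟩ := regular_scale ha ha5 hτL hL1 (M0 := 5) (by norm_num)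
      refine ⟨P, by omega, by simp only [B, pow_zero]; linarith, by simpa using ha P, h3⟩
    | succ k ih =>
      have hB : B (k + 1) = 3 * (L * (N' * B k)) := by simp only [B]; ring
      have hB1 : B k ≤ L * (N' * B k) := by
        have : B k ≤ N' * B k := Nat.le_mul_of_pos_left _ (by omega)
        exact this.trans (Nat.le_mul_of_pos_left _ (by omega))
      rcases ih with ⟨P, j, h1, h2⟩ | ⟨P, hP1, hP2, hP3, hP4⟩
      · exact Or.inl ⟨P, j, by omega, h2⟩
      have P0 : (0 : ℝ) < P := by
        have : (20 : ℝ) ≤ P := by exact_mod_cast hP1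
        linarith
      obtain ⟨φ, hφ⟩ : ∃ φ, φ = a P / P := ⟨_, rfl⟩
      have hφP : a P = φ * P := by rw [hφ]; field_simp
      have φk : 1.05 ^ k * τ ≤ φ := by rw [hφ, le_div_iff₀ P0]; exact hP3
      have φ0 : 0 < φ := lt_of_lt_of_le (by positivity) φk
      have hle : L * (N' * P) ≤ L * (N' * B k) := by gcongr
      by_cases hZ : ∃ Z, N' * P ≤ Z ∧ Z ≤ L * (N' * P) ∧ a Z ≤ 1.05 * φ * Z
      · obtain ⟨Z, hZ1, hZ2, hZ3⟩ := hZ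
        obtain ⟨j, hj1, hj2, hj3⟩ := flat_start hmono (le_trans (by positivity) (ha _)) φ0
          (by omega) hN hZ1 hZ3
        exact Or.inl ⟨P, j, by omega, goodPair_of τ0 ha hP1 hP4 hj1 hφP φ0 hj3⟩
      · push Not at hZ
        right
        obtain ⟨P', h1, h2, h3⟩ := regular_scale ha ha5 hτL hL1 (M0 := N' * P) (by nlinarith)
        refine ⟨P', by nlinarith, by omega, ?_, h3⟩
        refine le_trans ?_ (hZ P' (by omega) h2).le
        rw [pow_succ]
        have : (1.05 ^ k * τ) * (1.05 * P') ≤ φ * (1.05 * P') := by gcongr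
        linarith
  obtain ⟨k, hk⟩ := pow_unbounded_of_one_lt (5 / τ) (by norm_num : (1 : ℝ) < 1.05)
  refine ⟨B k, fun a hmono ha ha5 => ?_⟩
  rcases key a hmono ha ha5 k with h | ⟨P, hP1, -, hP3, -⟩
  · exact h
  · exfalso
    have P0 : (0 : ℝ) < P := by
      have : (20 : ℝ) ≤ P := by exact_mod_cast hP1
      linarith
    have h1 := hP3.trans (ha5 P)
    have h2 := le_of_mul_le_mul_right h1 P0
    rw [div_lt_iff₀ τ0] at hk
    linarith

/-- The same for a sequence whose properties are known up to `I` only. -/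
lemma exists_goodPair {τ : ℝ} (τ0 : 0 < τ) (τ5 : τ ≤ 5) (J : ℕ) :
    ∃ I : ℕ, ∀ a : ℕ → ℝ, (∀ k k', k ≤ k' → k' ≤ I → a k ≤ a k') → (∀ k ≤ I, τ * k ≤ a k) →
      (∀ k ≤ I, a k ≤ 5 * k) → ∃ P j, j + P + 1 ≤ I ∧ GoodPair a J P j := by
  obtain ⟨I, hI⟩ := exists_goodPair_aux τ0 J
  refine ⟨I, fun a hmono ha ha5 => ?_⟩
  have hm1 : Monotone fun k => a (min k I) + 5 * ((k - min k I : ℕ) : ℝ) := by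
    intro k k' hk
    have h1 := hmono (min k I) (min k' I) (by omega) (by omega)
    have h2 : ((k - min k I : ℕ) : ℝ) ≤ ((k' - min k' I : ℕ) : ℝ) := by
      have : k - min k I ≤ k' - min k' I := by omega
      exact_mod_cast this
    simp only
    linarith
  have hm2 : ∀ k : ℕ, τ * k ≤ a (min k I) + 5 * ((k - min k I : ℕ) : ℝ) := by
    intro k
    have h1 := ha (min k I) (by omega)
    have h2 : (k : ℝ) = (min k I : ℕ) + ((k - min k I : ℕ) : ℝ) := by
      have : k = min k I + (k - min k I) := by omega
      exact_mod_cast this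
    have h3 : 0 ≤ ((k - min k I : ℕ) : ℝ) := by positivity
    nlinarith
  have hm3 : ∀ k : ℕ, a (min k I) + 5 * ((k - min k I : ℕ) : ℝ) ≤ 5 * k := by
    intro k
    have h1 := ha5 (min k I) (by omega)
    have h2 : (k : ℝ) = (min k I : ℕ) + ((k - min k I : ℕ) : ℝ) := by
      have : k = min k I + (k - min k I) := by omega
      exact_mod_cast this
    linarith
  obtain ⟨P, j, h1, h2, h3, h4⟩ := hI (fun k => a (min k I) + 5 * ((k - min k I : ℕ) : ℝ)) hm1 hm2 hm3
  refine ⟨P, j, h1, h2, h3, fun i hi => ?_⟩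
  have := h4 i hi
  simp only [min_eq_left (show j + i + 1 ≤ I by omega), min_eq_left (show j ≤ I by omega),
    min_eq_left (show i ≤ I by omega), min_eq_left (show P ≤ I by omega)] at this
  simpa using this

/-! ### Choice of the parameters -/

open Filter Topology in
/-- Powers of a small number `b` absorb constants. -/
lemma ev_rpow (C : ℝ) {p q : ℝ} (h : p < q) : ∀ᶠ b : ℝ in 𝓝[>] 0, C * b ^ q < b ^ p := by
  have h1 : Tendsto (fun b : ℝ => C * b ^ (q - p)) (𝓝[>] 0) (𝓝 0) := by
    have h2 : Tendsto (fun b : ℝ => b ^ (q - p)) (𝓝[>] 0) (𝓝 0) := by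
      have h3 := (Real.continuousAt_rpow_const 0 (q - p) (Or.inr (by linarith))).tendsto
      rw [Real.zero_rpow (by linarith)] at h3
      exact h3.mono_left nhdsWithin_le_nhds
    simpa using h2.const_mul C
  filter_upwards [h1.eventually (gt_mem_nhds one_pos), self_mem_nhdsWithin] with b hb b0
  have b0' : (0 : ℝ) < b := b0
  have h4 : 0 < b ^ p := Real.rpow_pos_of_pos b0' _
  have h5 : b ^ q = b ^ (q - p) * b ^ p := by
    rw [← Real.rpow_add b0']; congr 1; ring
  rw [h5, ← mul_assoc]
  nlinarith

/-- The contradiction at a fixed scale `b`, where `δ = b ^ M` and `η` stands for `δ ^ ε₅`: all the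
smallness assumptions on `b` are explicit. -/
lemma core {A : Set M2} (hA : Sym A) {b η Q C σ₁ τ τ' lam lam' : ℝ} {M κ J I K m : ℕ}
    (b0 : 0 < b) (b1 : b ≤ 1 / 256) (hη : 0 < η) (hη1 : η ≤ 1) (hbη : 3 * b < η) (τ0 : 0 < τ)
    (hττ : τ' ≤ τ / 2)
    (hI : ∀ a : ℕ → ℝ, (∀ k k', k ≤ k' → k' ≤ I → a k ≤ a k') → (∀ k ≤ I, τ' * k ≤ a k) →
      (∀ k ≤ I, a k ≤ 5 * k) → ∃ P j, j + P + 1 ≤ I ∧ GoodPair a J P j)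
    (hJ : 10 ≤ J) (hM : I + 2 ≤ M)
    (hcontra : 3 * ((I : ℝ) + 3) * J + 14 * M < σ₁ * M * J)
    (hκ : 1000 ≤ κ) (hκτ : 50 ≤ τ' * κ) (hQb : Q ^ κ * b ≤ 1) (hQ10 : 10 ^ 10 ≤ Q)
    (hQ2 : 2 ^ (2 * m) ≤ Q) (hQη : 40 * (1000 / η ^ 2) ^ 3 ≤ Q)
    (hQC : C * η⁻¹ ^ (2 * m + 2) ≤ Q)
    (hC : ∀ (A : Set M2) (δ K e : ℝ), Sym A → 0 < δ → 1 ≤ K → δ ≤ e → N δ (A ^ 3) ≤ K * N δ A →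
      N e (A ^ (2 * m)) ≤ C * K ^ (2 * m + 2) * N e A)
    (lam0 : 0 < lam) (hlam : 64 * lam ≤ lam') (hlam' : lam' ≤ 1 / 10)
    (hlamb : (1 / lam) ^ 4 < b ^ (-τ)) (hK : lam' ^ (K + 1) ≤ b ^ M) (hm : 4 * wl K + 153 ≤ m)
    (h3 : N (b ^ M) (A ^ 3) ≤ η⁻¹ * N (b ^ M) A) (hN : N (b ^ M) A ≤ (b ^ M) ^ (-3 + σ₁))
    (hX : ∀ ρ : ℝ, b ^ M < ρ → ρ < η → ∃ X : Finset M2, ↑X ⊆ A ∧ ρ ^ (-τ) ≤ (X.card : ℝ) ∧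
      ∀ x ∈ X, ∀ x' ∈ X, x ≠ x' → ρ ≤ ‖x - x'‖)
    (hirr : RealIrr A η) : False := by
  have hδ0 : 0 < b ^ M := by positivity
  have Q1 : 1 ≤ Q := le_trans (by norm_num) hQ10
  have hη' : 1 ≤ η⁻¹ := (one_le_inv₀ hη).2 hη1
  have hG : Good A (b ^ M) Q m :=
    { hA with
      δ0 := hδ0
      Q10 := hQ10
      m100 := by omega
      nrm := fun g hg => by
        obtain ⟨k, hk⟩ : ∃ k, 2 * m = k + 1 := ⟨2 * m - 1, by omega⟩
        rw [hk] at hg hQ2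
        exact (hA.pow_norm k g hg).trans hQ2
      cov := fun e he _ => (hC A (b ^ M) η⁻¹ e hA hδ0 hη' he h3).trans
        (mul_le_mul_of_nonneg_right hQC (N_nonneg _ _))
      irr := irr_of_realIrr hA hη hη1 hirr hQη }
  have bA := hA.bdd
  have bpow : ∀ {i k : ℕ}, i ≤ k → b ^ k ≤ b ^ i := fun h =>
    pow_le_pow_of_le_one b0.le (by linarith) h
  have bpow' : ∀ {i k : ℕ}, i < k → b ^ k < b ^ i := fun h =>
    pow_lt_pow_right_of_lt_one₀ b0 (by linarith) h
  obtain ⟨ℓ, hℓ⟩ : ∃ ℓ, ℓ = -Real.log b := ⟨_, rfl⟩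
  have ℓ0 : 0 < ℓ := by
    have := Real.log_neg b0 (by linarith : b < 1); linarith
  obtain ⟨a, ha⟩ : ∃ a : ℕ → ℝ, a = fun k => Real.log (N (b ^ k) A) / ℓ := ⟨_, rfl⟩
  have hak : ∀ k, Real.log (N (b ^ k) A) = a k * ℓ := fun k => by
    rw [ha]; exact (div_mul_cancel₀ _ ℓ0.ne').symm
  have Np : ∀ k, 1 ≤ N (b ^ k) A := fun k => N_pos bA hA.ne (by positivity)
  have Np0 : ∀ k, 0 < N (b ^ k) A := fun k => lt_of_lt_of_le one_pos (Np k)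
  have hmono : ∀ k k', k ≤ k' → k' ≤ I → a k ≤ a k' := by
    intro k k' hk _
    have h1 := Real.log_le_log (Np0 k) (N_anti bA (by positivity) (bpow hk))
    rw [hak, hak] at h1
    exact le_of_mul_le_mul_right h1 ℓ0
  have hlow : ∀ k ≤ I, τ' * k ≤ a k := by
    intro k hkI
    have key : τ' * k * ℓ ≤ Real.log (N (b ^ k) A) := by
      rcases Nat.eq_zero_or_pos k with rfl | hk
      · simpa using Real.log_nonneg (Np 0)
      · have hbk : b ^ k ≤ b := by simpa using bpow hk
        have q0 : 0 < b ^ k := by positivity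
        obtain ⟨X, hXA, hcard, hsep⟩ := hX (3 * b ^ k)
          (by have := bpow' (show k < M by omega); linarith) (by linarith)
        have h1 : (X.card : ℝ) ≤ N (b ^ k) A := by
          refine inj_count X id bA q0 (fun p hp => hXA hp) fun p hp p' hp' h => ?_
          by_contra hne
          have := hsep p hp p' hp' hne
          simp only [id] at h
          linarith
        have h2 := Real.log_le_log (by positivity) (hcard.trans h1)
        rw [Real.log_rpow (by positivity)] at h2
        -- `3 b ^ k` is at most the square root of `b ^ k`
        have h4 : 2 * Real.log (3 * b ^ k) ≤ -(k * ℓ) := by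
          have h5 : (3 * b ^ k) ^ 2 ≤ b ^ k := by nlinarith
          have h6 := Real.log_le_log (by positivity) h5
          rw [Real.log_pow, Real.log_pow] at h6
          push_cast at h6
          rw [hℓ]; linarith
        have h7 : τ' * (k * ℓ) ≤ τ / 2 * (k * ℓ) := by gcongr
        nlinarith
    rw [hak] at key
    exact le_of_mul_le_mul_right key ℓ0
  have hup : ∀ k ≤ I, a k ≤ 5 * k := by
    intro k _
    have key : Real.log (N (b ^ k) A) ≤ 5 * k * ℓ := by
      rcases Nat.eq_zero_or_pos k with rfl | hk
      · have h1 : N (b ^ 0) A ≤ 1 := N_le_one 1 fun s hs => by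
          rw [pow_zero]; exact (hA.near s hs).trans (by norm_num)
        have := Real.log_nonpos (N_nonneg _ _) h1
        simpa using this
      · have q0 : 0 < b ^ k := by positivity
        have hbk : b ^ k ≤ b := by simpa using bpow hk
        have h1 : N (b ^ k) A ≤ (2 * (1 / 1000 / b ^ k) + 3) ^ 4 :=
          N_ball_le 1 q0 (by positivity) fun s hs => by
            rw [div_mul_cancel₀ _ q0.ne']; exact hA.near s hs
        have h2 : (2 * (1 / 1000 / b ^ k) + 3) ^ 4 * (b ^ k) ^ 5 ≤ 1 := by
          have e1 : (2 * (1 / 1000 / b ^ k) + 3) ^ 4 * (b ^ k) ^ 5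
              = (1 / 500 + 3 * b ^ k) ^ 4 * b ^ k := by field_simp; ring
          rw [e1]
          calc _ ≤ (1 : ℝ) ^ 4 * 1 := by gcongr <;> linarith
            _ = 1 := by norm_num
        have h3 : N (b ^ k) A * (b ^ k) ^ 5 ≤ 1 := le_trans (by gcongr) h2
        have p1 := Np0 k
        have h4 := Real.log_le_log (by positivity) h3
        rw [Real.log_mul (by positivity) (by positivity), Real.log_one, Real.log_pow,
          Real.log_pow b k] at h4
        push_cast at h4
        rw [hℓ]; linarith
    rw [hak] at key
    exact le_of_mul_le_mul_right key ℓ0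
  obtain ⟨P, j, hPj, hgp⟩ := hI a hmono hlow hup
  -- a nontrivial short word, which starts the construction of small words
  obtain ⟨X, hXA, hcard, hsep⟩ := hX b (by have := bpow' (show 1 < M by omega); simpa using this)
    (by linarith)
  obtain ⟨h1, hh1, hb1, hl1⟩ := exists_start hA b0.le (by linarith) lam0 (by linarith) X hXA hsep
    (hlamb.trans_le hcard)
  have hbQ : b * Q ^ 2 ≤ 1 := by
    have : Q ^ 2 * b ≤ Q ^ κ * b := by gcongr; omega
    linarith
  have hfin := hG.final b0 (by linarith) rfl hκ hκτ hQb (fun k _ => by rw [hak, hℓ])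
    (hlow P (by omega)) hJ hgp (by omega) (L := wl K) (by omega)
    (fun r hr hr1 => hG.small hh1 hb1 hl1 hlam hlam' b0 hbQ (by linarith) (hδ0.trans_le hr) hr1
      (hK.trans hr))
  have haM : a M ≤ (3 - σ₁) * M := by
    have h2 := Real.log_le_log (Np0 M) hN
    rw [Real.log_rpow hδ0, Real.log_pow, hak] at h2
    have h3 : a M * ℓ ≤ (3 - σ₁) * M * ℓ := by rw [hℓ] at h2 ⊢; linarith
    exact le_of_mul_le_mul_right h3 ℓ0
  have hjI : (j : ℝ) ≤ I := by
    have : j ≤ I := by omega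
    exact_mod_cast this
  have J0 : (0 : ℝ) ≤ J := by positivity
  have h5 := mul_le_mul_of_nonneg_right haM J0
  have h6 : 3 * ((j : ℝ) + 3) * J ≤ 3 * (I + 3) * J := by gcongr
  linarith

open Filter Topology in
/-- The product theorem in terms of the Frobenius norm, with the hypothesis on off-diagonal
entries in diagonalizing bases replaced by its consequence `RealIrr`. -/
lemma product_theorem_norm {σ₁ τ : ℝ} (hσ : 0 < σ₁) (hτ : 0 < τ) :
    ∃ ε : ℝ, 0 < ε ∧ ∃ δ₀ : ℝ, 0 < δ₀ ∧ δ₀ ≤ 1 ∧ ∀ δ : ℝ, 0 < δ → δ < δ₀ → ∀ A : Set M2, Sym A →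
      N δ A ≤ δ ^ (-3 + σ₁) →
      (∀ ρ : ℝ, δ < ρ → ρ < δ ^ ε → ∃ X : Finset M2, ↑X ⊆ A ∧ ρ ^ (-τ) ≤ (X.card : ℝ) ∧
        ∀ x ∈ X, ∀ x' ∈ X, x ≠ x' → ρ ≤ ‖x - x'‖) →
      RealIrr A (δ ^ ε) → δ ^ (-ε) * N δ A < N δ (A ^ 3) := by
  -- the parameters are fixed in the order `J`, `I`, `M`, `κ`, `K`, `m`, `s`; then `b` is small
  obtain ⟨τ', hτ'⟩ : ∃ τ', τ' = min (τ / 2) 1 := ⟨_, rfl⟩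
  have τ'0 : 0 < τ' := by rw [hτ']; exact lt_min (by linarith) one_pos
  have τ'1 : τ' ≤ 1 := by rw [hτ']; exact min_le_right _ _
  have hττ : τ' ≤ τ / 2 := by rw [hτ']; exact min_le_left _ _
  obtain ⟨J, hJ⟩ := exists_nat_ge (28 / σ₁ + 10)
  obtain ⟨I, hI⟩ := exists_goodPair τ'0 (by linarith) J
  obtain ⟨M, hM⟩ := exists_nat_ge (6 * ((I : ℝ) + 4) / σ₁ + I + 2)
  obtain ⟨κ, hκ⟩ := exists_nat_ge (50 / τ' + 1000)
  obtain ⟨K, hK⟩ := exists_nat_ge ((M : ℝ) / (τ / 6))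
  have d1 : 0 < 28 / σ₁ := by positivity
  have d2 : 0 < 6 * ((I : ℝ) + 4) / σ₁ := by positivity
  have d3 : 0 < 50 / τ' := by positivity
  have hJ10 : 10 ≤ J := by
    have : (10 : ℝ) ≤ J := by linarith
    exact_mod_cast this
  have hMI : I + 2 ≤ M := by
    have : (I : ℝ) + 2 ≤ M := by linarith
    exact_mod_cast this
  have hκ1 : 1000 ≤ κ := by
    have : (1000 : ℝ) ≤ κ := by linarith
    exact_mod_cast this
  have hκτ : 50 ≤ τ' * κ := by
    have : 50 / τ' ≤ κ := by linarith
    rw [div_le_iff₀ τ'0] at this; linarith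
  have M0 : (0 : ℝ) < M := by
    have : 0 < M := by omega
    exact_mod_cast this
  have κ0 : (0 : ℝ) < κ := by
    have : 0 < κ := by omega
    exact_mod_cast this
  have J0 : (0 : ℝ) < J := by linarith
  have hcontra : 3 * ((I : ℝ) + 3) * J + 14 * M < σ₁ * M * J := by
    have e1 : 28 ≤ J * σ₁ := by
      have : 28 / σ₁ ≤ J := by linarith
      rwa [div_le_iff₀ hσ] at this
    have e2 : 6 * ((I : ℝ) + 4) ≤ M * σ₁ := by
      have : 6 * ((I : ℝ) + 4) / σ₁ ≤ M := by
        have : (0 : ℝ) ≤ I := by positivity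
        linarith
      rwa [div_le_iff₀ hσ] at this
    have e3 := mul_le_mul_of_nonneg_left e1 M0.le
    have e4 := mul_le_mul_of_nonneg_right e2 J0.le
    linarith
  obtain ⟨m, hm⟩ : ∃ m, m = 4 * wl K + 153 := ⟨_, rfl⟩
  obtain ⟨C, -, hC⟩ := ruzsa_scale m (by omega)
  obtain ⟨s, hs⟩ : ∃ s : ℝ, s = 1 / (κ * (4 * m + 20)) := ⟨_, rfl⟩
  have s0 : 0 < s := by rw [hs]; positivity
  have hsκ : s * (4 * m + 20) = 1 / κ := by rw [hs]; field_simp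
  have hsm : 0 ≤ s * m := by positivity
  have hs1 : s < 1 := by
    have : 1 / (κ : ℝ) ≤ 1 := by
      rw [div_le_one κ0]; exact_mod_cast (by omega : 1 ≤ κ)
    linarith
  have ev : ∀ᶠ b : ℝ in 𝓝[>] 0, (256 * b ^ (1 : ℝ) < b ^ (0 : ℝ)) ∧
      (10 ^ 10 * b ^ (0 : ℝ) < b ^ (-(1 / κ) : ℝ)) ∧
      (2 ^ (2 * m) * b ^ (0 : ℝ) < b ^ (-(1 / κ) : ℝ)) ∧
      (C * b ^ (-(s * (2 * m + 2))) < b ^ (-(1 / κ) : ℝ)) ∧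
      (40 * 1000 ^ 3 * b ^ (-(s * 6)) < b ^ (-(1 / κ) : ℝ)) ∧
      (3 * b ^ (1 : ℝ) < b ^ s) ∧ (64 * b ^ (τ / 5) < b ^ (τ / 6)) ∧
      (10 * b ^ (τ / 6) < b ^ (0 : ℝ)) := by
    have k0 : 0 < 1 / (κ : ℝ) := by positivity
    exact (ev_rpow _ (by linarith)).and <| (ev_rpow _ (by linarith)).and <|
      (ev_rpow _ (by linarith)).and <| (ev_rpow _ (by linarith)).and <|
      (ev_rpow _ (by linarith)).and <| (ev_rpow _ hs1).and <| (ev_rpow _ (by linarith)).and <|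
      (ev_rpow _ (by linarith))
  rw [eventually_nhdsWithin_iff, Metric.eventually_nhds_iff] at ev
  obtain ⟨b₁, b₁0, ev⟩ := ev
  have b₂0 : 0 < min b₁ 1 := lt_min b₁0 one_pos
  refine ⟨s / M, by positivity, (min b₁ 1) ^ M, by positivity,
    pow_le_one₀ b₂0.le (min_le_right _ _), ?_⟩
  intro δ hδ0 hδ1 A hA hN hX hirr
  by_contra! hcon
  obtain ⟨b, hb⟩ : ∃ b : ℝ, b = δ ^ (1 / (M : ℝ)) := ⟨_, rfl⟩
  have b0 : 0 < b := by rw [hb]; positivity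
  have hbM : b ^ M = δ := by
    rw [hb, ← Real.rpow_natCast, ← Real.rpow_mul hδ0.le, one_div_mul_cancel M0.ne', Real.rpow_one]
  have hbb : b < min b₁ 1 := by
    rw [← hbM] at hδ1
    exact lt_of_pow_lt_pow_left₀ M b₂0.le hδ1
  have hb1 : b < 1 := hbb.trans_le (min_le_right _ _)
  have hη : δ ^ (s / M) = b ^ s := by
    rw [hb, ← Real.rpow_mul hδ0.le]; congr 1; field_simp
  have hη' : δ ^ (-(s / M)) = (b ^ s)⁻¹ := by
    rw [Real.rpow_neg hδ0.le, hη]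
  obtain ⟨c1, c2, c3, c4, c5, c6, c7, c8⟩ := ev (y := b)
    (by rw [Real.dist_0_eq_abs, abs_of_pos b0]; exact hbb.trans_le (min_le_left _ _)) b0
  rw [Real.rpow_one, Real.rpow_zero] at c1
  rw [Real.rpow_zero, mul_one] at c2 c3
  rw [Real.rpow_one] at c6
  rw [Real.rpow_zero] at c8
  rw [hη] at hX hirr
  rw [hη'] at hcon
  subst hbM
  refine core hA b0 (by linarith) (by positivity) (Real.rpow_le_one b0.le hb1.le s0.le) c6 hτ hττ hI
    hJ10 hMI hcontra hκ1 hκτ (Q := b ^ (-(1 / κ) : ℝ)) (C := C) (lam := b ^ (τ / 5))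
    (lam' := b ^ (τ / 6)) (K := K) ?_ c2.le c3.le ?_ ?_ hC (by positivity) c7.le (by linarith)
    ?_ ?_ hm.ge hcon hN hX hirr
  · rw [← Real.rpow_natCast, ← Real.rpow_mul b0.le, neg_mul, one_div_mul_cancel κ0.ne',
      Real.rpow_neg_one, inv_mul_cancel₀ b0.ne']
  · refine le_trans (le_of_eq ?_) c5.le
    rw [Real.rpow_neg b0.le, Real.rpow_mul b0.le, show (6 : ℝ) = ((6 : ℕ) : ℝ) by norm_num,
      Real.rpow_natCast]
    field_simp
  · refine le_trans (le_of_eq ?_) c4.le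
    rw [Real.rpow_neg b0.le, Real.rpow_mul b0.le,
      show (2 * (m : ℝ) + 2) = ((2 * m + 2 : ℕ) : ℝ) by push_cast; ring, Real.rpow_natCast, inv_pow]
  · rw [one_div, ← Real.rpow_neg b0.le, ← Real.rpow_natCast, ← Real.rpow_mul b0.le]
    refine Real.rpow_lt_rpow_of_exponent_gt b0 hb1 ?_
    push_cast
    linarith
  · rw [← Real.rpow_natCast, ← Real.rpow_mul b0.le, ← Real.rpow_natCast b M]
    refine Real.rpow_le_rpow_of_exponent_ge b0 hb1.le ?_
    rw [div_le_iff₀ (by positivity)] at hK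
    push_cast
    linarith

end
end PT

/-- **Product theorem for `SL₂(ℝ)`.** There is `α > 0` such that for all `σ₁, τ > 0`
there is `ε₅ > 0` such that for all small `δ > 0`: if `A ⊆ SL₂(ℝ) ∩ B_α(1)` is
symmetric, has covering number `N_δ(A) = δ^{−3+σ₀}` with `σ₁ ≤ σ₀ ≤ 3 − σ₁`, is
`ρ`-well-distributed at all scales `δ < ρ < δ^{ε₅}`, and in every diagonalizing basis
contains an element of `A_{(4)}` with `|g₁₂g₂₁| ≥ δ^{ε₅}`, then
`N_δ(A·A·A) > δ^{−ε₅}·N_δ(A)`. -/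
theorem product_theorem :
    ∃ α : ℝ, 0 < α ∧
      ∀ σ₁ τ : ℝ, 0 < σ₁ → 0 < τ →
        ∃ ε₅ : ℝ, 0 < ε₅ ∧ ∃ δ₀ : ℝ, 0 < δ₀ ∧
          ∀ δ : ℝ, 0 < δ → δ < δ₀ →
            ∀ A : Set (Matrix (Fin 2) (Fin 2) ℝ),
              (∀ a ∈ A, a.det = 1 ∧ frobDist a 1 ≤ α) →
              A⁻¹ = A →
              ∀ σ₀ : ℝ, σ₁ ≤ σ₀ → σ₀ ≤ 3 - σ₁ →
                (covN frobDist δ A : ℝ) = δ ^ (-3 + σ₀) →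
                (∀ ρ : ℝ, δ < ρ → ρ < δ ^ ε₅ →
                  ∃ X : Finset (Matrix (Fin 2) (Fin 2) ℝ), ↑X ⊆ A ∧
                    ρ ^ (-τ) ≤ (X.card : ℝ) ∧
                    ∀ x ∈ X, ∀ x' ∈ X, x ≠ x' → ρ ≤ frobDist x x') →
                (∀ m : Matrix (Fin 2) (Fin 2) ℝ, m.det = 1 → frobDist m 1 ≤ 1 →
                  |Matrix.trace m| ≠ 2 →
                  ∀ u : Matrix (Fin 2) (Fin 2) ℂ, IsUnit u →
                    (u * m.map Complex.ofReal * u⁻¹).IsDiag →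
                    ∃ g ∈ A * A * A * A,
                      δ ^ ε₅ ≤ ‖(u * g.map Complex.ofReal * u⁻¹) 0 1 *
                        (u * g.map Complex.ofReal * u⁻¹) 1 0‖) →
                δ ^ (-ε₅) * (covN frobDist δ A : ℝ) <
                  (covN frobDist δ (A * A * A) : ℝ) := by
  refine ⟨1 / 1000, by norm_num, fun σ₁ τ hσ hτ => ?_⟩
  obtain ⟨ε, hε, δ₀, hδ₀, hδ₁, h⟩ := PT.product_theorem_norm hσ hτ
  refine ⟨ε, hε, δ₀, hδ₀, fun δ hδ0 hδ A hA hinv σ₀ hσ₀ _ hN hX hirr => ?_⟩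
  have hne : A.Nonempty := by
    by_contra hA0
    rw [Set.not_nonempty_iff_eq_empty] at hA0
    have h0 : PT.N δ A ≤ (∅ : Finset PT.M2).card := PT.N_le ∅ (by simp [hA0])
    have h1 : (0 : ℝ) < δ ^ (-3 + σ₀) := Real.rpow_pos_of_pos hδ0 _
    rw [← hN] at h1
    rw [Finset.card_empty, Nat.cast_zero] at h0
    exact absurd h0 (not_le.2 h1)
  have hsym : PT.Sym A :=
    { ne := hne
      inv := fun a ha => by
        have h1 : a⁻¹ ∈ A := by
          rw [← hinv, Set.mem_inv, Matrix.nonsing_inv_nonsing_inv _ (by simp [(hA a ha).1])]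
          exact ha
        rwa [Matrix.inv_def, (hA a ha).1, Ring.inverse_one, one_smul,
          ← PT.adj_eq_adjugate] at h1
      det := fun a ha => (hA a ha).1
      near := fun a ha => by
        rw [← PT.frobDist_eq]; exact (hA a ha).2 }
  have h2 := h δ hδ0 hδ A hsym
    (hN.le.trans (Real.rpow_le_rpow_of_exponent_ge hδ0 (hδ.le.trans hδ₁) (by linarith)))
    (fun ρ h1 h2 => by simpa only [PT.frobDist_eq] using hX ρ h1 h2) (PT.realIrr_of_diag hirr)
  rw [pow_succ, pow_two] at h2
  exact h2
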